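/- arXiv:1708.01807 — 3 statements merged into one kernel-verified Lean document; each statement's English description precedes it below -/
import Mathlib

section
/- Let τ be a faithful irreducible complex representation of G and suppose p^n divides q−1. Then there exists a finite-dimensional representation σ of G over ℚ such that the multiplicity ⟨ℂ ⊗_ℚ σ, τ⟩ of τ in the complexification of σ equals 1. -/
/-!
Put `P = p ^ (n - r)` and `R = p ^ r`. The rational representation `σ` lives on `L = ℚ(ζ_{Pq})`:
`a` acts as multiplication by `ζ_q`, and `b` as `B x = y * s x`, where `s` is the automorphism of `L`
fixing `ζ_P` and sending `ζ_q` to `ζ_q ^ j`. The relation `B a = a ^ j B` is automatic, and `B ^ R` is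
multiplication by the norm `∏ s ^ i y`. So `σ` is a representation as soon as this norm is a primitive
`P`-th root of unity `ζ'`. The character of `σ` on `a ^ i b ^ (R k)` is the sum of
`φ(ζ_q) ^ i φ(ζ') ^ k` over all embeddings `φ : L → ℂ`. The character of `τ` vanishes unless the
exponent of `b` is divisible by `R`, and it is then a sum of `R` such terms (`exists_trace_eq`). Since
each pair of primitive roots comes from exactly one `φ` (`existsUnique_algHom`), orthogonality
(`sum_conj_eq`) yields multiplicity one.

It remains to write a primitive `P`-th root of unity as a norm (`exists_cyclotomic_norm_eq`), which is
done with Jacobi sums. Choose a prime `l ≡ 1 mod Pq` modulo which `q` is not a `p`-th power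
(`exists_prime_not_pow`). If there were none, all primes `l ≡ 1 mod Pq` would split completely in the
splitting field of `(X ^ (Pq) - 1) (X ^ p - q)`, whose degree exceeds `φ(Pq)`. This contradicts the
density of such primes and the simple pole of the Dedekind zeta function.

Let `χ, η` be characters of `𝔽_l` of orders `P` and `q`, let `e = (q - 1) / P`, and put
`X = ∏ J(χ, η ^ k)` over `k ∈ (ℤ/q)ˣ` and `Γ = l ∏ J(χ, χ ^ i)` over `1 ≤ i < P - 1`, so that `Γ` is
the `P`-th power of the Gauss sum of `χ`. By a Stickelberger-type computation, `X` and `Γ ^ e` have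
the same valuation at every prime (`X_G_locAssoc'`). They also have the same absolute value at every
complex place, so their ratio is a root of unity (`exists_root_of_unity`). Modulo a prime above `q`
one has `X ≡ 1` and `Γ ^ e ≡ χ(q)⁻¹`, by the action of Frobenius on the Gauss sum. Hence
`X ^ N = (Γ ^ e) ^ N χ(q)` for a suitable `N` (`exists_prod_pow_eq`), and `χ(q)` is a primitive `P`-th
root of unity by the choice of `l`.

Finally `X` is a norm for `⟨s⟩`, because `s` permutes its factors by `k ↦ j k`, and so is `Γ ^ e`,
because `Γ` is fixed by `s` and `R ∣ e`. The last divisibility is the assumption `p ^ n ∣ q - 1`.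
-/

/-! ### Primes `l ≡ 1 mod D` modulo which `q` is not a `p`-th power -/

open ArithmeticFunction vonMangoldt LSeries in
/-- A quantitative form of Dirichlet's theorem: `∑ l⁻ˣ` over the primes `l ≡ 1 mod D` is at least
`log (1 / (x - 1)) / φ(D) - O(1)` as `x → 1⁺`. Mathlib bounds the sum weighted by `Λ`; that sum
is, up to a bounded contribution of proper prime powers, minus the derivative of the one here. -/
theorem prime_sum_lower_bound (D : ℕ) [NeZero D] :
    ∃ C : ℝ, ∀ x ∈ Set.Ioc (1:ℝ) 2,
      (D.totient : ℝ)⁻¹ * Real.log (1 / (x - 1)) - C ≤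
        ∑' n : ℕ, (if n.Prime ∧ (n : ZMod D) = 1 then ((n : ℝ) ^ x)⁻¹ else 0) := by
  obtain ⟨C, hC⟩ := LSeries_residueClass_lower_bound (q := D) (a := 1) isUnit_one
  set S : Set ℕ := {n | n.Prime ∧ (n : ZMod D) = 1}
  let f : ℕ → ℂ := S.indicator 1
  have hf1 : ∀ n, ‖f n‖ ≤ 1 := fun n => by
    simp only [f, Set.indicator_apply]; split_ifs <;> simp
  have habs : abscissaOfAbsConv f ≤ 1 :=
    abscissaOfAbsConv_le_of_le_const ⟨1, fun n _ => hf1 n⟩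
  have hlt : ∀ x : ℝ, 1 < x → abscissaOfAbsConv f < ((x : ℂ).re : EReal) := fun x hx =>
    habs.trans_lt (by exact_mod_cast hx)
  have hd : ∀ x : ℝ, 1 < x → HasDerivAt (fun y : ℝ => (LSeries f y).re)
      (-(LSeries (logMul f) x).re) x := fun x hx => by
    have := (LSeries_hasDerivAt (hlt x hx)).real_of_complex
    simpa using this
  set T : ℝ := ∑' n : ℕ, (if n.Prime then 0 else residueClass (1 : ZMod D) n) / n
  have hterm : ∀ (g : ℕ → ℝ) (x : ℝ) (n : ℕ), g 0 = 0 →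
      LSeries.term (fun n => (g n : ℂ)) x n = ((g n / (n:ℝ) ^ x : ℝ) : ℂ) := fun g x n h0 => by
    rcases eq_or_ne n 0 with rfl | hn
    · simp [h0]
    · rw [LSeries.term_of_ne_zero hn]
      push_cast
      rw [Complex.ofReal_cpow (Nat.cast_nonneg _)]; simp
  have hlog : ∀ x : ℝ, 1 < x → (D.totient : ℝ)⁻¹ / (x - 1) - C - T ≤ (LSeries (logMul f) x).re ∨ 2 < x := by
    intro x hx
    by_cases h2 : 2 < x
    · exact Or.inr h2
    refine Or.inl ?_
    have h := hC (x := x) ⟨hx, not_lt.mp h2⟩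
    have hs1 : Summable fun n : ℕ => residueClass (1 : ZMod D) n / (n : ℝ) ^ x :=
      summable_real_of_abscissaOfAbsConv_lt <|
        (abscissaOfAbsConv_residueClass_le_one _).trans_lt <| mod_cast hx
    have hlm : logMul f = fun n => (((if n.Prime then residueClass (1 : ZMod D) n else 0 : ℝ)) : ℂ) := by
      funext n
      simp only [logMul, f, S, Set.indicator_apply, residueClass, Set.mem_ofPred_eq, Pi.one_apply]
      by_cases hn : n.Prime
      · by_cases h1 : (n : ZMod D) = 1
        · simp [hn, h1, vonMangoldt_apply_prime hn, Complex.natCast_log]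
        · simp [hn, h1]
      · simp [hn]
    have e : (LSeries (logMul f) x).re = ∑' n : ℕ, (if n.Prime then residueClass (1 : ZMod D) n else 0) / (n : ℝ) ^ x := by
      rw [hlm, LSeries]
      rw [tsum_congr (fun n => hterm _ x n (by simp)), ← Complex.ofReal_tsum, Complex.ofReal_re]
    have hs2 : Summable fun n : ℕ => (if n.Prime then 0 else residueClass (1 : ZMod D) n) / (n : ℝ) ^ x := by
      refine hs1.of_nonneg_of_le (fun n => ?_) (fun n => ?_)
      · positivity [residueClass_nonneg (1 : ZMod D) n]
      · gcongr; split_ifs <;> [exact residueClass_nonneg _ _; rfl]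
    have hs3 : Summable fun n : ℕ => (if n.Prime then residueClass (1 : ZMod D) n else 0) / (n : ℝ) ^ x := by
      refine hs1.of_nonneg_of_le (fun n => ?_) (fun n => ?_)
      · positivity [residueClass_nonneg (1 : ZMod D) n]
      · gcongr; split_ifs <;> [rfl; exact residueClass_nonneg _ _]
    have e2 : ∑' n : ℕ, residueClass (1 : ZMod D) n / (n : ℝ) ^ x =
        (∑' n : ℕ, (if n.Prime then 0 else residueClass (1 : ZMod D) n) / (n : ℝ) ^ x) +
        (∑' n : ℕ, (if n.Prime then residueClass (1 : ZMod D) n else 0) / (n : ℝ) ^ x) := by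
      rw [← hs2.tsum_add hs3]
      refine tsum_congr fun n => ?_
      split_ifs <;> simp
    have e3 : (∑' n : ℕ, (if n.Prime then 0 else residueClass (1 : ZMod D) n) / (n : ℝ) ^ x) ≤ T := by
      refine hs2.tsum_le_tsum (fun n => ?_) (summable_residueClass_non_primes_div 1)
      rcases n.eq_zero_or_pos with rfl | hn
      · simp
      · refine div_le_div_of_nonneg_left (by positivity [residueClass_nonneg (1 : ZMod D) n]) (mod_cast hn) ?_
        conv_lhs => rw [← Real.rpow_one n]
        exact Real.rpow_le_rpow_of_exponent_le (by norm_cast) hx.le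
    rw [e]; linarith
  -- the function below is antitone on `(1, 2]`, so it is bounded below by its value at `2`
  let h : ℝ → ℝ := fun x => (LSeries f x).re + (D.totient : ℝ)⁻¹ * Real.log (x - 1) - (C + T) * x
  have hhd : ∀ x : ℝ, 1 < x → HasDerivAt h
      (-(LSeries (logMul f) x).re + (D.totient : ℝ)⁻¹ * (1 / (x - 1)) - (C + T)) x := fun x hx => by
    have h1 : HasDerivAt (fun x : ℝ => Real.log (x - 1)) (1 / (x - 1)) x :=
      ((hasDerivAt_id x).sub_const 1).log (by simp; linarith)
    have := ((hd x hx).add (h1.const_mul (D.totient : ℝ)⁻¹)).sub ((hasDerivAt_id x).const_mul (C + T))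
    exact HasDerivAt.congr_deriv (f := h) this (by simp)
  have hanti : AntitoneOn h (Set.Ioc 1 2) := by
    refine antitoneOn_of_deriv_nonpos (convex_Ioc 1 2)
      (fun x hx => (hhd x hx.1).continuousAt.continuousWithinAt) ?_ ?_
    · intro x hx
      rw [interior_Ioc] at hx
      exact (hhd x hx.1).differentiableAt.differentiableWithinAt
    · intro x hx
      rw [interior_Ioc] at hx
      rw [(hhd x hx.1).deriv]
      rcases hlog x hx.1 with h | h
      · have : (D.totient : ℝ)⁻¹ * (1 / (x - 1)) = (D.totient : ℝ)⁻¹ / (x - 1) := by ring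
        linarith
      · linarith [hx.2]
  refine ⟨|C + T| * 2 - h 2, fun x hx => ?_⟩
  have h1 := hanti hx (by norm_num) hx.2
  have e : (LSeries f x).re = ∑' n : ℕ, (if n.Prime ∧ (n : ZMod D) = 1 then ((n : ℝ) ^ x)⁻¹ else 0) := by
    have : f = fun n => ((S.indicator 1 n : ℝ) : ℂ) := by
      funext n; simp only [f, Set.indicator_apply]; split_ifs <;> simp
    rw [this, LSeries, tsum_congr (fun n => hterm _ x n (by simp [S, Nat.not_prime_zero])), ← Complex.ofReal_tsum, Complex.ofReal_re]
    refine tsum_congr fun n => ?_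
    simp only [S, Set.indicator_apply, Set.mem_ofPred_eq]
    split_ifs <;> simp
  rw [← e]
  have h2 : h x = (LSeries f x).re + (D.totient : ℝ)⁻¹ * Real.log (x - 1) - (C + T) * x := rfl
  rw [one_div, Real.log_inv]
  have h3 : -((C + T) * x) ≤ |C + T| * 2 := by
    rw [← neg_mul]
    exact mul_le_mul (neg_le_abs _) hx.2 (by linarith [hx.1]) (abs_nonneg _)
  linarith

/-- A prime factor occurring in one of two equal dependent products divides a factor of the
other. -/
theorem dvd_factor_of_prod_eq {M : Type*} [CommMonoidWithZero M] (S : Finset ℕ)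
    (f g : (l : ℕ) → l ∈ S → M) (l : ℕ) (hl : l ∈ S)
    (h : ∏ l ∈ S.attach, f l.1 l.2 = ∏ l ∈ S.attach, g l.1 l.2) (hp : Prime (f l hl)) :
    ∃ l', ∃ hl', f l hl ∣ g l' hl' := by
  have hd : f l hl ∣ ∏ l ∈ S.attach, g l.1 l.2 := by
    rw [← h]
    exact Finset.dvd_prod_of_mem (fun l : {l // l ∈ S} => f l.1 l.2) (Finset.mem_attach S ⟨l, hl⟩)
  obtain ⟨l', -, h⟩ := (Prime.dvd_finsetProd_iff hp _).mp hd
  exact ⟨l'.1, l'.2, h⟩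

open NumberField in
/-- If every `l ∈ S` carries `m` primes of norm `l`, then the finite Euler product
`∏ (1 + m l⁻ˣ)` is at most `ζ_K(x)`: expanded, it is a sum of `N(I)⁻ˣ` over distinct ideals `I`,
by unique factorization. -/
theorem euler_product_le (K : Type) [Field K] [NumberField K] (m : ℕ) (S : Finset ℕ)
    (A : ℕ → Finset (Ideal (𝓞 K))) (hA : ∀ l ∈ S, l.Prime ∧ (A l).card = m ∧
      ∀ I ∈ A l, I.IsPrime ∧ Ideal.absNorm I = l) (x : ℝ)
    (hx : LSeriesSummable (fun n ↦ (Nat.card {I : Ideal (𝓞 K) // Ideal.absNorm I = n} : ℂ)) x) :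
    ∏ l ∈ S, (1 + m * ((l : ℝ) ^ x)⁻¹) ≤ (dedekindZeta K x).re := by
  classical
  let N : Ideal (𝓞 K) → ℝ := fun I => ((Ideal.absNorm I : ℝ) ^ x)⁻¹
  let F : ℕ → Finset (Ideal (𝓞 K)) := fun l => insert ⊤ (A l)
  have hne : ∀ l ∈ S, ∀ I ∈ A l, I ≠ ⊥ := by
    rintro l hl I hI rfl
    have := ((hA l hl).2.2 _ hI).2
    simp at this
    exact (hA l hl).1.ne_zero this.symm
  have hfac : ∀ l ∈ S, (1 + m * ((l : ℝ) ^ x)⁻¹) = ∑ I ∈ F l, N I := by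
    intro l hl
    obtain ⟨h1, h2, h3⟩ := hA l hl
    rw [Finset.sum_insert (fun h => (h3 _ h).1.ne_top rfl),
      Finset.sum_congr rfl (g := fun _ => ((l : ℝ) ^ x)⁻¹) (fun I hI => by simp [N, (h3 I hI).2])]
    simp [N, h2]
  rw [Finset.prod_congr rfl hfac, Finset.prod_sum]
  -- a choice of `⊤` or a prime above `l` for each `l` gives an ideal, and distinct choices give
  -- distinct ideals
  let P : ((l : ℕ) → l ∈ S → Ideal (𝓞 K)) → Ideal (𝓞 K) := fun f => ∏ l ∈ S.attach, f l.1 l.2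
  have hPN : ∀ f, ∏ l ∈ S.attach, N (f l.1 l.2) = N (P f) := by
    intro f
    simp only [N, P, map_prod, Nat.cast_prod]
    rw [← Real.finsetProd_rpow _ _ (fun i _ => Nat.cast_nonneg _), Finset.prod_inv_distrib]
  have hkey : ∀ f ∈ S.pi F, ∀ g ∈ S.pi F, P f = P g → ∀ l hl, f l hl ≠ ⊤ → g l hl = f l hl := by
    intro f hf g hg hfg l hl hn
    have hF : ∀ f ∈ S.pi F, ∀ l hl, f l hl ≠ ⊤ → f l hl ∈ A l := fun f hf l hl hn => by
      have := Finset.mem_pi.mp hf l hl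
      simpa [F, hn] using this
    have hfl := hF f hf l hl hn
    have hprime : ∀ l ∈ S, ∀ I ∈ A l, Prime I := fun l hl I hI =>
      Ideal.prime_of_isPrime (hne l hl I hI) ((hA l hl).2.2 I hI).1
    have hd := dvd_factor_of_prod_eq S f g l hl hfg (hprime l hl _ hfl)
    obtain ⟨l', hl', h⟩ := hd
    have hnt : g l' hl' ≠ ⊤ := by
      intro e
      rw [e] at h
      exact ((hA l hl).2.2 _ hfl).1.ne_top (top_le_iff.mp (Ideal.le_of_dvd h))
    have hgl := hF g hg l' hl' hnt
    have hmax := ((hA l' hl').2.2 _ hgl).1.isMaximal (hne _ hl' _ hgl)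
    have e : g l' hl' = f l hl :=
      hmax.eq_of_le ((hA l hl).2.2 _ hfl).1.ne_top (Ideal.le_of_dvd h)
    obtain rfl : l = l' := by
      rw [← ((hA l hl).2.2 _ hfl).2, ← ((hA l' hl').2.2 _ hgl).2, e]
    exact e
  have hinj : Set.InjOn P (S.pi F : Set _) := by
    intro f hf g hg hfg
    funext l hl
    by_cases h1 : f l hl = ⊤
    · by_cases h2 : g l hl = ⊤
      · rw [h1, h2]
      · exact hkey g hg f hf hfg.symm l hl h2
    · exact (hkey f hf g hg hfg l hl h1).symm
  rw [Finset.sum_congr rfl (fun f _ => hPN f), ← Finset.sum_image (f := N) hinj]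
  set B := (S.pi F).image P
  have hB : ∀ I ∈ B, Ideal.absNorm I ≠ 0 := by
    intro I hI
    obtain ⟨f, hf, rfl⟩ := Finset.mem_image.mp hI
    simp only [P, map_prod, Finset.prod_ne_zero_iff]
    rintro ⟨l, hl⟩ -
    have := Finset.mem_pi.mp hf l hl
    rcases Finset.mem_insert.mp this with h | h
    · simp [h]
    · rw [((hA l hl).2.2 _ h).2]; exact (hA l hl).1.ne_zero
  have ht : ∀ n : ℕ, n ≠ 0 → LSeries.term (fun n ↦ (Nat.card {I : Ideal (𝓞 K) // Ideal.absNorm I = n} : ℂ)) x n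
      = (((Nat.card {I : Ideal (𝓞 K) // Ideal.absNorm I = n}) * ((n : ℝ)^x)⁻¹ : ℝ) : ℂ) := by
    intro n hn
    rw [LSeries.term_of_ne_zero hn]
    push_cast
    rw [Complex.ofReal_cpow (Nat.cast_nonneg _)]; simp [div_eq_mul_inv]
  have hz : (dedekindZeta K x).re = ∑' n, (LSeries.term (fun n ↦ (Nat.card {I : Ideal (𝓞 K) // Ideal.absNorm I = n} : ℂ)) x n).re :=
    Complex.re_tsum hx
  rw [hz]
  refine le_trans ?_ (Summable.sum_le_tsum (B.image (fun I => Ideal.absNorm I)) ?_ (Complex.hasSum_re hx.hasSum).summable)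
  · rw [← Finset.sum_fiberwise_of_maps_to (g := fun I => Ideal.absNorm I) (t := B.image (fun I => Ideal.absNorm I)) (fun I hI => Finset.mem_image_of_mem _ hI)]
    refine Finset.sum_le_sum fun n hn => ?_
    have hn0 : n ≠ 0 := by
      obtain ⟨I, hI, rfl⟩ := Finset.mem_image.mp hn
      exact hB I hI
    rw [ht n hn0, Complex.ofReal_re, Finset.sum_congr rfl (g := fun _ => ((n : ℝ) ^ x)⁻¹) (fun I hI => by
      simp [N, (Finset.mem_filter.mp hI).2]), Finset.sum_const, nsmul_eq_mul]
    gcongr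
    have : Finite {I : Ideal (𝓞 K) // Ideal.absNorm I = n} :=
      Ideal.finite_setOfPred_absNorm_eq n
    rw [← Nat.card_eq_finsetCard]
    exact_mod_cast Nat.card_le_card_of_injective
      (fun I : {I // I ∈ B.filter (fun I => Ideal.absNorm I = n)} =>
        (⟨I.1, (Finset.mem_filter.mp I.2).2⟩ : {I : Ideal (𝓞 K) // Ideal.absNorm I = n}))
      (fun I J h => Subtype.ext (by simpa using h))
  · intro n _
    rcases eq_or_ne n 0 with rfl | hn
    · simp
    · rw [ht n hn, Complex.ofReal_re]; positivity

open NumberField Filter Topology in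
/-- It is impossible that all primes `l ≡ 1 mod D` have `m > φ(D)` primes of norm `l` above
them: by `prime_sum_lower_bound` and `euler_product_le`, `log ζ_K(x)` would grow at least like
`(m / φ(D)) log (1 / (x - 1))`, whereas `ζ_K` has a simple pole at `1`. -/
theorem not_forall_splits (K : Type) [Field K] [NumberField K] (D m : ℕ) [NeZero D]
    (hm : D.totient < m)
    (h : ∀ l : ℕ, l.Prime → (l : ZMod D) = 1 → ∃ A : Finset (Ideal (𝓞 K)), A.card = m ∧
      ∀ I ∈ A, I.IsPrime ∧ Ideal.absNorm I = l) : False := by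
  classical
  choose! A hA using h
  obtain ⟨C, hC⟩ := prime_sum_lower_bound D
  have hlim := tendsto_sub_one_mul_dedekindZeta_nhdsGT K
  have hpos := dedekindZeta_residue_pos K
  set κ := dedekindZeta_residue K
  have hre : Tendsto (fun s : ℝ => (s - 1) * (dedekindZeta K s).re) (𝓝[>] 1) (𝓝 κ) := by
    have := (Complex.continuous_re.tendsto _).comp hlim
    simpa [Function.comp_def] using this
  -- the simple pole gives `ζ_K(s) ≤ (κ + 1) / (s - 1)` near `1`
  have hu : ∀ᶠ s : ℝ in 𝓝[>] 1, (s - 1) * (dedekindZeta K s).re < κ + 1 := hre.eventually_lt_const (by linarith)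
  have hl : ∀ᶠ s : ℝ in 𝓝[>] 1, 0 < (s - 1) * (dedekindZeta K s).re := hre.eventually_const_lt hpos
  have h2 : ∀ᶠ s : ℝ in 𝓝[>] 1, s ∈ Set.Ioc (1:ℝ) 2 := Ioc_mem_nhdsGT (by norm_num)
  set C2 : ℝ := ∑' n : ℕ, 1 / (n : ℝ) ^ 2
  have hkey : ∀ᶠ s : ℝ in 𝓝[>] 1, (m : ℝ) * ((D.totient : ℝ)⁻¹ * Real.log (1 / (s - 1)) - C) ≤
      Real.log (κ + 1) + Real.log (1 / (s - 1)) + m ^ 2 / 2 * C2 := by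
    filter_upwards [hu, hl, h2] with s hu hl hs
    have hs1 : 0 < s - 1 := by linarith [hs.1]
    have hsum : LSeriesSummable (fun n ↦ (Nat.card {I : Ideal (𝓞 K) // Ideal.absNorm I = n} : ℂ)) s := by
      by_contra hcon
      have : dedekindZeta K s = 0 := tsum_eq_zero_of_not_summable hcon
      rw [this] at hl
      simp at hl
    have hz : (dedekindZeta K s).re ≤ (κ + 1) * (1 / (s - 1)) := by
      rw [mul_one_div, le_div_iff₀ hs1]; linarith
    have hb : ∀ T : Finset ℕ, ∑ n ∈ T, (if n.Prime ∧ (n : ZMod D) = 1 then ((n : ℝ) ^ s)⁻¹ else 0) ≤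
        (m : ℝ)⁻¹ * (Real.log (κ + 1) + Real.log (1 / (s - 1)) + m ^ 2 / 2 * C2) := by
      intro T
      rw [← Finset.sum_filter]
      set S : Finset ℕ := T.filter fun n : ℕ => n.Prime ∧ (n : ZMod D) = 1
      have hS : ∀ l ∈ S, l.Prime ∧ (l : ZMod D) = 1 := fun l hl => (Finset.mem_filter.mp hl).2
      have h1 := euler_product_le K m S A (fun l hl => ⟨(hS l hl).1, hA l (hS l hl).1 (hS l hl).2⟩) s hsum
      have h2 : ∑ l ∈ S, Real.log (1 + m * ((l : ℝ) ^ s)⁻¹) ≤ Real.log (κ + 1) + Real.log (1 / (s - 1)) := by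
        rw [← Real.log_prod (fun l _ => by positivity), ← Real.log_mul (by positivity) (by positivity)]
        exact Real.log_le_log (Finset.prod_pos fun l _ => by positivity) (h1.trans hz)
      have h3 : ∀ l ∈ S, m * ((l : ℝ) ^ s)⁻¹ - m ^ 2 / 2 * (1 / (l : ℝ) ^ 2) ≤ Real.log (1 + m * ((l : ℝ) ^ s)⁻¹) := by
        intro l hl
        have hl1 : (1 : ℝ) ≤ l := by exact_mod_cast (hS l hl).1.one_le
        have hu : 0 ≤ m * ((l : ℝ) ^ s)⁻¹ := by positivity
        refine le_trans ?_ (Real.le_log_one_add_of_nonneg hu)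
        have h4 : ((l : ℝ) ^ s)⁻¹ ≤ 1 / l := by
          rw [one_div]
          apply inv_anti₀ (by linarith)
          conv_lhs => rw [← Real.rpow_one (l : ℝ)]
          exact Real.rpow_le_rpow_of_exponent_le hl1 hs.1.le
        have h5 : (((l : ℝ) ^ s)⁻¹) ^ 2 ≤ 1 / (l : ℝ) ^ 2 := by
          rw [← one_div_pow]; gcongr
        have h6 : m ^ 2 / 2 * (((l : ℝ) ^ s)⁻¹) ^ 2 ≤ m ^ 2 / 2 * (1 / (l : ℝ) ^ 2) := by gcongr
        generalize ((l : ℝ) ^ s)⁻¹ = v at *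
        refine le_trans (b := m * v - m ^ 2 / 2 * v ^ 2) (by linarith) ?_
        rw [le_div_iff₀ (by linarith)]
        nlinarith [mul_nonneg hu (sq_nonneg (m * v))]
      have h4 : ∑ l ∈ S, 1 / (l : ℝ) ^ 2 ≤ C2 :=
        (Real.summable_one_div_nat_pow.mpr (by norm_num)).sum_le_tsum _ (fun _ _ => by positivity)
      have h5 := (Finset.sum_le_sum h3).trans h2
      rw [Finset.sum_sub_distrib, ← Finset.mul_sum, ← Finset.mul_sum] at h5
      have hm0 : (0 : ℝ) < m := by exact_mod_cast (Nat.zero_le _).trans_lt hm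
      rw [← div_eq_inv_mul, le_div_iff₀ hm0]
      have h6 : (m : ℝ) ^ 2 / 2 * ∑ l ∈ S, 1 / (l : ℝ) ^ 2 ≤ m ^ 2 / 2 * C2 := by gcongr
      linarith
    have hm0 : (0 : ℝ) < m := by exact_mod_cast (Nat.zero_le _).trans_lt hm
    have h7 := (hC s hs).trans (Summable.tsum_le_of_sum_le (summable_of_sum_le (fun n => by positivity) hb) hb)
    rwa [← div_eq_inv_mul (b := (m : ℝ)), le_div_iff₀ hm0, mul_comm] at h7
  have hinf : Tendsto (fun s : ℝ => Real.log (1 / (s - 1))) (𝓝[>] 1) atTop := by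
    refine Real.tendsto_log_atTop.comp ?_
    have : Tendsto (fun s : ℝ => s - 1) (𝓝[>] 1) (𝓝[>] 0) := by
      refine tendsto_nhdsWithin_iff.mpr ⟨?_, ?_⟩
      · have : Tendsto (fun s : ℝ => s - 1) (𝓝 1) (𝓝 (1 - 1)) := (continuous_id.sub continuous_const).tendsto _
        simpa using this.mono_left nhdsWithin_le_nhds
      · filter_upwards [self_mem_nhdsWithin] with s hs
        simpa using hs
    simpa [one_div, Function.comp_def] using tendsto_inv_nhdsGT_zero.comp this
  have hφ : (0 : ℝ) < D.totient := by exact_mod_cast Nat.totient_pos.mpr (NeZero.pos D)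
  have hgap : (0 : ℝ) < m * (D.totient : ℝ)⁻¹ - 1 := by
    rw [← div_eq_mul_inv, sub_pos, lt_div_iff₀ hφ, one_mul]; exact_mod_cast hm
  obtain ⟨s, h1, h2⟩ := (hkey.and ((hinf.const_mul_atTop hgap).eventually_gt_atTop
    (Real.log (κ + 1) + m ^ 2 / 2 * C2 + m * C))).exists
  nlinarith
open Polynomial in
/-- A Galois number field in which `X ^ D - 1` and `X ^ p - q` split, with `p ∣ D` odd, has degree
larger than `φ(D)`. Otherwise it is `ℚ(ζ_D)`, so its Galois group is abelian. Complex conjugation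
then commutes with the automorphism taking the real root `α` of `X ^ p - q` to `ξ * α`, `ξ` a
primitive `p`-th root of unity, which forces `ξ` to be real. -/
theorem totient_lt_finrank (E : Type) [Field E] [NumberField E] [IsGalois ℚ E] (D p q : ℕ)
    (hD : 0 < D) (hp : p.Prime) (hpodd : Odd p) (hq : q.Prime) (hpD : p ∣ D)
    (h1 : ((X ^ D - 1 : ℚ[X]).map (algebraMap ℚ E)).Splits)
    (h2 : ((X ^ p - C (q : ℚ) : ℚ[X]).map (algebraMap ℚ E)).Splits) :
    D.totient < Module.finrank ℚ E := by
  by_contra hcon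
  rw [not_lt] at hcon
  let φ : E →ₐ[ℚ] ℂ := IsAlgClosed.lift
  have hφ : Function.Injective φ := φ.toRingHom.injective
  have hmap1 : (X ^ D - 1 : ℚ[X]).map (algebraMap ℚ E) ≠ 0 := by
    simpa using X_pow_sub_C_ne_zero hD (1 : E)
  have hmap2 : (X ^ p - C (q : ℚ) : ℚ[X]).map (algebraMap ℚ E) ≠ 0 := by
    simpa using X_pow_sub_C_ne_zero hp.pos (q : E)
  obtain ⟨ζ, hζ⟩ : ∃ ζ : E, φ ζ = Complex.exp (2 * Real.pi * Complex.I / D) := by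
    have := h1.mem_range_of_isRoot hmap1 (i := φ.toRingHom) (x := Complex.exp (2 * Real.pi * Complex.I / D))
      (by simp [(Complex.isPrimitiveRoot_exp D hD.ne').pow_eq_one])
    exact this
  obtain ⟨α, hα⟩ : ∃ α : E, φ α = (((q : ℝ) ^ (p : ℝ)⁻¹ : ℝ) : ℂ) := by
    have := h2.mem_range_of_isRoot hmap2 (i := φ.toRingHom) (x := (((q : ℝ) ^ (p : ℝ)⁻¹ : ℝ) : ℂ))
      (by
        simp only [Polynomial.map_sub, Polynomial.map_pow, map_X, map_C, IsRoot.def, eval_sub, eval_pow, eval_X, eval_C]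
        rw [← Complex.ofReal_pow, Real.rpow_inv_natCast_pow (Nat.cast_nonneg _) hp.ne_zero]
        simp)
    exact this
  have hαp : α ^ p = q := by
    apply hφ
    rw [map_pow, hα, ← Complex.ofReal_pow, Real.rpow_inv_natCast_pow (Nat.cast_nonneg _) hp.ne_zero]
    simp
  have hζD : IsPrimitiveRoot ζ D := by
    rw [← IsPrimitiveRoot.map_iff_of_injective hφ, hζ]
    exact Complex.isPrimitiveRoot_exp D hD.ne'
  -- `ζ` is a primitive element, so the Galois group is abelian
  have htop : IntermediateField.adjoin ℚ {ζ} = ⊤ := by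
    rw [Field.primitive_element_iff_minpoly_natDegree_eq]
    refine le_antisymm (minpoly.natDegree_le ζ) ?_
    rw [← cyclotomic_eq_minpoly_rat hζD hD, natDegree_cyclotomic]
    exact hcon
  have hcomm : ∀ σ τ : E ≃ₐ[ℚ] E, ∀ x, σ (τ x) = τ (σ x) := by
    intro σ τ x
    have : (σ.toAlgHom.comp τ.toAlgHom) = (τ.toAlgHom.comp σ.toAlgHom) := by
      refine AlgHom.ext_of_adjoin_eq_top (s := {ζ}) ?_ ?_
      · rw [← IntermediateField.adjoin_simple_toSubalgebra_of_isAlgebraic (Algebra.IsAlgebraic.isAlgebraic ζ), htop]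
        rfl
      · intro y hy
        rw [Set.mem_singleton_iff.mp hy]
        have : NeZero D := ⟨hD.ne'⟩
        obtain ⟨a, -, ha⟩ := hζD.eq_pow_of_pow_eq_one (ξ := σ ζ) (by rw [← map_pow, hζD.pow_eq_one, map_one])
        obtain ⟨b, -, hb⟩ := hζD.eq_pow_of_pow_eq_one (ξ := τ ζ) (by rw [← map_pow, hζD.pow_eq_one, map_one])
        change σ (τ ζ) = τ (σ ζ)
        rw [← ha, ← hb, map_pow, map_pow, ← ha, ← hb, ← pow_mul, ← pow_mul, mul_comm]
    exact DFunLike.congr_fun this x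
  -- `c` is complex conjugation transported to `E`
  obtain ⟨c, hc⟩ := NumberField.ComplexEmbedding.exists_comp_symm_eq_of_comp_eq (k := ℚ) φ.toRingHom
    ((starRingEnd ℂ).comp φ.toRingHom) (Subsingleton.elim _ _)
  have hc' : ∀ x, φ (c.symm x) = starRingEnd ℂ (φ x) := fun x => DFunLike.congr_fun hc x
  have hcα : c.symm α = α := by
    apply hφ; rw [hc', hα, Complex.conj_ofReal]
  obtain ⟨k, hk⟩ := hpD
  have hξ : IsPrimitiveRoot (ζ ^ k) p := hζD.pow hD (by rw [hk, mul_comm])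
  have hirr : Irreducible (X ^ p - C (q : ℚ)) := by
    rw [X_pow_sub_C_irreducible_iff_of_prime hp]
    intro b hb
    have hb0 : b ≠ 0 := by
      rintro rfl
      rw [zero_pow hp.ne_zero] at hb
      exact hq.ne_zero (by exact_mod_cast hb.symm)
    have := Fact.mk hq
    have := congrArg (padicValRat q) hb
    rw [padicValRat.pow, padicValRat.self hq.one_lt] at this
    have h3 : (p : ℤ) ∣ 1 := ⟨_, this.symm⟩
    exact hp.one_lt.ne' (by exact_mod_cast Int.eq_one_of_dvd_one (by positivity) h3)
  have hmin : ∀ x : E, x ^ p = q → minpoly ℚ x = X ^ p - C (q : ℚ) := fun x hx =>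
    (minpoly.eq_of_irreducible_of_monic hirr (by simp [hx]) (monic_X_pow_sub_C _ hp.ne_zero)).symm
  obtain ⟨σ, hσ⟩ : ∃ σ : E ≃ₐ[ℚ] E, σ α = ζ ^ k * α := by
    refine isConjRoot_iff_exists_algEquiv.mp ?_
    rw [IsConjRoot, hmin _ hαp, hmin]
    rw [mul_pow, hξ.pow_eq_one, one_mul, hαp]
  have hα0 : α ≠ 0 := by
    rintro rfl
    rw [zero_pow hp.ne_zero] at hαp
    exact hq.ne_zero (by exact_mod_cast hαp.symm)
  have hfix : c.symm (ζ ^ k) = ζ ^ k := by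
    have h3 := hcomm c.symm σ α
    rw [hcα, hσ, map_mul, hcα] at h3
    exact mul_right_cancel₀ hα0 h3
  have hreal : starRingEnd ℂ (φ (ζ ^ k)) = φ (ζ ^ k) := by rw [← hc', hfix]
  obtain ⟨y, hy⟩ := Complex.conj_eq_iff_real.mp hreal
  have hyp : y ^ p = 1 := by
    have : (φ (ζ ^ k)) ^ p = 1 := by rw [← map_pow, hξ.pow_eq_one, map_one]
    rw [hy] at this
    exact_mod_cast this
  have hy1 : y = 1 := hpodd.strictMono_pow.injective (by simpa using hyp)
  have : ζ ^ k = 1 := hφ (by rw [hy, hy1]; simp)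
  exact hξ.ne_one hp.one_lt this

/-- If `k ∣ l - 1` and `d` is a `k`-th power modulo `l`, then every root of `X ^ k - d` is congruent
to an integer modulo any prime `Q` above `l`. -/
theorem exists_int_sub_mem {O : Type*} [CommRing O] (l : ℕ) [Fact l.Prime] (Q : Ideal O) [Q.IsPrime]
    (hlQ : (l : O) ∈ Q) (k : ℕ) (hk : 0 < k) (hkl : k ∣ l - 1) (d : ℕ) (c : ZMod l) (hc : c ^ k = d)
    (x : O) (hx : x ^ k = d) : ∃ z : ℤ, x - z ∈ Q := by
  obtain ⟨g, hg⟩ : ∃ g : ZMod l, IsPrimitiveRoot g k := by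
    obtain ⟨u, hu⟩ := IsCyclic.exists_ofOrder_eq_natCard (α := (ZMod l)ˣ)
    rw [Nat.card_eq_fintype_card, ZMod.card_units] at hu
    have h : IsPrimitiveRoot (u : ZMod l) (l - 1) := by
      rw [IsPrimitiveRoot.coe_units_iff, ← hu]; exact IsPrimitiveRoot.orderOf u
    obtain ⟨m, hm⟩ := hkl
    exact ⟨_, h.pow (Nat.sub_pos_of_lt (Fact.out : l.Prime).one_lt) (by rw [hm, mul_comm])⟩
  have hch : ringChar (O ⧸ Q) ∣ l := by
    have : Ideal.Quotient.mk Q (l : O) = 0 := Ideal.Quotient.eq_zero_iff_mem.mpr hlQ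
    exact ringChar.dvd (by simpa using this)
  let φ : ZMod l →+* O ⧸ Q := ZMod.castHom hch (O ⧸ Q)
  have h1 := congrArg (Polynomial.map φ) (X_pow_sub_C_eq_prod hg hk hc)
  have h2 := congrArg (Polynomial.eval (Ideal.Quotient.mk Q x)) h1
  have h3 : (Ideal.Quotient.mk Q x) ^ k = d := by rw [← map_pow, hx]; simp
  rw [Polynomial.map_prod, Polynomial.eval_prod] at h2
  simp only [Polynomial.map_sub, Polynomial.map_pow, Polynomial.map_X, Polynomial.map_C,
    Polynomial.eval_sub, Polynomial.eval_pow, Polynomial.eval_X, Polynomial.eval_C, h3, map_natCast] at h2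
  rw [Polynomial.map_natCast, Polynomial.eval_natCast, sub_self] at h2
  obtain ⟨i, -, hi⟩ := Finset.prod_eq_zero_iff.mp h2.symm
  refine ⟨((g ^ i * c).val : ℤ), ?_⟩
  rw [← Ideal.Quotient.eq_zero_iff_mem, map_sub, ← hi]
  congr 1
  rw [Int.cast_natCast, map_natCast, ← map_natCast φ, ZMod.natCast_zmod_val]

theorem Nat.Prime.coprime_of_dvd_pred {l k : ℕ} (hl : l.Prime) (h : k ∣ l - 1) : l.Coprime k := by
  have : l.Coprime (l - 1) := by
    have := (Nat.coprime_self_sub_right hl.one_lt.le).mpr (Nat.coprime_one_right l)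
    simpa using this
  exact this.coprime_dvd_right h

/-- The roots of `X ^ k - d` are distinct modulo a prime above `l` when `l` divides neither `k`
nor `d`. -/
theorem eq_of_sub_mem {O : Type*} [CommRing O] [IsDomain O] (l : ℕ) (Q : Ideal O) [hQ : Q.IsPrime]
    (hlQ : (l : O) ∈ Q) (k : ℕ) (hk : 0 < k) (hlk : l.Coprime k) (d : ℕ) (hd : l.Coprime d)
    (x y : O) (hx : x ^ k = d) (hy : y ^ k = d) (hxy : x - y ∈ Q) : x = y := by
  by_contra hne
  have hcop : ∀ m : ℕ, l.Coprime m → (m : O) ∉ Q := by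
    intro m hm hmem
    have := Nat.isCoprime_iff_coprime.mpr hm
    obtain ⟨a, b, hab⟩ := this
    apply hQ.ne_top
    rw [Ideal.eq_top_iff_one]
    have h : ((a * l + b * m : ℤ) : O) ∈ Q := by
      push_cast
      exact Q.add_mem (Q.mul_mem_left _ hlQ) (Q.mul_mem_left _ hmem)
    rw [hab] at h
    simpa using h
  have h := (Commute.all x y).geom_sum₂_mul k
  rw [hx, hy, sub_self] at h
  have h0 := (mul_eq_zero.mp h).resolve_right (sub_ne_zero.mpr hne)
  have hmk : Ideal.Quotient.mk Q x = Ideal.Quotient.mk Q y := Ideal.Quotient.eq.mpr hxy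
  have h1 := congrArg (Ideal.Quotient.mk Q) h0
  simp only [map_sum, map_mul, map_pow, hmk, map_zero] at h1
  rw [Finset.sum_congr rfl (g := fun _ => Ideal.Quotient.mk Q y ^ (k - 1)) (fun i hi => by
    rw [← pow_add]; congr 1; have := Finset.mem_range.mp hi; omega)] at h1
  simp only [Finset.sum_const, Finset.card_range, nsmul_eq_mul] at h1
  rw [← map_pow, ← map_natCast (Ideal.Quotient.mk Q), ← map_mul, Ideal.Quotient.eq_zero_iff_mem] at h1
  have h2 := (hQ.mem_or_mem h1).resolve_left (hcop k hlk)
  exact hcop d hd (by rw [← hy]; exact Q.pow_mem_of_mem (hQ.mem_of_pow_mem _ h2) k hk)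

open NumberField in
/-- If `D` and `p` divide `l - 1` and `q` is a `p`-th power modulo `l`, then `l` splits completely
in a Galois extension generated by roots of `X ^ D - 1` and `X ^ p - q`: these generators are
congruent to integers modulo any prime above `l`, so the decomposition group is trivial. -/
theorem exists_split (E : Type) [Field E] [NumberField E] [IsGalois ℚ E] (D p q l : ℕ) [Fact l.Prime]
    (hD : 0 < D) (hp : p.Prime) (hDl : D ∣ l - 1) (hpl : p ∣ l - 1) (hql : l.Coprime q)
    (S : Set E) (hS : Algebra.adjoin ℚ S = ⊤) (hroot : ∀ x ∈ S, x ^ D = 1 ∨ x ^ p = q)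
    (c : ZMod l) (hc : c ^ p = q) :
    ∃ A : Finset (Ideal (𝓞 E)), A.card = Module.finrank ℚ E ∧
      ∀ I ∈ A, I.IsPrime ∧ Ideal.absNorm I = l := by
  classical
  have hl : l.Prime := Fact.out
  have hl0 : (l : 𝓞 E) ≠ 0 := by exact_mod_cast hl.ne_zero
  have hnt : Ideal.span {(l : 𝓞 E)} ≠ ⊤ := by
    intro h
    have h1 := congrArg Ideal.absNorm h
    rw [Ideal.absNorm_span_natCast, Ideal.absNorm_top] at h1
    exact hl.one_lt.ne' ((Nat.pow_eq_one.mp h1).resolve_right (Module.finrank_pos.ne'))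
  obtain ⟨P, hP, hPle⟩ := Ideal.exists_le_maximal _ hnt
  have := hP.isPrime
  have hlP : (l : 𝓞 E) ∈ P := hPle (Ideal.mem_span_singleton_self _)
  let e : (E ≃ₐ[ℚ] E) → (𝓞 E →+* 𝓞 E) := fun σ => RingOfIntegers.mapRingHom σ.toRingEquiv.toRingHom
  have he : ∀ σ (x : 𝓞 E), ((e σ x : 𝓞 E) : E) = σ x := fun σ x => rfl
  let Q : (E ≃ₐ[ℚ] E) → Ideal (𝓞 E) := fun σ => P.comap (e σ)
  have hQp : ∀ σ, (Q σ).IsPrime := fun σ => Ideal.comap_isPrime _ _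
  have hlQ : ∀ σ, (l : 𝓞 E) ∈ Q σ := fun σ => by
    simp only [Q, Ideal.mem_comap, map_natCast, hlP]
  have hinj : Function.Injective Q := by
    intro σ τ hστ
    have key : ∀ k : ℕ, 0 < k → k ∣ l - 1 → ∀ d : ℕ, l.Coprime d → ∀ c : ZMod l, c ^ k = d →
        ∀ x : E, x ^ k = d → σ x = τ x := by
      intro k hk hkl d hd c hc x hx
      have hxi : IsIntegral ℤ x := IsIntegral.of_pow hk (by
        rw [hx]; simpa using isIntegral_algebraMap (R := ℤ) (A := E) (x := (d : ℤ)))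
      let x' : 𝓞 E := ⟨x, hxi⟩
      have hx' : x' ^ k = d := by
        apply RingOfIntegers.ext
        change x ^ k = algebraMap (𝓞 E) E d
        rw [hx, map_natCast]
      have := hQp σ
      obtain ⟨z, hz⟩ := exists_int_sub_mem l (Q σ) (hlQ σ) k hk hkl d c hc x' hx'
      have h1 : e σ x' - z ∈ P := by simpa [Q] using hz
      have h2 : e τ x' - z ∈ P := by rw [hστ] at hz; simpa [Q] using hz
      have h3 : e σ x' - e τ x' ∈ P := by simpa using P.sub_mem h1 h2
      have := eq_of_sub_mem l P hlP k hk (hl.coprime_of_dvd_pred hkl) d hd (e σ x') (e τ x')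
        (by rw [← map_pow, hx']; simp) (by rw [← map_pow, hx']; simp) h3
      exact congrArg (fun y : 𝓞 E => (y : E)) this
    have : σ.toAlgHom = τ.toAlgHom := by
      refine AlgHom.ext_of_adjoin_eq_top hS fun x hx => ?_
      rcases hroot x hx with h | h
      · exact key D hD hDl 1 (Nat.coprime_one_right l) 1 (by simp) x (by simpa using h)
      · exact key p hp.pos hpl q hql c hc x h
    exact AlgEquiv.ext fun x => DFunLike.congr_fun this x
  let A : Finset (Ideal (𝓞 E)) := Finset.univ.image Q
  have hcard : A.card = Module.finrank ℚ E := by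
    rw [Finset.card_image_of_injective _ hinj, Finset.card_univ, ← Nat.card_eq_fintype_card]
    exact IsGalois.card_aut_eq_finrank ℚ E
  have hA : ∀ I ∈ A, I.IsPrime ∧ (l : 𝓞 E) ∈ I := by
    intro I hI
    obtain ⟨σ, -, rfl⟩ := Finset.mem_image.mp hI
    exact ⟨hQp σ, hlQ σ⟩
  have hle : ∀ I ∈ A, Ideal.span {(l : 𝓞 E)} ≤ I := fun I hI => by
    rw [Ideal.span_singleton_le_iff_mem]; exact (hA I hI).2
  have hprime : ∀ I ∈ A, Prime I := fun I hI => by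
    refine Ideal.prime_of_isPrime ?_ (hA I hI).1
    rintro rfl
    exact hl0 (by simpa using (hA _ hI).2)
  -- `finrank` many primes, each of norm at least `l`, whose product divides `(l)`: equality holds
  have hlow : ∀ I ∈ A, l ≤ Ideal.absNorm I := by
    intro I hI
    have h1 := Ideal.absNorm_dvd_absNorm_of_le (hle I hI)
    rw [Ideal.absNorm_span_natCast] at h1
    obtain ⟨i, -, hi⟩ := (Nat.dvd_prime_pow hl).mp h1
    rcases i with _ | i
    · rw [pow_zero, Ideal.absNorm_eq_one_iff] at hi
      exact absurd hi (hA I hI).1.ne_top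
    · rw [hi, pow_succ]
      exact Nat.le_mul_of_pos_left l (pow_pos hl.pos _)
  have hprod : ∏ I ∈ A, Ideal.absNorm I ≤ ∏ I ∈ A, l := by
    rw [← map_prod, Finset.prod_const, hcard]
    have h1 : ∏ I ∈ A, I ∣ Ideal.span {(l : 𝓞 E)} :=
      Finset.prod_primes_dvd _ hprime fun I hI => Ideal.dvd_iff_le.mpr (hle I hI)
    have h2 := Ideal.absNorm_dvd_absNorm_of_le (Ideal.le_of_dvd h1)
    rw [Ideal.absNorm_span_natCast] at h2
    have h3 := Nat.le_of_dvd (pow_pos hl.pos _) h2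
    convert h3 using 2
    exact (RingOfIntegers.rank E).symm
  refine ⟨A, hcard, fun I hI => ⟨(hA I hI).1, ?_⟩⟩
  by_contra hne
  exact absurd hprod (not_le.mpr (Finset.prod_lt_prod (fun _ _ => hl.pos) hlow
    ⟨I, hI, lt_of_le_of_ne (hlow I hI) (Ne.symm hne)⟩))

open Polynomial in
/-- There is a prime `l ≡ 1 mod D` modulo which `q` is not a `p`-th power. Oddness of `p` matters:
for `p = 2` and `4 * q ∣ D`, the square root of `q` lies in `ℚ(ζ_D)`. -/
theorem exists_prime_not_pow (p q D : ℕ) (hp : p.Prime) (hq : q.Prime) (hpodd : Odd p)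
    (hD : 0 < D) (hpD : p ∣ D) (hqD : q ∣ D) :
    ∃ l : ℕ, l.Prime ∧ D ∣ l - 1 ∧ ∀ c : ZMod l, c ^ p ≠ q := by
  by_contra! hcon
  let f : ℚ[X] := (X ^ D - 1) * (X ^ p - C (q : ℚ))
  let E := f.SplittingField
  have : IsSplittingField ℚ E f := IsSplittingField.splittingField f
  have hf1 : (X ^ D - 1 : ℚ[X]) ≠ 0 := by simpa using X_pow_sub_C_ne_zero hD (1 : ℚ)
  have hf2 : (X ^ p - C (q : ℚ) : ℚ[X]) ≠ 0 := X_pow_sub_C_ne_zero hp.pos _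
  have hf : f ≠ 0 := mul_ne_zero hf1 hf2
  have : FiniteDimensional ℚ E := IsSplittingField.finiteDimensional E f
  have : CharZero E := charZero_of_injective_algebraMap (algebraMap ℚ E).injective
  have : NumberField E := { to_charZero := this, to_finiteDimensional := inferInstance }
  have : Normal ℚ E := Normal.of_isSplittingField f
  have : IsGalois ℚ E := {}
  have hs : (f.map (algebraMap ℚ E)).Splits := IsSplittingField.splits E f
  have hf0 : f.map (algebraMap ℚ E) ≠ 0 := Polynomial.map_ne_zero hf
  have hdeg := totient_lt_finrank E D p q hD hp hpodd hq hpD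
    (hs.of_dvd hf0 (Polynomial.map_dvd _ (dvd_mul_right _ _)))
    (hs.of_dvd hf0 (Polynomial.map_dvd _ (dvd_mul_left _ _)))
  have : NeZero D := ⟨hD.ne'⟩
  refine not_forall_splits E D _ hdeg fun l hl hl1 => ?_
  have hDl : D ∣ l - 1 := by
    rw [← ZMod.natCast_eq_zero_iff, Nat.cast_sub hl.one_lt.le, hl1]; simp
  obtain ⟨c, hc⟩ := hcon l hl hDl
  have := Fact.mk hl
  refine exists_split E D p q l hD hp hDl (hpD.trans hDl) ?_ (f.rootSet E)
    (IsSplittingField.adjoin_rootSet E f) ?_ c hc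
  · rw [Nat.coprime_primes hl hq]
    rintro rfl
    have := Nat.le_of_dvd (Nat.sub_pos_of_lt hl.one_lt) (hqD.trans hDl)
    have := hl.one_lt
    omega
  · intro x hx
    rw [mem_rootSet] at hx
    have h := hx.2
    simp only [f, map_mul, mul_eq_zero, map_sub, map_pow, aeval_X, map_one, map_natCast, sub_eq_zero] at h
    exact h

/-! ### Local valuations of Jacobi sums -/

/-- `x` and `y` are associated locally at `Q`: `a * x = b * y` for some `a, b ∉ Q`. For a prime
`Q` of a Dedekind domain this says that `x` and `y` have the same valuation at `Q`. -/
def LocAssoc {O : Type*} [CommRing O] (Q : Ideal O) (x y : O) : Prop :=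
  ∃ a ∉ Q, ∃ b ∉ Q, a * x = b * y

namespace LocAssoc

variable {O : Type*} [CommRing O] {Q : Ideal O} {x y z w : O}

theorem of_notMem (hx : x ∉ Q) (hy : y ∉ Q) : LocAssoc Q x y :=
  ⟨y, hy, x, hx, mul_comm _ _⟩

theorem symm (h : LocAssoc Q x y) : LocAssoc Q y x := by
  obtain ⟨a, ha, b, hb, h⟩ := h
  exact ⟨b, hb, a, ha, h.symm⟩

variable [Q.IsPrime]

theorem refl (x : O) : LocAssoc Q x x :=
  ⟨1, Q.one_notMem, 1, Q.one_notMem, rfl⟩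

theorem mul (h : LocAssoc Q x y) (h' : LocAssoc Q z w) : LocAssoc Q (x * z) (y * w) := by
  obtain ⟨a, ha, b, hb, h⟩ := h
  obtain ⟨c, hc, d, hd, h'⟩ := h'
  refine ⟨a * c, ?_, b * d, ?_, by linear_combination c * z * h + b * y * h'⟩
  · exact fun h => (Ideal.IsPrime.mem_or_mem ‹_› h).elim ha hc
  · exact fun h => (Ideal.IsPrime.mem_or_mem ‹_› h).elim hb hd

theorem trans (h : LocAssoc Q x y) (h' : LocAssoc Q y z) : LocAssoc Q x z := by
  obtain ⟨a, ha, b, hb, h⟩ := h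
  obtain ⟨c, hc, d, hd, h'⟩ := h'
  refine ⟨c * a, ?_, b * d, ?_, by linear_combination c * h + b * h'⟩
  · exact fun h => (Ideal.IsPrime.mem_or_mem ‹_› h).elim hc ha
  · exact fun h => (Ideal.IsPrime.mem_or_mem ‹_› h).elim hb hd

theorem pow (h : LocAssoc Q x y) (n : ℕ) : LocAssoc Q (x ^ n) (y ^ n) := by
  induction n with
  | zero => simpa using refl _
  | succ n ih => rw [pow_succ, pow_succ]; exact ih.mul h

theorem prod {ι : Type*} (s : Finset ι) (f g : ι → O) (h : ∀ i ∈ s, LocAssoc Q (f i) (g i)) :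
    LocAssoc Q (∏ i ∈ s, f i) (∏ i ∈ s, g i) := by
  classical
  induction s using Finset.induction_on with
  | empty => simpa using refl _
  | insert i s hi ih =>
    rw [Finset.prod_insert hi, Finset.prod_insert hi]
    exact (h i (by simp)).mul (ih fun k hk => h k (by simp [hk]))

end LocAssoc

/-- Divisibility can be tested locally: the ideal of all `a` with `y ∣ a * x` lies in no maximal
ideal. -/
theorem dvd_of_locAssoc {O : Type*} [CommRing O] (x y : O)
    (h : ∀ Q : Ideal O, Q.IsMaximal → LocAssoc Q x y) : y ∣ x := by
  have key : Submodule.colon (Ideal.span {y}) (Ideal.span {x} : Set O) = ⊤ := by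
    by_contra hne
    obtain ⟨Q, hQ, hle⟩ := Ideal.exists_le_maximal _ hne
    obtain ⟨a, ha, b, hb, hab⟩ := h Q hQ
    refine ha (hle ?_)
    rw [Submodule.mem_colon]
    intro z hz
    obtain ⟨c, rfl⟩ := Ideal.mem_span_singleton'.1 hz
    rw [smul_eq_mul, Ideal.mem_span_singleton]
    exact ⟨c * b, by linear_combination c * hab⟩
  have h1 : (1 : O) ∈ Submodule.colon (Ideal.span {y}) (Ideal.span {x} : Set O) := by
    rw [key]; trivial
  rw [Submodule.mem_colon] at h1
  simpa [Ideal.mem_span_singleton] using h1 x (Ideal.mem_span_singleton_self x)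

theorem associated_of_locAssoc {O : Type*} [CommRing O] [IsDomain O] (x y : O)
    (h : ∀ Q : Ideal O, Q.IsMaximal → LocAssoc Q x y) : Associated x y := by
  refine associated_of_dvd_dvd (dvd_of_locAssoc y x fun Q hQ => ?_) (dvd_of_locAssoc x y h)
  have := hQ.isPrime
  exact (h Q hQ).symm

/-- The relation `J(χ, φ) J(χ⁻¹, φ⁻¹) = l`, over a domain of characteristic zero rather than a
field. -/
theorem jacobiSum_mul_inv (l : ℕ) [Fact l.Prime] {O : Type*} [CommRing O] [IsDomain O] [CharZero O]
    {χ φ : MulChar (ZMod l) O} (hχ : χ ≠ 1) (hφ : φ ≠ 1) (hχφ : χ * φ ≠ 1) :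
    jacobiSum χ φ * jacobiSum χ⁻¹ φ⁻¹ = l := by
  have hinj : Function.Injective (algebraMap O (FractionRing O)) := FaithfulSMul.algebraMap_injective _ _
  have : CharZero (FractionRing O) := charZero_of_injective_algebraMap hinj
  apply hinj
  have hl := (Fact.out : l.Prime)
  have hch : ringChar (FractionRing O) ≠ ringChar (ZMod l) := by
    rw [ringChar.eq_zero, ZMod.ringChar_zmod_n]; exact hl.ne_zero.symm
  have := jacobiSum_mul_jacobiSum_inv (F := ZMod l) (F' := FractionRing O) hch
    (χ := χ.ringHomComp (algebraMap O _)) (φ := φ.ringHomComp (algebraMap O _))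
    ((MulChar.ringHomComp_ne_one_iff hinj).2 hχ) ((MulChar.ringHomComp_ne_one_iff hinj).2 hφ)
    (by rw [← MulChar.ringHomComp_mul]; exact (MulChar.ringHomComp_ne_one_iff hinj).2 hχφ)
  have hinv : ∀ χ : MulChar (ZMod l) O, (χ.ringHomComp (algebraMap O (FractionRing O)))⁻¹ =
      χ⁻¹.ringHomComp (algebraMap O (FractionRing O)) :=
    fun χ => (map_inv (MulChar.ringHomCompHom (algebraMap O (FractionRing O))) χ).symm
  rw [hinv, hinv, jacobiSum_ringHomComp, jacobiSum_ringHomComp] at this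
  rw [map_mul, this]; simp [ZMod.card]

/-- The reduction of a Jacobi sum. Expanding `(1 - x) ^ B`, only the term in `x ^ (l - 1)` survives
the summation over `x`, and its coefficient is a binomial coefficient prime to `l`. -/
theorem sum_pow_mul_pow_ne_zero (l : ℕ) [Fact l.Prime] (A B : ℕ) (hA0 : 0 < A) (hA : A < l - 1)
    (hB : B < l - 1) (hAB : l - 1 ≤ A + B) :
    ∑ x : ZMod l, x ^ A * (1 - x) ^ B ≠ 0 := by
  have hl := (Fact.out : l.Prime)
  have h1 : ∀ x : ZMod l, x ^ A * (1 - x) ^ B =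
      ∑ m ∈ Finset.range (B + 1), (-1) ^ m * (B.choose m : ZMod l) * x ^ (A + m) := by
    intro x
    rw [show 1 - x = -x + 1 by ring, add_pow, Finset.mul_sum]
    refine Finset.sum_congr rfl fun m _ => ?_
    rw [neg_pow]; ring
  have h2 : ∀ m ∈ Finset.range (B + 1), m ≠ l - 1 - A → ∑ x : ZMod l, x ^ (A + m) = 0 := by
    intro m hm hne
    rw [Finset.mem_range] at hm
    by_cases hlt : A + m < l - 1
    · exact FiniteField.sum_pow_lt_card_sub_one _ _ (by rwa [ZMod.card])
    · have : A + m = (A + m - (l - 1)) + (l - 1) := by omega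
      have e : ∀ x : ZMod l, x ^ (A + m) = x ^ (A + m - (l - 1)) := by
        intro x
        by_cases hx : x = 0
        · rw [hx, zero_pow (by omega), zero_pow (by omega)]
        · conv_lhs => rw [this]
          rw [pow_add, ZMod.pow_card_sub_one_eq_one hx, mul_one]
      simp_rw [e]
      exact FiniteField.sum_pow_lt_card_sub_one _ _ (by rw [ZMod.card]; omega)
  simp_rw [h1]
  rw [Finset.sum_comm]
  simp_rw [← Finset.mul_sum]
  rw [Finset.sum_eq_single (l - 1 - A) (fun m hm hne => by rw [h2 m hm hne, mul_zero])
    (fun h => absurd (Finset.mem_range.2 (by omega)) h)]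
  rw [show A + (l - 1 - A) = l - 1 by omega]
  have h3 : ∑ x : ZMod l, x ^ (l - 1) = -1 := by
    have := FiniteField.sum_pow_units (ZMod l) (l - 1)
    rw [ZMod.card, if_pos dvd_rfl] at this
    rw [← this, ← Finset.sum_subset (Finset.subset_univ (Finset.univ.map ⟨((↑) : (ZMod l)ˣ → ZMod l), Units.val_injective⟩))]
    · rw [Finset.sum_map]; rfl
    · intro x _ hx
      by_cases h : x = 0
      · rw [h, zero_pow (by have := hl.two_le; omega)]
      · exact absurd (Finset.mem_map.2 ⟨Units.mk0 x h, Finset.mem_univ _, rfl⟩) hx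
  rw [h3]
  refine mul_ne_zero (mul_ne_zero (pow_ne_zero _ (neg_ne_zero.2 one_ne_zero)) ?_) (neg_ne_zero.2 one_ne_zero)
  rw [Ne, ZMod.natCast_eq_zero_iff]
  intro hd
  have : l ∣ B.factorial := by
    rw [← Nat.choose_mul_factorial_mul_factorial (n := B) (k := l - 1 - A) (by omega)]
    exact dvd_mul_of_dvd_left (dvd_mul_of_dvd_left hd _) _
  have := (hl.dvd_factorial).1 this
  omega

/-- `χ` reduces modulo `Q` (a prime above `l`) to the `A`-th power of the canonical map
`𝔽_l → O / Q`. -/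
def HasExp (l : ℕ) [Fact l.Prime] {O : Type*} [CommRing O] (Q : Ideal O) [CharP (O ⧸ Q) l]
    (χ : MulChar (ZMod l) O) (A : ℕ) : Prop :=
  ∀ x : (ZMod l)ˣ, Ideal.Quotient.mk Q (χ x) = (ZMod.castHom (dvd_refl l) (O ⧸ Q)) x ^ A

section
variable {l : ℕ} [Fact l.Prime] {O : Type*} [CommRing O] {Q : Ideal O} [CharP (O ⧸ Q) l]
  {χ φ : MulChar (ZMod l) O} {A B : ℕ}

theorem HasExp.pow (h : HasExp l Q χ A) (m : ℕ) : HasExp l Q (χ ^ m) (A * m) := by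
  intro x
  rw [MulChar.pow_apply_coe, map_pow, h x, pow_mul]

theorem HasExp.congr (h : HasExp l Q χ A) (hAB : A ≡ B [MOD l - 1]) : HasExp l Q χ B := by
  intro x
  rw [h x, ← map_pow, ← map_pow]
  congr 1
  have := ZMod.units_pow_card_sub_one_eq_one l x
  have h2 : x ^ A = x ^ B := by
    rw [pow_eq_pow_iff_modEq]
    exact hAB.of_dvd (orderOf_dvd_of_pow_eq_one this)
  rw [← Units.val_pow_eq_pow_val, ← Units.val_pow_eq_pow_val, h2]

theorem HasExp.inv (h : HasExp l Q χ A) (hA : A ≤ l - 1) : HasExp l Q χ⁻¹ (l - 1 - A) := by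
  intro x
  have h1 : χ⁻¹ (x : ZMod l) = χ ((x⁻¹ : (ZMod l)ˣ) : ZMod l) := by
    rw [MulChar.inv_apply, Ring.inverse_unit]
  rw [h1, h x⁻¹, ← map_pow, ← map_pow]
  congr 1
  have := ZMod.units_pow_card_sub_one_eq_one l x
  have h2 : (x⁻¹) ^ A = x ^ (l - 1 - A) := by
    rw [inv_pow, inv_eq_iff_mul_eq_one, ← pow_add, Nat.add_sub_cancel' hA, this]
  rw [← Units.val_pow_eq_pow_val, ← Units.val_pow_eq_pow_val, h2]

/-- If the exponents `A, B` carry, i.e. `A + B ≥ l - 1`, then `J(χ, φ)` is a unit at `Q`. -/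
theorem HasExp.jacobiSum_notMem (h : HasExp l Q χ A) (h' : HasExp l Q φ B) (hA0 : 0 < A)
    (hA : A < l - 1) (hB0 : 0 < B) (hB : B < l - 1) (hAB : l - 1 ≤ A + B) [Nontrivial (O ⧸ Q)] :
    jacobiSum χ φ ∉ Q := by
  have e1 : ∀ {χ : MulChar (ZMod l) O} {A : ℕ}, HasExp l Q χ A → 0 < A → ∀ x : ZMod l,
      Ideal.Quotient.mk Q (χ x) = (ZMod.castHom (dvd_refl l) (O ⧸ Q)) (x ^ A) := by
    intro χ A h hA x
    by_cases hx : x = 0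
    · subst hx
      have : Nontrivial O := (Ideal.Quotient.mk Q).domain_nontrivial
      rw [MulChar.map_zero, zero_pow hA.ne', map_zero, map_zero]
    · rw [map_pow]; exact h (Units.mk0 x hx)
  have e2 : Ideal.Quotient.mk Q (jacobiSum χ φ) =
      (ZMod.castHom (dvd_refl l) (O ⧸ Q)) (∑ x : ZMod l, x ^ A * (1 - x) ^ B) := by
    rw [jacobiSum, map_sum, map_sum]
    refine Finset.sum_congr rfl fun x _ => ?_
    rw [map_mul, map_mul, e1 h hA0, e1 h' hB0]
  rw [← Ideal.Quotient.eq_zero_iff_mem, e2, map_eq_zero]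
  exact sum_pow_mul_pow_ne_zero l A B hA0 hA hB hAB

/-- For characters with exponents `A, B ∈ (0, l - 1)`, the Jacobi sum behaves at `Q` like `l` if
`A + B < l - 1` and like a unit otherwise. -/
theorem HasExp.jacobiSum_locAssoc [IsDomain O] [CharZero O] [Q.IsPrime]
    (h : HasExp l Q χ A) (h' : HasExp l Q φ B) (hA0 : 0 < A)
    (hA : A < l - 1) (hB0 : 0 < B) (hB : B < l - 1) (hχ : χ ≠ 1) (hφ : φ ≠ 1) (hχφ : χ * φ ≠ 1) :
    LocAssoc Q (jacobiSum χ φ) ((l : O) ^ (if A + B < l - 1 then 1 else 0)) := by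
  split_ifs with hAB
  · refine ⟨jacobiSum χ⁻¹ φ⁻¹, ?_, 1, Q.one_notMem, ?_⟩
    · exact (h.inv hA.le).jacobiSum_notMem (h'.inv hB.le) (by omega) (by omega) (by omega)
        (by omega) (by omega)
    · rw [pow_one, one_mul, mul_comm]
      exact jacobiSum_mul_inv l hχ hφ hχφ
  · rw [pow_zero]
    exact LocAssoc.of_notMem (h.jacobiSum_notMem h' hA0 hA hB0 hB (by omega)) Q.one_notMem

theorem HasExp.exists [Q.IsPrime] (χ : MulChar (ZMod l) O) : ∃ A, HasExp l Q χ A := by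
  classical
  obtain ⟨g, hg⟩ := IsCyclic.exists_generator (α := (ZMod l)ˣ)
  have hgo : orderOf g = l - 1 := by
    rw [orderOf_eq_card_of_forall_mem_zpowers hg, Nat.card_eq_fintype_card, ZMod.card_units]
  let φ := ZMod.castHom (dvd_refl l) (O ⧸ Q)
  have hprim : IsPrimitiveRoot (φ g) (l - 1) := by
    have : IsPrimitiveRoot ((g : (ZMod l)ˣ) : ZMod l) (l - 1) := by
      rw [IsPrimitiveRoot.coe_units_iff, ← hgo]; exact IsPrimitiveRoot.orderOf g
    exact this.map_of_injective φ.injective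
  have : NeZero (l - 1) := ⟨by have := (Fact.out : l.Prime).two_le; omega⟩
  have h1 : (Ideal.Quotient.mk Q (χ g)) ^ (l - 1) = 1 := by
    have h3 : (g : ZMod l) ^ (l - 1) = 1 := by
      have := congrArg Units.val (ZMod.units_pow_card_sub_one_eq_one l g)
      simpa using this
    rw [← map_pow, ← map_pow, h3, map_one, map_one]
  obtain ⟨A, _, hA⟩ := hprim.eq_pow_of_pow_eq_one h1
  refine ⟨A, fun x => ?_⟩
  obtain ⟨m, rfl⟩ := (mem_powers_iff_mem_zpowers).2 (hg x)
  show _ = φ _ ^ A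
  simp only [Units.val_pow_eq_pow_val, map_pow]
  rw [← hA, ← pow_mul, ← pow_mul, mul_comm]

end

/-! ### Stickelberger-type valuations of two products of Jacobi sums -/

theorem charP_quotient {O : Type*} [CommRing O] {Q : Ideal O} (hQ : Q ≠ ⊤) {l : ℕ} (hl : l.Prime)
    (hlQ : (l : O) ∈ Q) : CharP (O ⧸ Q) l := by
  have : Nontrivial (O ⧸ Q) := Ideal.Quotient.nontrivial_iff.2 hQ
  refine ringChar.of_eq (((Nat.dvd_prime hl).1 (ringChar.dvd ?_)).resolve_left ?_)
  · rw [← map_natCast (Ideal.Quotient.mk Q), Ideal.Quotient.eq_zero_iff_mem]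
    exact hlQ
  · exact CharP.ringChar_ne_one

theorem natCast_mem_of_charP {O : Type*} [CommRing O] {Q : Ideal O} {l : ℕ} [CharP (O ⧸ Q) l] :
     (l : O) ∈ Q := by
  rw [← Ideal.Quotient.eq_zero_iff_mem, map_natCast, CharP.cast_eq_zero]

section
variable {l : ℕ} [Fact l.Prime] {O : Type*} [CommRing O] {Q : Ideal O} [CharP (O ⧸ Q) l]
  {χ η : MulChar (ZMod l) O}

theorem HasExp.eq_one [IsDomain O] [Q.IsPrime] {A : ℕ} (h : HasExp l Q χ A) (hA : l - 1 ∣ A) :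
    χ = 1 := by
  rw [MulChar.eq_one_iff]
  intro x
  have hl := (Fact.out : l.Prime)
  have h1 : (x : ZMod l) ^ (l - 1) = 1 := by
    rw [← Units.val_pow_eq_pow_val, ZMod.units_pow_card_sub_one_eq_one, Units.val_one]
  refine eq_of_sub_mem l Q natCast_mem_of_charP (l - 1) (by have := hl.two_le; omega)
    (hl.coprime_of_dvd_pred dvd_rfl) 1
    (by simp) _ _ (by rw [← map_pow, h1, map_one, Nat.cast_one]) (by simp) ?_
  rw [← Ideal.Quotient.eq_zero_iff_mem, map_sub, h x, map_one, sub_eq_zero]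
  obtain ⟨c, rfl⟩ := hA
  rw [← map_pow, pow_mul, h1, one_pow, map_one]

theorem HasExp.dvd [Nontrivial (O ⧸ Q)] {A : ℕ} (h : HasExp l Q (1 : MulChar (ZMod l) O) A) :
    l - 1 ∣ A := by
  obtain ⟨g, hg⟩ := IsCyclic.exists_generator (α := (ZMod l)ˣ)
  have hgo : orderOf g = l - 1 := by
    rw [orderOf_eq_card_of_forall_mem_zpowers hg, Nat.card_eq_fintype_card, ZMod.card_units]
  rw [← hgo, orderOf_dvd_iff_pow_eq_one]
  have := h g
  rw [MulChar.one_apply_coe, map_one, ← map_pow] at this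
  ext
  rw [Units.val_pow_eq_pow_val, Units.val_one]
  exact ((ZMod.castHom (dvd_refl l) (O ⧸ Q)).injective (by rw [map_one]; exact this.symm))

/-- If `l - 1 = d * M`, the exponent of a character of order `d` is `M * u` with `u` prime
to `d`. -/
theorem exists_exp [IsDomain O] [Q.IsPrime] {d M : ℕ} (hd : orderOf χ = d)
    (hdM : l - 1 = d * M) : ∃ u, u.Coprime d ∧ HasExp l Q χ (M * u) := by
  have hl := (Fact.out : l.Prime)
  have hpos : 0 < d * M := by have := hl.two_le; omega
  have hd0 : 0 < d := Nat.pos_of_mul_pos_right hpos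
  have hM0 : 0 < M := Nat.pos_of_mul_pos_left hpos
  obtain ⟨A, hA⟩ := HasExp.exists (Q := Q) χ
  have h1 : l - 1 ∣ A * d := by
    have := hA.pow d
    rw [← hd, pow_orderOf_eq_one, hd] at this
    exact this.dvd
  rw [hdM, mul_comm d M] at h1
  obtain ⟨u, rfl⟩ := Nat.dvd_of_mul_dvd_mul_right hd0 h1
  refine ⟨u, ?_, hA⟩
  set g := u.gcd d with hg
  have hg0 : 0 < g := Nat.gcd_pos_of_pos_right _ hd0
  obtain ⟨v, hv⟩ : g ∣ u := Nat.gcd_dvd_left _ _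
  obtain ⟨c, hc⟩ : g ∣ d := Nat.gcd_dvd_right _ _
  have h2 : χ ^ c = 1 := by
    refine (hA.pow c).eq_one ?_
    rw [hdM]
    refine ⟨v, ?_⟩
    rw [hv, hc]; ring
  have h3 : d ∣ c := by rw [← hd]; exact orderOf_dvd_of_pow_eq_one h2
  have hc0 : 0 < c := Nat.pos_of_ne_zero (by rintro rfl; omega)
  have := Nat.le_of_dvd hc0 h3
  show g = 1
  nlinarith

end

theorem ne_one_of_coprime {R : Type*} [CommGroup R] {χ η : R} {P q : ℕ}
    (hχ : orderOf χ = P) (hη : orderOf η = q) (h : P.Coprime q) (hP : 2 ≤ P) :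
    χ * η ≠ 1 := by
  intro h1
  have h2 : orderOf (χ * η) = P * q := by
    rw [(Commute.all _ _).orderOf_mul_eq_mul_orderOf_of_coprime (by rwa [hχ, hη]), hχ, hη]
  rw [h1, orderOf_one] at h2
  have := Nat.eq_one_of_mul_eq_one_right h2.symm
  omega

/-- With `q = 1 + P * e` and `0 < u < P`, the number of nonzero residues `v` modulo `q` with
`u / P + v / q < 1` is `(P - u) * e`; the factor `w` only permutes the residues. -/
theorem card_filter_units (q P e u : ℕ) (hq : q.Prime) (hqe : q = 1 + P * e) (hu0 : 0 < u)
    (hu : u < P) (w : (ZMod q)ˣ) [NeZero q] :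
    (Finset.univ.filter fun k : (ZMod q)ˣ =>
      u * q + P * ((w * k : (ZMod q)ˣ) : ZMod q).val < P * q).card = (P - u) * e := by
  have := Fact.mk hq
  have h1 : (Finset.univ.filter fun k : (ZMod q)ˣ =>
      u * q + P * ((w * k : (ZMod q)ˣ) : ZMod q).val < P * q).card =
      (Finset.univ.filter fun k : (ZMod q)ˣ => u * q + P * (k : ZMod q).val < P * q).card := by
    refine Finset.card_bij (fun k _ => w * k) ?_ ?_ ?_
    · intro k hk; simpa using hk
    · intro k _ k' _ h; exact mul_left_cancel h
    · intro k hk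
      refine ⟨w⁻¹ * k, ?_, by simp⟩
      rw [Finset.mem_filter] at hk ⊢
      rw [mul_inv_cancel_left]
      exact ⟨Finset.mem_univ _, hk.2⟩
  rw [h1]
  have hiff : ∀ v : ℕ, u * q + P * v < P * q ↔ v ≤ (P - u) * e := by
    intro v
    obtain ⟨d, rfl⟩ := Nat.exists_eq_add_of_lt hu
    rw [show u + d + 1 - u = d + 1 by omega, hqe]
    constructor
    · intro h
      by_contra hlt
      push Not at hlt
      nlinarith
    · intro h
      nlinarith
  simp_rw [hiff]
  have h2 : (P - u) * e < q := by
    rw [hqe]; have : (P - u) * e ≤ P * e := Nat.mul_le_mul_right _ (by omega)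
    omega
  trans (Finset.Icc 1 ((P - u) * e)).card
  · refine Finset.card_bij (fun k _ => (k : ZMod q).val) ?_ ?_ ?_
    · intro k hk
      rw [Finset.mem_filter] at hk
      rw [Finset.mem_Icc]
      refine ⟨Nat.pos_of_ne_zero ?_, hk.2⟩
      rw [Ne, ZMod.val_eq_zero]; exact k.ne_zero
    · intro k _ k' _ h
      exact Units.ext (ZMod.val_injective q h)
    · intro v hv
      rw [Finset.mem_Icc] at hv
      have hv0 : (v : ZMod q) ≠ 0 := by
        rw [Ne, ZMod.natCast_eq_zero_iff]
        intro h; have := Nat.le_of_dvd (by omega) h; omega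
      refine ⟨Units.mk0 (v : ZMod q) hv0, ?_, ?_⟩
      · rw [Finset.mem_filter]
        simp only [Units.val_mk0, ZMod.val_natCast, Finset.mem_univ, true_and]
        rw [Nat.mod_eq_of_lt (by omega)]; exact hv.2
      · simp only [Units.val_mk0, ZMod.val_natCast]
        rw [Nat.mod_eq_of_lt (by omega)]
  · simp

section
variable {l : ℕ} [Fact l.Prime] {O : Type*} [CommRing O] [IsDomain O] [CharZero O]
  (Q : Ideal O) [Q.IsPrime] [CharP (O ⧸ Q) l]
  {χ η : MulChar (ZMod l) O} {P q e K : ℕ}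

/-- If `χ` has exponent `(l - 1) u / P` at `Q`, then `∏ J(χ, η ^ k)` over the units `k` modulo `q`
behaves at `Q` like `l ^ ((P - u) * e)`. -/
theorem prod_X_locAssoc (hχ : orderOf χ = P) (hη : orderOf η = q) (hP : 2 ≤ P) (hq : q.Prime)
    (hqe : q = 1 + P * e) (hl : l - 1 = P * q * K) [NeZero q] {u : ℕ} (hu0 : 0 < u) (huP : u < P)
    (hu : HasExp l Q χ (q * K * u)) :
    LocAssoc Q (∏ k : (ZMod q)ˣ, jacobiSum χ (η ^ (k : ZMod q).val)) ((l : O) ^ ((P - u) * e)) := by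
  have := Fact.mk hq
  have hK : 0 < K := by
    have := (Fact.out : l.Prime).two_le
    refine Nat.pos_of_ne_zero ?_; rintro rfl; omega
  obtain ⟨w, hw, hwe⟩ := exists_exp (Q := Q) (M := P * K) hη (by rw [hl]; ring)
  rw [← card_filter_units q P e u hq hqe hu0 huP (ZMod.unitOfCoprime w hw), Finset.card_filter,
    ← Finset.prod_pow_eq_pow_sum]
  refine LocAssoc.prod _ _ _ fun k _ => ?_
  set v := ((ZMod.unitOfCoprime w hw * k : (ZMod q)ˣ) : ZMod q).val with hv
  have hv0 : 0 < v := Nat.pos_of_ne_zero (by rw [hv, Ne, ZMod.val_eq_zero]; exact Units.ne_zero _)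
  have hvq : v < q := ZMod.val_lt _
  have hke : HasExp l Q (η ^ (k : ZMod q).val) (P * K * v) := by
    refine (hwe.pow _).congr ?_
    rw [show l - 1 = P * K * q by rw [hl]; ring, mul_assoc (P * K)]
    refine Nat.ModEq.mul_left' _ ?_
    rw [← ZMod.natCast_eq_natCast_iff, hv]
    simp
  have hkP : 0 < P * K := by positivity
  have hqK : 0 < q * K := by have := hq.pos; positivity
  have hkη : orderOf (η ^ (k : ZMod q).val) = q := by
    rw [Nat.Coprime.orderOf_pow, hη]
    rw [hη]; exact (ZMod.val_coe_unit_coprime k).symm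
  have hcop : P.Coprime q := by rw [hqe]; simp
  have := hu.jacobiSum_locAssoc hke (by positivity) (by rw [hl]; nlinarith) (by positivity)
    (by rw [hl]; nlinarith) (by rw [Ne, ← orderOf_eq_one_iff, hχ]; omega)
    (by rw [Ne, ← orderOf_eq_one_iff, hkη]; exact hq.ne_one) (ne_one_of_coprime hχ hkη hcop hP)
  convert this using 3
  rw [hl]
  constructor
  · intro h; nlinarith
  · intro h
    refine lt_of_mul_lt_mul_left (a := K) ?_ (by positivity)
    linarith

/-- The partial products of `J(χ, χ ^ i)`. The exponent `c` of `l` is written without subtraction: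
`c = m - ⌊u (m + 1) / P⌋` counts the `i ≤ m` for which adding `u` to `u * i` modulo `P` causes no
carry. -/
theorem prod_G_locAssoc (hχ : orderOf χ = P) (hP : 2 ≤ P) {M : ℕ}
    (hl : l - 1 = P * M) {u : ℕ} (huP : u < P) (huc : u.Coprime P)
    (hu : HasExp l Q χ (M * u)) (m : ℕ) (hm : m + 1 < P) :
    ∃ c, c + u * (m + 1) / P = m ∧
      LocAssoc Q (∏ i ∈ Finset.Ico 1 (m + 1), jacobiSum χ (χ ^ i)) ((l : O) ^ c) := by
  have hM : 0 < M := by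
    have := (Fact.out : l.Prime).two_le
    refine Nat.pos_of_ne_zero ?_; rintro rfl; omega
  have hu0 : 0 < u := by
    refine Nat.pos_of_ne_zero ?_; rintro rfl
    rw [Nat.coprime_zero_left] at huc; omega
  induction m with
  | zero =>
    refine ⟨0, ?_, by simpa using LocAssoc.refl _⟩
    rw [zero_add, zero_add, mul_one, Nat.div_eq_of_lt huP]
  | succ m ih =>
    obtain ⟨c, hc, ih⟩ := ih (by omega)
    set v := u * (m + 1) % P with hv
    have hvP : v < P := Nat.mod_lt _ (by omega)
    have hv0 : 0 < v := by
      refine Nat.pos_of_ne_zero fun h => ?_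
      have := huc.symm.dvd_of_dvd_mul_left (Nat.dvd_of_mod_eq_zero h)
      have := Nat.le_of_dvd (by omega) this
      omega
    have he : HasExp l Q (χ ^ (m + 1)) (M * v) := by
      refine (hu.pow _).congr ?_
      rw [hl, mul_comm P M, mul_assoc]
      exact Nat.ModEq.mul_left' _ (Nat.mod_modEq _ _).symm
    have hpow : ∀ i, 0 < i → i < P → χ ^ i ≠ 1 := by
      intro i hi hiP h
      have := Nat.le_of_dvd hi (orderOf_dvd_of_pow_eq_one h)
      omega
    have hne : χ * χ ^ (m + 1) ≠ 1 := by
      rw [← pow_succ']; exact hpow _ (by omega) (by omega)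
    have hJ := hu.jacobiSum_locAssoc he (by positivity) (by rw [hl]; nlinarith) (by positivity)
      (by rw [hl]; nlinarith) (by simpa using hpow 1 (by omega) (by omega))
      (hpow _ (by omega) (by omega)) hne
    refine ⟨c + if M * u + M * v < l - 1 then 1 else 0, ?_, ?_⟩
    · have hdm := Nat.div_add_mod (u * (m + 1)) P
      have hiff : M * u + M * v < l - 1 ↔ u + v < P := by
        rw [hl]
        constructor
        · intro h; nlinarith
        · intro h; nlinarith
      have hue : u * (m + 1 + 1) = (u + v) + P * (u * (m + 1) / P) := by rw [← hv] at hdm; linarith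
      rw [hue, Nat.add_mul_div_left _ _ (by omega)]
      by_cases h : u + v < P
      · rw [if_pos (hiff.2 h), Nat.div_eq_of_lt h]; omega
      · rw [if_neg (hiff.not.2 h)]
        have h1 : (u + v) / P = 1 := by
          rw [Nat.div_eq_iff (by omega)]; omega
        rw [h1]; omega
    · rw [Finset.prod_Ico_succ_top (by omega), pow_add (l : O)]
      exact ih.mul hJ

/-- At a prime above `l`, the products `∏ J(χ, η ^ k)` and `(l * ∏ J(χ, χ ^ i)) ^ e` both behave
like `l ^ ((P - u) * e)`, where `(l - 1) u / P` is the exponent of `χ`. -/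
theorem X_G_locAssoc (hχ : orderOf χ = P) (hη : orderOf η = q) (hP : 3 ≤ P) (hq : q.Prime)
    (hqe : q = 1 + P * e) (hl : l - 1 = P * q * K) [NeZero q] :
    LocAssoc Q (∏ k : (ZMod q)ˣ, jacobiSum χ (η ^ (k : ZMod q).val))
      ((l * ∏ i ∈ Finset.Ico 1 (P - 1), jacobiSum χ (χ ^ i)) ^ e) := by
  obtain ⟨u', hu', hue'⟩ := exists_exp (Q := Q) (M := q * K) hχ (by rw [hl]; ring)
  set u := u' % P with hudef
  have huc : u.Coprime P := by
    rw [hudef, Nat.Coprime, ← Nat.gcd_rec, Nat.gcd_comm] ; exact hu'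
  have huP : u < P := Nat.mod_lt _ (by omega)
  have hu0 : 0 < u := by
    refine Nat.pos_of_ne_zero fun h => ?_
    rw [h, Nat.coprime_zero_left] at huc; omega
  have hu : HasExp l Q χ (q * K * u) := by
    refine hue'.congr ?_
    rw [hl, show P * q * K = q * K * P by ring]
    exact Nat.ModEq.mul_left' _ (Nat.mod_modEq _ _).symm
  refine (prod_X_locAssoc Q hχ hη (by omega) hq hqe hl hu0 huP hu).trans ?_
  obtain ⟨c, hc, hG⟩ := prod_G_locAssoc Q hχ (by omega) (by rw [hl]; ring) huP huc hu (P - 2)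
    (by omega)
  rw [show P - 2 + 1 = P - 1 by omega] at hc hG
  have hc' : P - u = 1 + c := by
    have h1 : u * (P - 1) / P = u - 1 := by
      clear_value u
      obtain ⟨u, rfl⟩ := Nat.exists_eq_succ_of_ne_zero hu0.ne'
      obtain ⟨P, rfl⟩ : ∃ R, P = R + 1 := ⟨P - 1, by omega⟩
      rw [Nat.div_eq_iff (by omega)]
      simp only [Nat.succ_eq_add_one, Nat.add_sub_cancel]
      exact ⟨by nlinarith, Nat.le_sub_one_of_lt (by nlinarith)⟩
    omega
  rw [pow_mul]
  refine LocAssoc.pow ?_ e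
  rw [hc', pow_add, pow_one]
  exact (LocAssoc.refl _).mul hG.symm

end

/-! ### The ratio of the two products; Gauss sums in characteristic `q` -/

section
variable {l : ℕ} [Fact l.Prime] {O : Type*} [CommRing O] [IsDomain O] [CharZero O]
  {χ η : MulChar (ZMod l) O} {P q e K : ℕ}

/-- The two products of Jacobi sums are associated at every maximal ideal; away from `l` both are
units. -/
theorem X_G_locAssoc' (hχ : orderOf χ = P) (hη : orderOf η = q) (hP : 3 ≤ P) (hq : q.Prime)
    (hqe : q = 1 + P * e) (hl : l - 1 = P * q * K) [NeZero q] (Q : Ideal O) (hQ : Q.IsMaximal) :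
    LocAssoc Q (∏ k : (ZMod q)ˣ, jacobiSum χ (η ^ (k : ZMod q).val))
      ((l * ∏ i ∈ Finset.Ico 1 (P - 1), jacobiSum χ (χ ^ i)) ^ e) := by
  have := Fact.mk hq
  by_cases hlQ : (l : O) ∈ Q
  · have : Nontrivial (O ⧸ Q) := Ideal.Quotient.nontrivial_iff.2 hQ.ne_top
    have : CharP (O ⧸ Q) l := charP_quotient hQ.ne_top Fact.out hlQ
    exact X_G_locAssoc Q hχ hη hP hq hqe hl
  · have hJ : ∀ φ : MulChar (ZMod l) O, φ ≠ 1 → χ * φ ≠ 1 → jacobiSum χ φ ∉ Q := by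
      intro φ hφ hχφ hmem
      apply hlQ
      rw [← jacobiSum_mul_inv l (χ := χ) (φ := φ) (by rw [Ne, ← orderOf_eq_one_iff, hχ]; omega) hφ
        hχφ]
      exact Q.mul_mem_right _ hmem
    have hcop : P.Coprime q := by rw [hqe]; simp
    refine LocAssoc.of_notMem ?_ ?_
    · rw [hQ.isPrime.prod_mem_iff]
      rintro ⟨k, -, hk⟩
      have hkη : orderOf (η ^ (k : ZMod q).val) = q := by
        rw [Nat.Coprime.orderOf_pow, hη]
        rw [hη]; exact (ZMod.val_coe_unit_coprime k).symm
      exact hJ _ (by rw [Ne, ← orderOf_eq_one_iff, hkη]; exact hq.ne_one)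
        (ne_one_of_coprime hχ hkη hcop (by omega)) hk
    · intro h
      rcases hQ.isPrime.mem_or_mem (hQ.isPrime.mem_of_pow_mem _ h) with h | h
      · exact hlQ h
      · rw [hQ.isPrime.prod_mem_iff] at h
        obtain ⟨i, hi, h⟩ := h
        rw [Finset.mem_Ico] at hi
        have hpow : ∀ i, 0 < i → i < P → χ ^ i ≠ 1 := by
          intro i hi hiP h
          have := Nat.le_of_dvd hi (orderOf_dvd_of_pow_eq_one h)
          omega
        exact hJ _ (hpow i (by omega) (by omega))
          (by rw [← pow_succ']; exact hpow _ (by omega) (by omega)) h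

theorem norm_jacobiSum_sq (f : O →+* ℂ) {χ φ : MulChar (ZMod l) O} (hχ : χ ≠ 1) (hφ : φ ≠ 1)
    (hχφ : χ * φ ≠ 1) : ‖f (jacobiSum χ φ)‖ ^ 2 = l := by
  have h := congrArg f (jacobiSum_mul_inv l hχ hφ hχφ)
  have hstar : ∀ χ : MulChar (ZMod l) O, (χ⁻¹).ringHomComp f = (χ.ringHomComp f).ringHomComp (starRingEnd ℂ) := by
    intro χ
    have h1 : (χ⁻¹).ringHomComp f = (χ.ringHomComp f)⁻¹ := map_inv (MulChar.ringHomCompHom f) χ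
    rw [h1, ← MulChar.star_eq_inv]; rfl
  rw [map_mul, ← jacobiSum_ringHomComp χ⁻¹, hstar, hstar, jacobiSum_ringHomComp, jacobiSum_ringHomComp,
    Complex.mul_conj, Complex.normSq_eq_norm_sq, map_natCast] at h
  exact_mod_cast h

theorem norm_X_sq (f : O →+* ℂ) (hχ : orderOf χ = P) (hη : orderOf η = q) (hP : 3 ≤ P)
    (hq : q.Prime) (hqe : q = 1 + P * e) [NeZero q] :
    ‖f (∏ k : (ZMod q)ˣ, jacobiSum χ (η ^ (k : ZMod q).val))‖ ^ 2 = (l : ℝ) ^ (q - 1) := by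
  have hcop : P.Coprime q := by rw [hqe]; simp
  rw [map_prod, norm_prod, ← Finset.prod_pow, Finset.prod_eq_pow_card (b := (l : ℝ)),
    Finset.card_univ, ZMod.card_units_eq_totient, Nat.totient_prime hq]
  intro k _
  have hkη : orderOf (η ^ (k : ZMod q).val) = q := by
    rw [Nat.Coprime.orderOf_pow, hη]
    rw [hη]; exact (ZMod.val_coe_unit_coprime k).symm
  exact norm_jacobiSum_sq f (by rw [Ne, ← orderOf_eq_one_iff, hχ]; omega)
    (by rw [Ne, ← orderOf_eq_one_iff, hkη]; exact hq.ne_one)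
        (ne_one_of_coprime hχ hkη hcop (by omega))

theorem norm_G_sq (f : O →+* ℂ) (hχ : orderOf χ = P) (hP : 3 ≤ P) :
    ‖f (l * ∏ i ∈ Finset.Ico 1 (P - 1), jacobiSum χ (χ ^ i))‖ ^ 2 = (l : ℝ) ^ P := by
  have hpow : ∀ i, 0 < i → i < P → χ ^ i ≠ 1 := by
    intro i hi hiP h
    have := Nat.le_of_dvd hi (orderOf_dvd_of_pow_eq_one h)
    omega
  rw [map_mul, map_prod, norm_mul, norm_prod, mul_pow, ← Finset.prod_pow,
    Finset.prod_eq_pow_card (b := (l : ℝ)), Nat.card_Ico, map_natCast, Complex.norm_natCast,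
    ← pow_add]
  · congr 1; omega
  · intro i hi
    rw [Finset.mem_Ico] at hi
    exact norm_jacobiSum_sq f (by simpa using hpow 1 (by omega) (by omega))
      (hpow i (by omega) (by omega)) (by rw [← pow_succ']; exact hpow _ (by omega) (by omega))
end

open NumberField in
/-- The two products differ by a root of unity: they are associated, and their absolute values agree
at all complex embeddings, so Kronecker's theorem applies to the quotient. -/
theorem exists_root_of_unity (L : Type*) [Field L] [NumberField L] {l : ℕ} [Fact l.Prime]
    {χ η : MulChar (ZMod l) (𝓞 L)} {P q e K : ℕ} (hχ : orderOf χ = P) (hη : orderOf η = q)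
    (hP : 3 ≤ P) (hq : q.Prime)
    (hqe : q = 1 + P * e) (hl : l - 1 = P * q * K) [NeZero q] :
    ∃ u : 𝓞 L, (∃ N, 0 < N ∧ u ^ N = 1) ∧
     ∏ k : (ZMod q)ˣ, jacobiSum χ (η ^ (k : ZMod q).val) =
      (l * ∏ i ∈ Finset.Ico 1 (P - 1), jacobiSum χ (χ ^ i)) ^ e * u := by
  obtain ⟨u, hu⟩ := (associated_of_locAssoc _ _ (X_G_locAssoc' hχ hη hP hq hqe hl)).symm
  refine ⟨u, ?_, hu.symm⟩
  have hl0 : (l : ℝ) ≠ 0 := by exact_mod_cast (Fact.out : l.Prime).ne_zero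
  obtain ⟨N, hN, h⟩ := Embeddings.pow_eq_one_of_norm_eq_one L ℂ (x := ((u : 𝓞 L) : L))
    (RingOfIntegers.isIntegral_coe _) (by
      intro φ
      let f : 𝓞 L →+* ℂ := φ.comp (algebraMap (𝓞 L) L)
      have h1 := norm_X_sq f hχ hη hP hq hqe
      rw [← hu, map_mul, norm_mul, mul_pow, map_pow, norm_pow, ← pow_mul, mul_comm e 2, pow_mul,
        norm_G_sq f hχ hP, ← pow_mul, show P * e = q - 1 by omega] at h1
      have h2 : ‖f (u : 𝓞 L)‖ ^ 2 = 1 := by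
        have : (l : ℝ) ^ (q - 1) ≠ 0 := pow_ne_zero _ hl0
        field_simp at h1; exact h1
      exact (pow_eq_one_iff_of_nonneg (norm_nonneg (f (u : 𝓞 L))) two_ne_zero).1 h2)
  refine ⟨N, hN, ?_⟩
  apply RingOfIntegers.coe_injective
  simpa using h

/-- In characteristic `q ≡ 1 mod P`, Frobenius maps the Gauss sum `g(χ)` to `χ(q)⁻¹ g(χ)`. -/
theorem gaussSum_pow_sub_one {l : ℕ} [Fact l.Prime] {k : Type*} [Field k] {q P : ℕ} [Fact q.Prime]
    [CharP k q] {χ : MulChar (ZMod l) k} (hχ : orderOf χ = P) (hP : 1 < P) (hqP : P ∣ q - 1)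
    (hql : q ≠ l) {ψ : AddChar (ZMod l) k} (hψ : ψ.IsPrimitive) :
    χ q * gaussSum χ ψ ^ (q - 1) = 1 := by
  have hl := (Fact.out : l.Prime)
  have hq := (Fact.out : q.Prime)
  have h1 := gaussSum_frob q χ ψ
  -- `χ ^ q = χ` because `P ∣ q - 1`
  have hχq : χ ^ q = χ := by
    conv_lhs => rw [← Nat.sub_add_cancel hq.one_le, pow_succ,
      orderOf_dvd_iff_pow_eq_one.1 (hχ ▸ hqP), one_mul]
  have hu : IsUnit (q : ZMod l) := by
    rw [isUnit_iff_ne_zero, Ne, ZMod.natCast_eq_zero_iff, Nat.prime_dvd_prime_iff_eq hl hq]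
    exact hql.symm
  rw [hχq, AddChar.pow_mulShift] at h1
  have h2 := gaussSum_mulShift χ ψ hu.unit
  rw [hu.unit_spec, ← h1] at h2
  have h0 : gaussSum χ ψ ≠ 0 := by
    refine gaussSum_ne_zero_of_nontrivial ?_ ?_ hψ
    · rw [ZMod.card, Ne, CharP.cast_eq_zero_iff k q, Nat.prime_dvd_prime_iff_eq hq hl]
      exact hql
    · rw [Ne, ← orderOf_eq_one_iff, hχ]; omega
  apply mul_right_cancel₀ h0
  rw [mul_assoc, ← pow_succ, Nat.sub_add_cancel hq.one_le, h2, one_mul]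

/-- The right-hand product is `g(χ) ^ P` (as `χ(-1) = 1`), so its `e`-th power is
`g(χ) ^ (q - 1)`, which is `χ(q)⁻¹` in characteristic `q`. -/
theorem prod_jacobiSum_pow_eq {l : ℕ} [Fact l.Prime] {k : Type*} [Field k] {q P e : ℕ} [Fact q.Prime]
    [CharP k q] {χ : MulChar (ZMod l) k} (hχ : orderOf χ = P) (hP : 3 ≤ P) (hPodd : Odd P)
    (hqe : q = 1 + P * e) (hql : q ≠ l) :
    χ q * (l * ∏ i ∈ Finset.Ico 1 (P - 1), jacobiSum χ (χ ^ i)) ^ e = 1 := by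
  let f := algebraMap k (AlgebraicClosure k)
  have hl := (Fact.out : l.Prime)
  have hq := (Fact.out : q.Prime)
  have : CharP (AlgebraicClosure k) q := charP_of_injective_algebraMap f.injective q
  have : NeZero (l : AlgebraicClosure k) := ⟨by
    rw [Ne, CharP.cast_eq_zero_iff (AlgebraicClosure k) q, Nat.prime_dvd_prime_iff_eq hq hl]
    exact hql⟩
  obtain ⟨ζ, hζ⟩ := HasEnoughRootsOfUnity.exists_primitiveRoot (AlgebraicClosure k) l
  have hψ := AddChar.zmodChar_primitive_of_primitive_root l hζ
  set ψ := AddChar.zmodChar l ((IsPrimitiveRoot.iff_def ζ l).mp hζ).left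
  have hχ' : orderOf (χ.ringHomComp f) = P := by
    rw [← hχ]
    exact orderOf_injective (MulChar.ringHomCompHom f) (MulChar.injective_ringHomComp f.injective) χ
  have h1 := gaussSum_pow_sub_one hχ' (by omega) ⟨e, by omega⟩ hql hψ
  have h2 := gaussSum_pow_eq_prod_jacobiSum (χ := χ.ringHomComp f) (by omega) hψ
  rw [MulChar.val_neg_one_eq_one_of_odd_order hPodd (by rw [← hχ', pow_orderOf_eq_one]), hχ',
    one_mul, ZMod.card] at h2
  rw [show q - 1 = P * e by omega, pow_mul, h2] at h1
  apply f.injective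
  rw [map_mul, map_pow, map_mul, map_natCast f, map_prod, map_one, ← h1]
  have hJ : ∀ i, jacobiSum (χ.ringHomComp f) ((χ.ringHomComp f) ^ i) = f (jacobiSum χ (χ ^ i)) := by
    intro i
    rw [MulChar.ringHomComp_pow, jacobiSum_ringHomComp]
  simp_rw [hJ]
  rfl

/-! ### Determining the root of unity -/

/-- Reduction modulo a prime above `q` preserves the order of a character whose order `P` divides
`q - 1`. -/
theorem orderOf_ringHomComp_mk {l : ℕ} [Fact l.Prime] {O : Type*} [CommRing O] [IsDomain O]
    {Q : Ideal O} [Q.IsPrime] {q P : ℕ} (hqQ : (q : O) ∈ Q) (hq : q.Prime)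
    {χ : MulChar (ZMod l) O} (hχ : orderOf χ = P) (hP : 0 < P) (hPq : P ∣ q - 1) :
    orderOf (χ.ringHomComp (Ideal.Quotient.mk Q)) = P := by
  apply Nat.dvd_antisymm
  · apply orderOf_dvd_of_pow_eq_one
    rw [MulChar.ringHomComp_pow, ← hχ, pow_orderOf_eq_one, MulChar.ringHomComp_one]
  · rw [← hχ]
    apply orderOf_dvd_of_pow_eq_one
    rw [MulChar.eq_one_iff]
    intro x
    set m := orderOf (χ.ringHomComp (Ideal.Quotient.mk Q))
    have h1 : χ.ringHomComp (Ideal.Quotient.mk Q) ^ m = 1 := pow_orderOf_eq_one _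
    rw [MulChar.ringHomComp_pow, MulChar.eq_one_iff] at h1
    refine eq_of_sub_mem q Q hqQ P hP (hq.coprime_of_dvd_pred hPq) 1 (by simp) _ _ ?_ (by simp) ?_
    · rw [← MulChar.pow_apply_coe, pow_right_comm, ← hχ, pow_orderOf_eq_one, one_pow,
        MulChar.one_apply_coe, Nat.cast_one]
    · rw [← Ideal.Quotient.eq_zero_iff_mem, map_sub, map_one, sub_eq_zero]
      exact h1 x

/-- The ratio `u` of the two products is congruent to `χ(q)` modulo every prime above `q`: there `η`
becomes trivial, so each `J(χ, η ^ k)` reduces to `-1`, and there are `q - 1` of them. -/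
theorem sub_mem_of_prod_eq {l : ℕ} [Fact l.Prime] {O : Type*} [CommRing O] [IsDomain O]
    (Q : Ideal O) [hQ : Q.IsMaximal] {χ η : MulChar (ZMod l) O} {P q e : ℕ} (hχ : orderOf χ = P)
    (hη : orderOf η = q) (hP : 3 ≤ P) (hPodd : Odd P) (hq : q.Prime) (hqodd : Odd q)
    (hqQ : (q : O) ∈ Q) (hqe : q = 1 + P * e) (hql : q ≠ l) [NeZero q] {u : O}
    (h : ∏ k : (ZMod q)ˣ, jacobiSum χ (η ^ (k : ZMod q).val) =
      (l * ∏ i ∈ Finset.Ico 1 (P - 1), jacobiSum χ (χ ^ i)) ^ e * u) :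
    u - χ q ∈ Q := by
  have := Fact.mk hq
  let _ := Ideal.Quotient.field Q
  have := charP_quotient hQ.ne_top hq hqQ
  set f := Ideal.Quotient.mk Q with hf
  have hχ' : orderOf (χ.ringHomComp f) = P :=
    orderOf_ringHomComp_mk hqQ hq hχ (by omega) ⟨e, by omega⟩
  have hη' : ∀ m, (η ^ m).ringHomComp f = 1 := by
    intro m
    rw [← MulChar.ringHomComp_pow]
    suffices η.ringHomComp f = 1 by rw [this, one_pow]
    rw [MulChar.eq_one_iff]
    intro x
    have h1 : (η x) ^ q = 1 := by
      rw [← MulChar.pow_apply_coe, ← hη, pow_orderOf_eq_one, MulChar.one_apply_coe]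
    have h2 : (f (η x) - 1) ^ q = 0 := by
      rw [sub_pow_char, ← map_pow, h1, map_one, one_pow, sub_self]
    exact sub_eq_zero.1 (pow_eq_zero_iff hq.ne_zero |>.1 h2)
  have h1 := congrArg f h
  have hX : f (∏ k : (ZMod q)ˣ, jacobiSum χ (η ^ (k : ZMod q).val)) = 1 := by
    rw [map_prod, Finset.prod_eq_pow_card (b := -1)]
    · rw [Finset.card_univ, ZMod.card_units_eq_totient, Nat.totient_prime hq]
      exact (Nat.Odd.sub_odd hqodd odd_one).neg_one_pow
    · intro k _
      rw [← jacobiSum_ringHomComp, hη', jacobiSum_comm]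
      refine jacobiSum_one_nontrivial ?_
      rw [Ne, ← orderOf_eq_one_iff, hχ']; omega
  have h2 := prod_jacobiSum_pow_eq hχ' hP hPodd hqe hql
  have hJ : ∀ i, jacobiSum (χ.ringHomComp f) ((χ.ringHomComp f) ^ i) = f (jacobiSum χ (χ ^ i)) := by
    intro i
    rw [MulChar.ringHomComp_pow, jacobiSum_ringHomComp]
  simp_rw [hJ] at h2
  rw [hX, map_mul, map_pow, map_mul, map_natCast, map_prod] at h1
  rw [← Ideal.Quotient.eq_zero_iff_mem, map_sub, sub_eq_zero]
  change f u = (χ.ringHomComp f) q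
  calc f u = (χ.ringHomComp f q * (l * ∏ i ∈ Finset.Ico 1 (P - 1), f (jacobiSum χ (χ ^ i))) ^ e)
        * f u := by rw [h2, one_mul]
    _ = _ := by rw [mul_assoc, ← h1, mul_one]

open NumberField in
/-- Some power of the ratio of the two products is exactly `χ(q)`. The ratio is a root of unity
congruent to `χ(q)` modulo a prime above `q`; taking a suitable `q ^ k`-th power removes the
`q`-part of its order and leaves `χ(q)` unchanged, after which congruence implies equality. -/
theorem exists_prod_pow_eq (L : Type*) [Field L] [NumberField L] {l : ℕ} [Fact l.Prime]
    {χ η : MulChar (ZMod l) (𝓞 L)} {P q e K : ℕ} (hχ : orderOf χ = P) (hη : orderOf η = q)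
    (hP : 3 ≤ P) (hPodd : Odd P) (hq : q.Prime) (hqodd : Odd q)
    (hqe : q = 1 + P * e) (hl : l - 1 = P * q * K) [NeZero q] :
    ∃ N, (∏ k : (ZMod q)ˣ, jacobiSum χ (η ^ (k : ZMod q).val)) ^ N =
      ((l * ∏ i ∈ Finset.Ico 1 (P - 1), jacobiSum χ (χ ^ i)) ^ e) ^ N * χ q := by
  obtain ⟨u, ⟨N, hN, hu⟩, h⟩ := exists_root_of_unity L hχ hη hP hq hqe hl
  have hlp := (Fact.out : l.Prime)
  have hql : q ≠ l := by
    rintro rfl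
    have h1 : 0 < K := Nat.pos_of_ne_zero (by rintro rfl; have := hq.two_le; omega)
    have h2 : 0 < q := hq.pos
    have : q ≤ P * q * K := by
      calc q = 1 * q * 1 := by ring
        _ ≤ P * q * K := by gcongr <;> omega
    omega
  obtain ⟨Q, hQ, hqQ⟩ : ∃ Q : Ideal (𝓞 L), Q.IsMaximal ∧ (q : 𝓞 L) ∈ Q := by
    have hnu : ¬ IsUnit (q : 𝓞 L) := by
      intro hu
      rw [NumberField.isUnit_iff_norm] at hu
      have h1 : ((q : 𝓞 L) : L) = algebraMap ℚ L q := by simp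
      rw [RingOfIntegers.coe_norm, h1, Algebra.norm_algebraMap, abs_pow, Nat.abs_cast] at hu
      have := (pow_eq_one_iff_of_nonneg (by positivity) (Module.finrank_pos.ne')).1 hu
      exact hq.ne_one (by exact_mod_cast this)
    obtain ⟨Q, hQ, hle⟩ := exists_max_ideal_of_mem_nonunits hnu
    exact ⟨Q, hQ, hle⟩
  have hmem := sub_mem_of_prod_eq Q hχ hη hP hPodd hq hqodd hqQ hqe hql h
  have hPq : P ∣ q - 1 := ⟨e, by omega⟩
  have hχq : (χ q) ^ P = 1 := by
    have hqu : IsUnit (q : ZMod l) := by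
      rw [isUnit_iff_ne_zero, Ne, ZMod.natCast_eq_zero_iff, Nat.prime_dvd_prime_iff_eq hlp hq]
      exact hql.symm
    rw [← hqu.unit_spec, ← MulChar.pow_apply_coe, ← hχ, pow_orderOf_eq_one, MulChar.one_apply_coe]
  obtain ⟨k, N', hN', rfl⟩ := Nat.exists_eq_pow_mul_and_not_dvd hN.ne' q hq.ne_one
  have hN'0 : 0 < N' := Nat.pos_of_ne_zero (by rintro rfl; simp at hN')
  have hχqk : (χ q) ^ (q ^ k) = χ q := by
    have h1 : q ^ k ≡ 1 [MOD P] := by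
      have : q ≡ 1 [MOD P] := by rw [hqe]; simp [Nat.ModEq]
      simpa using this.pow k
    conv_rhs => rw [← pow_one (χ q)]
    exact pow_eq_pow_of_modEq h1 hχq
  refine ⟨q ^ k, ?_⟩
  rw [h, mul_pow]
  congr 1
  refine eq_of_sub_mem q Q hqQ (N' * P) (by positivity)
    (Nat.Coprime.mul_right ((Nat.Prime.coprime_iff_not_dvd hq).2 hN')
      (hq.coprime_of_dvd_pred hPq)) 1 (by simp) _ _ ?_ ?_ ?_
  · rw [← pow_mul, ← mul_assoc, pow_mul, hu, one_pow, Nat.cast_one]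
  · rw [mul_comm, pow_mul, hχq, one_pow, Nat.cast_one]
  · rw [← hχqk]
    exact Q.mem_of_dvd (sub_dvd_pow_sub_pow _ _ _) hmem

/-! ### The norm equation -/

/-- A character of order `p ^ (m + 1)` takes a primitive value on any element that is not a `p`-th
power. -/
theorem isPrimitiveRoot_mulChar_apply {l : ℕ} [Fact l.Prime] {O : Type*} [CommRing O]
    {χ : MulChar (ZMod l) O} {p m : ℕ} (hp : p.Prime) (hχ : orderOf χ = p ^ (m + 1))
    (a : (ZMod l)ˣ) (ha : ∀ c : ZMod l, c ^ p ≠ a) : IsPrimitiveRoot (χ a) (p ^ (m + 1)) := by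
  have := Fact.mk hp
  have hpow : ∀ x : (ZMod l)ˣ, (χ x) ^ p ^ (m + 1) = 1 := by
    intro x
    rw [← MulChar.pow_apply_coe, ← hχ, pow_orderOf_eq_one, MulChar.one_apply_coe]
  rw [IsPrimitiveRoot.iff_orderOf]
  refine orderOf_eq_prime_pow ?_ (hpow a)
  intro h
  obtain ⟨g, hg⟩ := IsCyclic.exists_generator (α := (ZMod l)ˣ)
  obtain ⟨t, ht⟩ := (mem_powers_iff_mem_zpowers).2 (hg a)
  simp only at ht
  have hgo : orderOf (χ g) = p ^ (m + 1) := by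
    refine orderOf_eq_prime_pow ?_ (hpow g)
    intro h0
    have : χ ^ (p ^ m) = 1 := by
      rw [MulChar.eq_one_iff]
      intro x
      obtain ⟨i, hi⟩ := (mem_powers_iff_mem_zpowers).2 (hg x)
      simp only at hi
      rw [← hi, MulChar.pow_apply_coe, Units.val_pow_eq_pow_val, map_pow, pow_right_comm, h0, one_pow]
    have h1 := orderOf_dvd_of_pow_eq_one this
    rw [hχ] at h1
    have := (Nat.pow_dvd_pow_iff_le_right hp.one_lt).1 h1
    omega
  rw [← ht, Units.val_pow_eq_pow_val, map_pow, ← pow_mul] at h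
  have h2 := orderOf_dvd_of_pow_eq_one h
  rw [hgo, pow_succ, mul_comm t] at h2
  obtain ⟨c, rfl⟩ := Nat.dvd_of_mul_dvd_mul_left (pow_pos hp.pos m) h2
  refine ha ((g ^ c : (ZMod l)ˣ) : ZMod l) ?_
  rw [← ht, ← Units.val_pow_eq_pow_val, ← pow_mul, mul_comm c p]

/-- Products over a finite abelian group, arranged along the cosets of `⟨x⟩` with representatives
in `T`. -/
theorem exists_transversal {U : Type*} [CommGroup U] [Fintype U] (x : U) :
    ∃ T : Finset U, ∀ {M : Type} [CommMonoid M] (F : U → M),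
      ∏ k, F k = ∏ i ∈ Finset.range (orderOf x), ∏ c ∈ T, F (x ^ i * c) := by
  classical
  obtain ⟨S, hS, -⟩ := (Subgroup.zpowers x).exists_isComplement_left 1
  refine ⟨Finset.univ.filter (· ∈ S), fun F => ?_⟩
  rw [← Finset.prod_product']
  symm
  have hx := isOfFinOrder_of_finite x
  refine Finset.prod_bij (fun a _ => x ^ a.1 * a.2) (fun _ _ => Finset.mem_univ _) ?_ ?_
    (fun _ _ => rfl)
  · rintro ⟨i, c⟩ h ⟨i', c'⟩ h' heq
    simp only [Finset.mem_product, Finset.mem_range, Finset.mem_filter, Finset.mem_univ,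
      true_and] at h h' heq
    have h1 := @hS.1 (⟨c, h.2⟩, ⟨x ^ i, Subgroup.npow_mem_zpowers x i⟩)
      (⟨c', h'.2⟩, ⟨x ^ i', Subgroup.npow_mem_zpowers x i'⟩)
      (by simpa only [mul_comm c, mul_comm c'] using heq)
    simp only [Prod.mk.injEq, Subtype.mk.injEq] at h1
    have e := pow_inj_mod.1 h1.2
    rw [Nat.mod_eq_of_lt h.1, Nat.mod_eq_of_lt h'.1] at e
    rw [h1.1, e]
  · intro k _
    obtain ⟨⟨⟨c, hc⟩, ⟨z, hz⟩⟩, h⟩ := hS.2 k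
    obtain ⟨i, rfl⟩ := (mem_powers_iff_mem_zpowers).2 hz
    refine ⟨(i % orderOf x, c), ?_, ?_⟩
    · simp only [Finset.mem_product, Finset.mem_range, Finset.mem_filter, Finset.mem_univ,
        true_and]
      exact ⟨Nat.mod_lt _ hx.orderOf_pos, hc⟩
    · simp only [pow_mod_orderOf]
      rw [mul_comm]; exact h

open NumberField in
/-- In `L = ℚ(ζ_{Pq})`, with `s` the automorphism of order `p ^ r` fixing `ζ_P` and raising `ζ_q` to
the power `j`, some primitive `P`-th root of unity is a norm from `L` to the fixed field
of `s`. -/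
theorem exists_norm_eq_of_isCyclotomicExtension (p q n r j : ℕ) (hp : p.Prime) (hq : q.Prime)
    (hpodd : Odd p) (hqodd : Odd q) (hpq : p ≠ q) (hrn : r ≤ n) (hj : orderOf (j : ZMod q) = p ^ r)
    (hdvd : p ^ n ∣ q - 1) (L : Type) [Field L] [NumberField L] (P : ℕ) (hPdef : P = p ^ (n - r))
    [IsCyclotomicExtension {P * q} ℚ L] :
    ∃ (s : L ≃ₐ[ℚ] L) (ζq ζ' y : L),
      IsPrimitiveRoot ζq q ∧ IsPrimitiveRoot ζ' P ∧ s ζq = ζq ^ j ∧ s ζ' = ζ' ∧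
      ∏ i ∈ Finset.range (p ^ r), (s ^ i) y = ζ' := by
  have := Fact.mk hp
  have := Fact.mk hq
  have hPpos : 0 < P := hPdef ▸ pow_pos hp.pos _
  have hcop : P.Coprime q := hPdef ▸ ((Nat.coprime_primes hp hq).2 hpq).pow_left _
  have hnz : NeZero (P * q) := ⟨(Nat.mul_pos hPpos hq.pos).ne'⟩
  have hnzP : NeZero P := ⟨hPpos.ne'⟩
  have hjq : IsUnit (j : ZMod q) := by
    rw [isUnit_iff_ne_zero]
    intro h
    rw [h, orderOf_zero] at hj
    exact (pow_pos hp.pos r).ne hj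
  have hjc : j.Coprime q := (ZMod.isUnit_iff_coprime j q).1 hjq
  have hζ := IsCyclotomicExtension.zeta_spec (P * q) ℚ L
  set ζ : L := IsCyclotomicExtension.zeta (P * q) ℚ L
  have hζq : IsPrimitiveRoot (ζ ^ P) q := hζ.pow (Nat.pos_of_ne_zero hnz.out) rfl
  have hζP : IsPrimitiveRoot (ζ ^ q) P := hζ.pow (Nat.pos_of_ne_zero hnz.out) (mul_comm _ _)
  -- `s` corresponds to `c ≡ 1 mod P`, `c ≡ j mod q`
  obtain ⟨c, hc1, hcj⟩ := Nat.chineseRemainder hcop 1 j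
  have hcc : c.Coprime (P * q) := by
    refine Nat.Coprime.mul_right ?_ ?_
    · rw [Nat.Coprime, hc1.gcd_eq]; exact Nat.coprime_one_left P
    · rw [Nat.Coprime, hcj.gcd_eq]; exact hjc
  let s : L ≃ₐ[ℚ] L := (IsCyclotomicExtension.Rat.galEquivZMod (P * q) L).symm
    (ZMod.unitOfCoprime c hcc)
  have hs : ∀ x : L, x ^ (P * q) = 1 → s x = x ^ c := by
    intro x hx
    rw [IsCyclotomicExtension.Rat.galEquivZMod_apply_of_pow_eq (P * q) L s hx]
    simp only [s, MulEquiv.apply_symm_apply, ZMod.coe_unitOfCoprime, ZMod.val_natCast]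
    exact pow_eq_pow_of_modEq (Nat.mod_modEq _ _) hx
  have hsP : ∀ x : L, x ^ P = 1 → s x = x := by
    intro x hx
    rw [hs x (by rw [pow_mul, hx, one_pow]), pow_eq_pow_of_modEq hc1 hx, pow_one]
  have hsq : ∀ x : L, x ^ q = 1 → s x = x ^ j := by
    intro x hx
    rw [hs x (by rw [mul_comm, pow_mul, hx, one_pow]), pow_eq_pow_of_modEq hcj hx]
  -- if `n = r`, then `P = 1` and `y = 1` works
  rcases Nat.eq_zero_or_pos (n - r) with h0 | hpos
  · refine ⟨s, ζ ^ P, 1, 1, hζq, ?_,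
      hsq _ hζq.pow_eq_one, map_one _, by simp⟩
    rw [hPdef, h0, pow_zero]; exact IsPrimitiveRoot.one
  obtain ⟨m, hm⟩ : ∃ m, n - r = m + 1 := ⟨n - r - 1, by omega⟩
  have hp3 : 3 ≤ p := by
    obtain ⟨k, hk⟩ := hpodd
    have := hp.two_le
    omega
  have hP3 : 3 ≤ P := by
    calc 3 ≤ p := hp3
      _ = p ^ 1 := (pow_one p).symm
      _ ≤ P := hPdef ▸ Nat.pow_le_pow_right hp.pos hpos
  have hPodd : Odd P := hPdef ▸ hpodd.pow
  obtain ⟨f, hf⟩ := hdvd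
  have hpn : p ^ n = P * p ^ r := by rw [hPdef, ← pow_add, Nat.sub_add_cancel hrn]
  -- this is where `p ^ n ∣ q - 1` enters: the exponent `e = (q - 1) / P` is divisible by `p ^ r`
  have hqe : q = 1 + P * (p ^ r * f) := by
    rw [hpn, mul_assoc] at hf; have h1 := hq.pos; rw [← hf]; omega
  obtain ⟨l, hl, hDl, hlq⟩ := exists_prime_not_pow p q (P * q) hp hq hpodd
    (Nat.pos_of_ne_zero hnz.out) (dvd_mul_of_dvd_left (hPdef ▸ dvd_pow_self p hpos.ne') _)
    (dvd_mul_left _ _)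
  obtain ⟨K, hK⟩ := hDl
  have := Fact.mk hl
  obtain ⟨χ, hχ⟩ := MulChar.exists_mulChar_orderOf (ZMod l) (n := P)
    (by rw [ZMod.card, hK, mul_assoc]; exact dvd_mul_right _ _) hζP.toInteger_isPrimitiveRoot
  obtain ⟨η, hη⟩ := MulChar.exists_mulChar_orderOf (ZMod l) (n := q)
    (by rw [ZMod.card, hK, mul_right_comm]; exact dvd_mul_left _ _) hζq.toInteger_isPrimitiveRoot
  obtain ⟨N, hN⟩ := exists_prod_pow_eq L hχ hη hP3 hPodd hq hqodd hqe hK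
  set G : 𝓞 L := l * ∏ i ∈ Finset.Ico 1 (P - 1), jacobiSum χ (χ ^ i) with hG
  let F : (ZMod q)ˣ → 𝓞 L := fun k => jacobiSum χ (η ^ (k : ZMod q).val)
  have hG0 : G ≠ 0 := by
    obtain ⟨φ⟩ : Nonempty (L →+* ℂ) := inferInstance
    intro h
    have h1 := norm_G_sq (φ.comp (algebraMap (𝓞 L) L)) hχ hP3
    rw [← hG, h, map_zero, norm_zero, zero_pow two_ne_zero] at h1
    exact (pow_pos (by exact_mod_cast hl.pos) P).ne h1
  let sO : 𝓞 L →+* 𝓞 L := RingOfIntegers.mapRingHom (s : L →+* L)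
  have hsO : ∀ x : 𝓞 L, ((sO x : 𝓞 L) : L) = s x := fun x => rfl
  have hsχ : χ.ringHomComp sO = χ := by
    refine MulChar.ext fun x => RingOfIntegers.ext ?_
    rw [MulChar.ringHomComp_apply, hsO]
    apply hsP
    have : χ x ^ P = 1 := by
      rw [← MulChar.pow_apply_coe, ← hχ, pow_orderOf_eq_one, MulChar.one_apply_coe]
    exact_mod_cast congrArg (algebraMap (𝓞 L) L) this
  have hsη : η.ringHomComp sO = η ^ j := by
    refine MulChar.ext fun x => RingOfIntegers.ext ?_
    rw [MulChar.ringHomComp_apply, hsO, MulChar.pow_apply_coe]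
    refine (hsq _ ?_).trans rfl
    have : η x ^ q = 1 := by
      rw [← MulChar.pow_apply_coe, ← hη, pow_orderOf_eq_one, MulChar.one_apply_coe]
    exact_mod_cast congrArg (algebraMap (𝓞 L) L) this
  have hsG : sO G = G := by
    rw [hG, map_mul, map_natCast, map_prod]
    congr 1
    refine Finset.prod_congr rfl fun i _ => ?_
    rw [← jacobiSum_ringHomComp, ← MulChar.ringHomComp_pow, hsχ]
  obtain ⟨J, hJ⟩ := hjq
  have hJo : orderOf J = p ^ r := by rw [← orderOf_units, hJ, hj]
  -- `s` permutes the factors of the first product along multiplication by `j`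
  have hsF : ∀ k, sO (F k) = F (J * k) := by
    intro k
    simp only [F]
    rw [← jacobiSum_ringHomComp, ← MulChar.ringHomComp_pow, hsχ, hsη, ← pow_mul]
    congr 1
    rw [pow_eq_pow_iff_modEq, hη, ← ZMod.natCast_eq_natCast_iff]
    simp [hJ]
  have hsFi : ∀ i k, (s ^ i) (F k : L) = (F (J ^ i * k) : L) := by
    intro i
    induction i with
    | zero => intro k; simp
    | succ i ih =>
      intro k
      rw [pow_succ, AlgEquiv.mul_apply, ← hsO, hsF, ih, pow_succ, mul_assoc]
  have hsGi : ∀ i, (s ^ i) (G : L) = G := by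
    intro i
    induction i with
    | zero => simp
    | succ i ih => rw [pow_succ, AlgEquiv.mul_apply, ← hsO, hsG, ih]
  obtain ⟨T, hT⟩ := exists_transversal J
  have hqu : IsUnit (q : ZMod l) := by
    rw [isUnit_iff_ne_zero]
    intro h
    exact hlq 0 (by rw [h, zero_pow hp.ne_zero])
  have hχq : IsPrimitiveRoot (χ q) P := by
    rw [hPdef, hm]
    exact isPrimitiveRoot_mulChar_apply hp (by rw [hχ, hPdef, hm]) hqu.unit hlq
  have hχqL : IsPrimitiveRoot ((χ q : 𝓞 L) : L) P :=
    hχq.map_of_injective RingOfIntegers.coe_injective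
  refine ⟨s, ζ ^ P, (χ q : 𝓞 L),
    ((∏ c ∈ T, (F c : L)) / (G : L) ^ f) ^ N, hζq, hχqL,
      hsq _ hζq.pow_eq_one, hsP _ hχqL.pow_eq_one, ?_⟩
  have hGL : (G : L) ≠ 0 := by
    intro h; exact hG0 (RingOfIntegers.coe_injective (by rw [map_zero]; exact h))
  have h1 : ∀ i, (s ^ i) (((∏ c ∈ T, (F c : L)) / (G : L) ^ f) ^ N) =
      ((∏ c ∈ T, (F (J ^ i * c) : L)) / (G : L) ^ f) ^ N := by
    intro i
    rw [map_pow, map_div₀, map_prod, map_pow, hsGi]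
    simp_rw [hsFi]
  simp_rw [h1]
  rw [Finset.prod_pow, Finset.prod_div_distrib, ← hJo, ← hT (fun k => (F k : L)), div_pow,
    Finset.prod_const, Finset.card_range, hJo, ← pow_mul, pow_mul ((G : L) ^ f),
    ← pow_mul (G : L), mul_comm f,
    div_eq_iff (pow_ne_zero _ (pow_ne_zero _ hGL))]
  have := congrArg (algebraMap (𝓞 L) L) hN
  rw [map_mul, map_pow, map_prod, map_pow, map_pow] at this
  rw [mul_comm]
  exact this

/-- The norm equation in a concrete cyclotomic field. -/
theorem exists_cyclotomic_norm_eq (p q n r j : ℕ) (hp : p.Prime) (hq : q.Prime) (hpodd : Odd p)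
    (hqodd : Odd q) (hpq : p ≠ q) (hrn : r ≤ n) (hj : orderOf (j : ZMod q) = p ^ r)
    (hdvd : p ^ n ∣ q - 1) :
    ∃ (L : Type) (_ : Field L) (_ : NumberField L) (s : L ≃ₐ[ℚ] L) (ζq ζ' y : L),
      IsCyclotomicExtension {p ^ (n - r) * q} ℚ L ∧
      IsPrimitiveRoot ζq q ∧ IsPrimitiveRoot ζ' (p ^ (n - r)) ∧ s ζq = ζq ^ j ∧ s ζ' = ζ' ∧
      ∏ i ∈ Finset.range (p ^ r), (s ^ i) y = ζ' := by
  have hnz : NeZero (p ^ (n - r) * q) := ⟨(Nat.mul_pos (pow_pos hp.pos _) hq.pos).ne'⟩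
  have hnzℚ : NeZero ((p ^ (n - r) * q : ℕ) : ℚ) := NeZero.charZero
  have : @IsCyclotomicExtension {p ^ (n - r) * q} ℚ (CyclotomicField (p ^ (n - r) * q) ℚ) _ _
      DivisionRing.toRatAlgebra := by
    convert CyclotomicField.isCyclotomicExtension (p ^ (n - r) * q) ℚ using 1
    · rfl
    · exact Subsingleton.elim (α := Algebra ℚ (CyclotomicField (p ^ (n - r) * q) ℚ)) _ _
  obtain ⟨s, ζq, ζ', y, h⟩ := exists_norm_eq_of_isCyclotomicExtension p q n r j hp hq hpodd hqodd
    hpq hrn hj hdvd (CyclotomicField (p ^ (n - r) * q) ℚ) _ rfl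
  exact ⟨_, _, inferInstance, s, ζq, ζ', y, this, h⟩

/-! ### The group and its faithful irreducible representations -/

open CategoryTheory in
/-- A simple object of `FDRep ℂ G` has no nontrivial invariant subspaces. -/
theorem FDRep.eq_bot_or_eq_top_of_simple {G : Type} [Group G] (τ : FDRep ℂ G) [Simple τ]
    (S : Submodule ℂ τ) (hS : ∀ g, ∀ x ∈ S, τ.ρ g x ∈ S) : S = ⊥ ∨ S = ⊤ := by
  let ρS : Representation ℂ G S :=
    { toFun := fun g => (τ.ρ g).restrict (hS g)
      map_one' := by ext x; simp
      map_mul' := fun g h => by ext x; simp }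
  let f : FDRep.of ρS ⟶ τ :=
    { hom := FGModuleCat.ofHom S.subtype
      comm := fun g => by ext x; rfl }
  have hfm : Mono f := by
    apply ConcreteCategory.mono_of_injective
    exact S.injective_subtype
  by_cases h : f = 0
  · left
    rw [eq_bot_iff]
    intro x hx
    have h1 : f ⟨x, hx⟩ = (0 : FDRep.of ρS ⟶ τ) ⟨x, hx⟩ := by rw [h]
    exact h1
  · right
    have := isIso_of_mono_of_nonzero h
    rw [eq_top_iff]
    intro x _
    have hb : Function.Bijective f := ConcreteCategory.bijective_of_isIso f
    obtain ⟨y, rfl⟩ := hb.2 x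
    exact y.2

section
variable {M : Type*} [Monoid M] {a b : M} {j : ℕ}

theorem pow_mul_pow_of_mul_eq (h : b * a = a ^ j * b) (k i : ℕ) :
    b ^ k * a ^ i = a ^ (j ^ k * i) * b ^ k := by
  have h1 : ∀ i, b * a ^ i = a ^ (j * i) * b := by
    intro i
    have : SemiconjBy b a (a ^ j) := h
    rw [(this.pow_right i).eq, pow_mul]
  induction k generalizing i with
  | zero => simp
  | succ k ih => rw [pow_succ, mul_assoc, h1, ← mul_assoc, ih, mul_assoc, pow_succ j,
      mul_assoc (j ^ k)]

end

section
variable {G : Type*} [Group G] {a b : G} {j : ℕ}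

/-- Normal form `a ^ i * b ^ k` for the elements of the group. -/
theorem exists_eq_pow_mul_pow [Finite G] (h : b * a = a ^ j * b)
    (hgen : Subgroup.closure {a, b} = ⊤) (g : G) : ∃ i k : ℕ, g = a ^ i * b ^ k := by
  have hg : g ∈ Subgroup.closure {a, b} := hgen ▸ Subgroup.mem_top g
  rw [← SetLike.mem_coe, ← Subgroup.coe_toSubmonoid, Subgroup.closure_toSubmonoid_of_finite] at hg
  induction hg using Submonoid.closure_induction with
  | mem x hx =>
    rcases hx with rfl | rfl
    · exact ⟨1, 0, by simp⟩
    · exact ⟨0, 1, by simp⟩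
  | one => exact ⟨0, 0, by simp⟩
  | mul x y _ _ hx hy =>
    obtain ⟨i, k, rfl⟩ := hx
    obtain ⟨i', k', rfl⟩ := hy
    refine ⟨i + j ^ k * i', k + k', ?_⟩
    rw [mul_assoc, ← mul_assoc (b ^ k), pow_mul_pow_of_mul_eq h, pow_add, pow_add]
    simp only [mul_assoc]

theorem modEq_of_pow_mul_pow_eq (hc : (orderOf a).Coprime (orderOf b)) {i k i' k' : ℕ}
    (h : a ^ i * b ^ k = a ^ i' * b ^ k') :
    i ≡ i' [MOD orderOf a] ∧ k ≡ k' [MOD orderOf b] := by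
  have h1 : (a ^ i')⁻¹ * a ^ i = b ^ k' * (b ^ k)⁻¹ := by
    rw [inv_mul_eq_iff_eq_mul, ← mul_assoc, ← h, mul_inv_cancel_right]
  have hd : Disjoint (Subgroup.zpowers a) (Subgroup.zpowers b) := by
    apply Subgroup.disjoint_of_coprime_natCard
    rwa [Nat.card_zpowers, Nat.card_zpowers]
  have h2 : (a ^ i')⁻¹ * a ^ i = 1 := by
    refine Subgroup.disjoint_def.1 hd ?_ ?_
    · exact mul_mem (inv_mem (Subgroup.npow_mem_zpowers _ _)) (Subgroup.npow_mem_zpowers _ _)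
    · rw [h1]
      exact mul_mem (Subgroup.npow_mem_zpowers _ _) (inv_mem (Subgroup.npow_mem_zpowers _ _))
  rw [h2] at h1
  rw [inv_mul_eq_one] at h2
  exact ⟨(pow_eq_pow_iff_modEq.1 h2).symm, (pow_eq_pow_iff_modEq.1 (mul_inv_eq_one.1 h1.symm)).symm⟩

/-- The universal property of the presentation
`⟨a, b | a ^ orderOf a = b ^ orderOf b = 1, b a = a ^ j b⟩`, for coprime orders. -/
theorem exists_monoidHom [Finite G] (h : b * a = a ^ j * b)
    (hgen : Subgroup.closure {a, b} = ⊤) (hc : (orderOf a).Coprime (orderOf b))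
    {M : Type*} [Monoid M] {A B : M} (hAB : B * A = A ^ j * B) (hA : A ^ orderOf a = 1)
    (hB : B ^ orderOf b = 1) : ∃ f : G →* M, f a = A ∧ f b = B := by
  choose e d hed using exists_eq_pow_mul_pow h hgen
  have key : ∀ i k, A ^ e (a ^ i * b ^ k) * B ^ d (a ^ i * b ^ k) = A ^ i * B ^ k := by
    intro i k
    obtain ⟨h1, h2⟩ := modEq_of_pow_mul_pow_eq hc (hed (a ^ i * b ^ k)).symm
    rw [pow_eq_pow_of_modEq h1 hA, pow_eq_pow_of_modEq h2 hB]
  refine ⟨⟨⟨fun g => A ^ e g * B ^ d g, ?_⟩, ?_⟩, ?_, ?_⟩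
  · simpa using key 0 0
  · intro x y
    obtain ⟨i, k, rfl⟩ := exists_eq_pow_mul_pow h hgen x
    obtain ⟨i', k', rfl⟩ := exists_eq_pow_mul_pow h hgen y
    have : a ^ i * b ^ k * (a ^ i' * b ^ k') = a ^ (i + j ^ k * i') * b ^ (k + k') := by
      rw [mul_assoc, ← mul_assoc (b ^ k), pow_mul_pow_of_mul_eq h, pow_add, pow_add]
      simp only [mul_assoc]
    simp only
    rw [this, key, key, key, mul_assoc, ← mul_assoc (B ^ k), pow_mul_pow_of_mul_eq hAB, pow_add,
      pow_add]
    simp only [mul_assoc]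
  · simpa using key 1 0
  · simpa using key 0 1

theorem sum_eq_sum_pow_mul_pow [Fintype G] (h : b * a = a ^ j * b)
    (hgen : Subgroup.closure {a, b} = ⊤) (hc : (orderOf a).Coprime (orderOf b))
    {M : Type*} [AddCommMonoid M] (F : G → M) :
    ∑ g, F g = ∑ i ∈ Finset.range (orderOf a), ∑ k ∈ Finset.range (orderOf b),
      F (a ^ i * b ^ k) := by
  rw [← Finset.sum_product']
  symm
  refine Finset.sum_bij (fun x _ => a ^ x.1 * b ^ x.2) (fun _ _ => Finset.mem_univ _) ?_ ?_
    (fun _ _ => rfl)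
  · rintro ⟨i, k⟩ h1 ⟨i', k'⟩ h2 heq
    simp only [Finset.mem_product, Finset.mem_range] at h1 h2
    obtain ⟨e1, e2⟩ := modEq_of_pow_mul_pow_eq hc heq
    rw [Prod.mk.injEq]
    exact ⟨e1.eq_of_lt_of_lt h1.1 h2.1, e2.eq_of_lt_of_lt h1.2 h2.2⟩
  · intro g _
    obtain ⟨i, k, rfl⟩ := exists_eq_pow_mul_pow h hgen g
    refine ⟨(i % orderOf a, k % orderOf b), ?_, by simp only [pow_mod_orderOf]⟩
    simp only [Finset.mem_product, Finset.mem_range]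
    exact ⟨Nat.mod_lt _ (orderOf_pos a), Nat.mod_lt _ (orderOf_pos b)⟩

end

/-- The character of a faithful irreducible representation: it vanishes off `⟨a, b ^ R⟩`, and there
it is the sum of the `R` conjugates of a faithful character of `⟨a⟩ × ⟨b ^ R⟩`. The space has an
eigenbasis of `a` permuted cyclically by `b`, and `b ^ R` is central, hence scalar. -/
theorem exists_trace_eq {G : Type*} [Group G] [Finite G] {a b : G} {q R P j : ℕ} (hq : q.Prime)
    (hR : 0 < R) (ha : orderOf a = q) (hb : orderOf b = R * P) (hab : a * b = b * a ^ j)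
    (hj : orderOf (j : ZMod q) = R) (hgen : Subgroup.closure {a, b} = ⊤)
    {V : Type*} [AddCommGroup V] [Module ℂ V] [FiniteDimensional ℂ V]
    (ρ : G →* Module.End ℂ V) (hρ : Function.Injective ρ)
    (hirr : ∀ S : Submodule ℂ V, (∀ g, ∀ x ∈ S, ρ g x ∈ S) → S = ⊥ ∨ S = ⊤) :
    ∃ α μ : ℂ, IsPrimitiveRoot α q ∧ IsPrimitiveRoot μ P ∧
      (∀ i k : ℕ, ¬ R ∣ k → LinearMap.trace ℂ V (ρ (a ^ i * b ^ k)) = 0) ∧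
      ∀ i k : ℕ, LinearMap.trace ℂ V (ρ (a ^ i * b ^ (R * k))) =
        ∑ t ∈ Finset.range R, (α ^ j ^ t) ^ i * μ ^ k := by
  have ha1 : ρ a ≠ 1 := by
    intro h
    rw [← map_one ρ] at h
    rw [hρ h, orderOf_one] at ha
    exact hq.one_lt.ne ha
  have hV : Nontrivial V := by
    by_contra h
    rw [not_nontrivial_iff_subsingleton] at h
    exact ha1 (Subsingleton.elim _ _)
  -- it suffices to test invariance on the generators
  have hirr' : ∀ S : Submodule ℂ V, (∀ x ∈ S, ρ a x ∈ S) → (∀ x ∈ S, ρ b x ∈ S) → S ≠ ⊥ →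
      S = ⊤ := by
    intro S h1 h2 h3
    refine (hirr S fun g => ?_).resolve_left h3
    have hg : g ∈ Subgroup.closure {a, b} := hgen ▸ Subgroup.mem_top g
    rw [← SetLike.mem_coe, ← Subgroup.coe_toSubmonoid, Subgroup.closure_toSubmonoid_of_finite] at hg
    induction hg using Submonoid.closure_induction with
    | mem x hx =>
      rcases hx with rfl | rfl
      · exact h1
      · exact h2
    | one => intro x hx; simpa using hx
    | mul x y _ _ hx hy =>
      intro u hu
      rw [map_mul]
      exact hx _ (hy _ hu)
  have habk : ∀ t i, a ^ i * b ^ t = b ^ t * a ^ (j ^ t * i) := by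
    intro t
    have h1 : ∀ i, a ^ i * b = b * a ^ (j * i) := by
      intro i
      have : SemiconjBy b (a ^ j) a := hab.symm
      rw [pow_mul, (this.pow_right i).eq]
    induction t with
    | zero => intro i; simp
    | succ t ih => intro i; rw [pow_succ, ← mul_assoc, ih, mul_assoc, h1, mul_assoc, pow_succ' j,
        mul_assoc]
  have hjR : j ^ R ≡ 1 [MOD q] := by
    rw [← ZMod.natCast_eq_natCast_iff, Nat.cast_pow, ← hj, pow_orderOf_eq_one, Nat.cast_one]
  have hza : Commute a (b ^ R) := by
    have := habk R 1
    rw [pow_one, mul_one, pow_eq_pow_of_modEq hjR (ha ▸ pow_orderOf_eq_one a), pow_one] at this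
    exact this
  have hzb : Commute b (b ^ R) := Commute.self_pow b R
  obtain ⟨μ, hμ⟩ := Module.End.exists_eigenvalue (ρ (b ^ R))
  have hinv : ∀ (g : G), Commute g (b ^ R) → ∀ x ∈ Module.End.eigenspace (ρ (b ^ R)) μ,
      ρ g x ∈ Module.End.eigenspace (ρ (b ^ R)) μ := by
    intro g hg x hx
    rw [Module.End.mem_eigenspace_iff] at hx ⊢
    rw [← Module.End.mul_apply, ← map_mul, ← hg.eq, map_mul, Module.End.mul_apply, hx, map_smul]
  have hz : ∀ x, ρ (b ^ R) x = μ • x := by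
    intro x
    have := hirr' _ (hinv a hza) (hinv b hzb) hμ
    rw [← Module.End.mem_eigenspace_iff, this]
    trivial
  have hzk : ∀ k x, ρ (b ^ (R * k)) x = μ ^ k • x := by
    intro k
    induction k with
    | zero => simp
    | succ k ih =>
      intro x
      rw [mul_add, mul_one, pow_add, map_mul, Module.End.mul_apply, hz, map_smul, ih, smul_smul,
        pow_succ']
  have hzo : orderOf (b ^ R) = P := by
    rw [orderOf_pow_of_dvd hR.ne' (hb ▸ dvd_mul_right _ _), hb, Nat.mul_div_cancel_left _ hR]
  have hμP : IsPrimitiveRoot μ P := by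
    obtain ⟨x, hx⟩ := exists_ne (0 : V)
    constructor
    · have := hzk P x
      rw [← hb, pow_orderOf_eq_one, map_one, Module.End.one_apply] at this
      by_contra h
      have h2 : (μ ^ P - 1) • x = 0 := by rw [sub_smul, ← this, one_smul, sub_self]
      rcases smul_eq_zero.1 h2 with h3 | h3
      · exact h (sub_eq_zero.1 h3)
      · exact hx h3
    · intro l hl
      rw [← hzo]
      apply orderOf_dvd_of_pow_eq_one
      apply hρ
      rw [map_one, ← pow_mul]
      ext x
      rw [hzk, hl, one_smul, Module.End.one_apply]
  have hS1 : ¬ Module.End.HasEigenvalue (ρ a) 1 := by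
    intro h1
    refine ha1 ?_
    have := hirr' (Module.End.eigenspace (ρ a) 1) ?_ ?_ h1
    · ext x
      have hx : x ∈ Module.End.eigenspace (ρ a) 1 := this ▸ Submodule.mem_top
      rw [Module.End.mem_eigenspace_iff] at hx
      rw [hx, one_smul, Module.End.one_apply]
    · intro x hx
      rw [Module.End.mem_eigenspace_iff] at hx ⊢
      rw [hx, map_smul, hx]
    · intro x hx
      rw [Module.End.mem_eigenspace_iff, one_smul] at hx ⊢
      have hk : ∀ k : ℕ, ρ (a ^ k) x = x := by
        intro k
        induction k with
        | zero => simp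
        | succ k ih => rw [pow_succ, map_mul, Module.End.mul_apply, hx, ih]
      rw [← Module.End.mul_apply, ← map_mul, hab, map_mul, Module.End.mul_apply, hk]
  obtain ⟨α, hα⟩ := Module.End.exists_eigenvalue (ρ a)
  have hα1 : α ≠ 1 := by rintro rfl; exact hS1 hα
  obtain ⟨v, hv⟩ := hα.exists_hasEigenvector
  have hav : ∀ i : ℕ, ρ (a ^ i) v = α ^ i • v := by
    intro i
    rw [map_pow, hv.pow_apply]
  have := Fact.mk hq
  have hαq : IsPrimitiveRoot α q := by
    rw [IsPrimitiveRoot.iff_orderOf]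
    refine orderOf_eq_prime ?_ hα1
    have := hav q
    rw [← ha, pow_orderOf_eq_one, map_one, Module.End.one_apply] at this
    by_contra h
    have h2 : (α ^ orderOf a - 1) • v = 0 := by rw [sub_smul, ← this, one_smul, sub_self]
    rcases smul_eq_zero.1 h2 with h3 | h3
    · exact h (by rw [← ha]; exact sub_eq_zero.1 h3)
    · exact hv.2 h3
  let w : ℕ → V := fun t => ρ (b ^ t) v
  have haw : ∀ i t, ρ (a ^ i) (w t) = (α ^ j ^ t) ^ i • w t := by
    intro i t
    simp only [w]
    rw [← Module.End.mul_apply, ← map_mul, habk, map_mul, Module.End.mul_apply, hav, map_smul,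
      pow_mul]
  have hbw : ∀ k t, ρ (b ^ k) (w t) = w (k + t) := by
    intro k t
    simp only [w]
    rw [← Module.End.mul_apply, ← map_mul, pow_add]
  have hw0 : ∀ t, w t ≠ 0 := by
    intro t h
    apply hv.2
    have : ρ ((b ^ t)⁻¹ * b ^ t) v = 0 := by
      rw [map_mul, Module.End.mul_apply]
      exact (congrArg _ h).trans (map_zero _)
    simpa using this
  have hαt : ∀ t t', α ^ j ^ t = α ^ j ^ t' → t ≡ t' [MOD R] := by
    intro t t' h
    have h1 : j ^ t ≡ j ^ t' [MOD q] := by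
      refine hαq.pow_inj (Nat.mod_lt _ hq.pos) (Nat.mod_lt _ hq.pos) ?_
      have e : ∀ x, α ^ (x % q) = α ^ x := fun x => by
        rw [hαq.eq_orderOf, pow_mod_orderOf]
      rw [e, e, h]
    rw [← ZMod.natCast_eq_natCast_iff, Nat.cast_pow, Nat.cast_pow] at h1
    obtain ⟨J, hJ⟩ : IsUnit (j : ZMod q) := by
      refine IsUnit.of_pow_eq_one ?_ hR.ne'
      rw [← hj, pow_orderOf_eq_one]
    rw [← hJ, ← Units.val_pow_eq_pow_val, ← Units.val_pow_eq_pow_val, Units.val_inj,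
      pow_eq_pow_iff_modEq, ← orderOf_units, hJ, hj] at h1
    exact h1
  let B0 : Fin R → V := fun t => w t
  have hli : LinearIndependent ℂ B0 := by
    refine Module.End.eigenvectors_linearIndependent' (ρ a) (fun t : Fin R => α ^ j ^ (t : ℕ)) ?_ B0 ?_
    · intro t t' h
      exact Fin.ext ((hαt _ _ h).eq_of_lt_of_lt t.2 t'.2)
    · intro t
      refine ⟨?_, hw0 t⟩
      rw [Module.End.mem_eigenspace_iff]
      simpa using haw 1 t
  have hmem : ∀ t, w t ∈ Submodule.span ℂ (Set.range B0) := by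
    intro t
    have h1 : w t = μ ^ (t / R) • B0 ⟨t % R, Nat.mod_lt _ hR⟩ := by
      simp only [B0]
      rw [← hzk, hbw, Nat.div_add_mod]
    rw [h1]
    exact Submodule.smul_mem _ _ (Submodule.subset_span ⟨_, rfl⟩)
  have hspan : Submodule.span ℂ (Set.range B0) = ⊤ := by
    apply hirr'
    · intro x hx
      induction hx using Submodule.span_induction with
      | mem x hx =>
        obtain ⟨t, rfl⟩ := hx
        have := haw 1 t
        rw [pow_one] at this
        simp only [B0]
        rw [this]
        exact Submodule.smul_mem _ _ (hmem _)
      | zero => rw [map_zero]; exact zero_mem _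
      | add x y _ _ hx hy => rw [map_add]; exact add_mem hx hy
      | smul c x _ hx => rw [map_smul]; exact Submodule.smul_mem _ _ hx
    · intro x hx
      induction hx using Submodule.span_induction with
      | mem x hx =>
        obtain ⟨t, rfl⟩ := hx
        have := hbw 1 t
        rw [pow_one] at this
        simp only [B0]
        rw [this]
        exact hmem _
      | zero => rw [map_zero]; exact zero_mem _
      | add x y _ _ hx hy => rw [map_add]; exact add_mem hx hy
      | smul c x _ hx => rw [map_smul]; exact Submodule.smul_mem _ _ hx
    · intro h
      have := hmem 0
      rw [h, Submodule.mem_bot] at this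
      exact hw0 0 this
  let B := Module.Basis.mk hli hspan.ge
  have hB : ∀ t, B t = w t := fun t => Module.Basis.mk_apply hli hspan.ge t
  have hcoord : ∀ t : Fin R, (B.coord t) ∘ₗ ρ a = (α ^ j ^ (t : ℕ)) • B.coord t := by
    intro t
    refine B.ext fun u => ?_
    rw [LinearMap.comp_apply, hB, ← pow_one a, haw, pow_one, map_smul, LinearMap.smul_apply, ← hB]
    by_cases h : u = t
    · rw [h]
    · rw [B.coord_apply, B.repr_self, Finsupp.single_apply, if_neg h, smul_zero, smul_zero]
  refine ⟨α, μ, hαq, hμP, ?_, ?_⟩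
  · intro i k hk
    rw [LinearMap.trace_eq_matrix_trace ℂ B, Matrix.trace]
    refine Finset.sum_eq_zero fun t _ => ?_
    rw [Matrix.diag_apply, LinearMap.toMatrix_apply, hB, map_mul, Module.End.mul_apply, hbw, haw,
      map_smul, Finsupp.smul_apply]
    have h1 := LinearMap.congr_fun (hcoord t) (w (k + t))
    have h2 := haw 1 (k + t)
    rw [pow_one, pow_one] at h2
    rw [LinearMap.comp_apply, h2, map_smul, LinearMap.smul_apply, smul_eq_mul, smul_eq_mul,
      ← sub_eq_zero, ← sub_mul, mul_eq_zero, sub_eq_zero] at h1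
    rcases h1 with h1 | h1
    · exfalso
      apply hk
      have := hαt _ _ h1
      exact (Nat.modEq_zero_iff_dvd).1 (Nat.ModEq.add_right_cancel' (t : ℕ) (by simpa using this))
    · rw [B.coord_apply] at h1
      rw [h1, smul_zero]
  · intro i k
    rw [LinearMap.trace_eq_matrix_trace ℂ B, Matrix.trace, Finset.sum_range]
    refine Finset.sum_congr rfl fun t _ => ?_
    rw [Matrix.diag_apply, LinearMap.toMatrix_apply, hB, map_mul, Module.End.mul_apply, hzk,
      map_smul, haw, ← hB, map_smul, map_smul, B.repr_self, Finsupp.smul_apply, Finsupp.smul_apply,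
      Finsupp.single_eq_same, smul_eq_mul, smul_eq_mul, mul_one, mul_comm]

/-! ### Embeddings, orthogonality and the twisted multiplication operator -/

/-- An embedding of `ℚ(ζ_{Pq})` into `ℂ` is determined by the images of `ζ_P` and `ζ_q`, which can
be prescribed independently as `P` and `q` are coprime. -/
theorem existsUnique_algHom {L : Type} [Field L] [NumberField L] {P q : ℕ} (hP : 0 < P)
    (hq : 0 < q) (hc : P.Coprime q) [IsCyclotomicExtension {P * q} ℚ L] {ζ ζ' : L}
    (hζ : IsPrimitiveRoot ζ q) (hζ' : IsPrimitiveRoot ζ' P) {α μ : ℂ}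
    (hα : IsPrimitiveRoot α q) (hμ : IsPrimitiveRoot μ P) :
    ∃! φ : L →ₐ[ℚ] ℂ, φ ζ = α ∧ φ ζ' = μ := by
  have : NeZero (P * q) := ⟨(Nat.mul_pos hP hq).ne'⟩
  have hmul : ∀ {K : Type} [Field K] {x y : K}, IsPrimitiveRoot x P → IsPrimitiveRoot y q →
      IsPrimitiveRoot (x * y) (P * q) := by
    intro K _ x y hx hy
    rw [IsPrimitiveRoot.iff_orderOf, (Commute.all x y).orderOf_mul_eq_mul_orderOf_of_coprime
      (by rwa [← hx.eq_orderOf, ← hy.eq_orderOf]), ← hx.eq_orderOf, ← hy.eq_orderOf]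
  let e := (hmul hζ' hζ).embeddingsEquivPrimitiveRoots ℂ
    (Polynomial.cyclotomic.irreducible_rat (Nat.mul_pos hP hq))
  have he : ∀ φ, (e φ : ℂ) = φ (ζ' * ζ) := fun φ => rfl
  have hμα : μ * α ∈ primitiveRoots (P * q) ℂ :=
    (mem_primitiveRoots (Nat.mul_pos hP hq)).2 (hmul hμ hα)
  refine ⟨e.symm ⟨_, hμα⟩, ?_, ?_⟩
  · have h := he (e.symm ⟨_, hμα⟩)
    rw [Equiv.apply_symm_apply] at h
    generalize e.symm ⟨_, hμα⟩ = φ at h ⊢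
    simp only [map_mul] at h
    have hφ : IsPrimitiveRoot (φ ζ) q := hζ.map_of_injective φ.injective
    have hφ' : IsPrimitiveRoot (φ ζ') P := hζ'.map_of_injective φ.injective
    have hα0 := hα.ne_zero hq.ne'
    have hφ0 := hφ'.ne_zero hP.ne'
    -- the ratio is both a `q`-th and a `P`-th root of unity
    have h1 : φ ζ / α = μ / φ ζ' := by
      rw [div_eq_div_iff hα0 hφ0, mul_comm, ← h]
    have h2 : φ ζ / α = 1 := by
      rw [← orderOf_eq_one_iff, ← Nat.dvd_one, ← hc]
      refine Nat.dvd_gcd (orderOf_dvd_of_pow_eq_one ?_) (orderOf_dvd_of_pow_eq_one ?_)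
      · rw [h1, div_pow, hμ.pow_eq_one, hφ'.pow_eq_one, div_one]
      · rw [div_pow, hφ.pow_eq_one, hα.pow_eq_one, div_one]
    rw [h2, eq_comm, div_eq_one_iff_eq hφ0] at h1
    exact ⟨(div_eq_one_iff_eq hα0).1 h2, h1.symm⟩
  · rintro φ ⟨h1, h2⟩
    rw [Equiv.eq_symm_apply]
    apply Subtype.ext
    rw [he, map_mul, h1, h2]

theorem sum_pow_eq_ite {x : ℂ} {m : ℕ} (hx : x ^ m = 1) :
    ∑ i ∈ Finset.range m, x ^ i = if x = 1 then (m : ℂ) else 0 := by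
  split_ifs with h
  · simp [h]
  · have := mul_neg_geom_sum x m
    rw [hx, sub_self, mul_eq_zero] at this
    exact this.resolve_left (sub_ne_zero.2 (Ne.symm h))

theorem sum_pow_mul_conj_pow {x α : ℂ} {m : ℕ} (hm : m ≠ 0) (hx : x ^ m = 1) (hα : α ^ m = 1) :
    ∑ i ∈ Finset.range m, x ^ i * (starRingEnd ℂ) (α ^ i) = if x = α then (m : ℂ) else 0 := by
  have h1 : (starRingEnd ℂ) α = α⁻¹ := by
    rw [Complex.inv_eq_conj (Complex.norm_eq_one_of_pow_eq_one hα hm)]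
  have h0 : α ≠ 0 := by
    rintro rfl
    rw [zero_pow hm] at hα
    exact zero_ne_one hα
  simp_rw [map_pow, h1, ← mul_pow]
  rw [sum_pow_eq_ite (by rw [mul_pow, hx, inv_pow, hα, inv_one, one_mul])]
  simp only [mul_inv_eq_one₀ h0]

/-- Orthogonality of characters of `ℤ/q × ℤ/P`: if every character `(α t, μ)` occurs exactly once
among the `(x φ, y φ)`, the inner product counts the index set `S`. -/
theorem sum_conj_eq {Φ T : Type*} [Fintype Φ] (S : Finset T) {q P : ℕ} (hq : q ≠ 0) (hP : P ≠ 0)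
    (x y : Φ → ℂ) (hx : ∀ φ, x φ ^ q = 1) (hy : ∀ φ, y φ ^ P = 1) (α : T → ℂ) (μ : ℂ)
    (hα : ∀ t, α t ^ q = 1) (hμ : μ ^ P = 1) (hu : ∀ t ∈ S, ∃! φ, x φ = α t ∧ y φ = μ) :
    ∑ i ∈ Finset.range q, ∑ k ∈ Finset.range P, (∑ φ, x φ ^ i * y φ ^ k) *
      (starRingEnd ℂ) (∑ t ∈ S, α t ^ i * μ ^ k) = q * P * S.card := by
  classical
  have h1 : ∀ i k, (∑ φ, x φ ^ i * y φ ^ k) * (starRingEnd ℂ) (∑ t ∈ S, α t ^ i * μ ^ k) =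
      ∑ t ∈ S, ∑ φ, (x φ ^ i * (starRingEnd ℂ) (α t ^ i)) * (y φ ^ k * (starRingEnd ℂ) (μ ^ k)) := by
    intro i k
    rw [map_sum, Finset.sum_mul_sum, Finset.sum_comm]
    refine Finset.sum_congr rfl fun t _ => Finset.sum_congr rfl fun φ _ => ?_
    rw [map_mul]; ring
  simp_rw [h1]
  have h2 : ∀ t ∈ S, ∑ φ, ∑ i ∈ Finset.range q, ∑ k ∈ Finset.range P,
      (x φ ^ i * (starRingEnd ℂ) (α t ^ i)) * (y φ ^ k * (starRingEnd ℂ) (μ ^ k)) = q * P := by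
    intro t ht
    obtain ⟨φ₀, h0, hφ₀⟩ := hu t ht
    have h3 : ∀ φ, ∑ i ∈ Finset.range q, ∑ k ∈ Finset.range P,
        (x φ ^ i * (starRingEnd ℂ) (α t ^ i)) * (y φ ^ k * (starRingEnd ℂ) (μ ^ k)) =
          if φ = φ₀ then (q : ℂ) * P else 0 := by
      intro φ
      rw [← Finset.sum_mul_sum, sum_pow_mul_conj_pow hq (hx φ) (hα t),
        sum_pow_mul_conj_pow hP (hy φ) hμ]
      have : φ = φ₀ ↔ x φ = α t ∧ y φ = μ := ⟨fun h => h ▸ h0, hφ₀ φ⟩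
      by_cases h4 : x φ = α t <;> by_cases h5 : y φ = μ <;> simp [this, h4, h5]
    simp_rw [h3]
    simp
  calc _ = ∑ t ∈ S, ∑ φ, ∑ i ∈ Finset.range q, ∑ k ∈ Finset.range P,
      (x φ ^ i * (starRingEnd ℂ) (α t ^ i)) * (y φ ^ k * (starRingEnd ℂ) (μ ^ k)) := by
        simp_rw [Finset.sum_comm (s := Finset.range P) (t := S),
          Finset.sum_comm (s := Finset.range P) (t := Finset.univ),
          Finset.sum_comm (s := Finset.range q) (t := S),
          Finset.sum_comm (s := Finset.range q) (t := Finset.univ)]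
    _ = _ := by rw [Finset.sum_congr rfl h2, Finset.sum_const, nsmul_eq_mul, mul_comm]

/-- The operator `B x = y * s x` is semilinear over `s`, hence satisfies the commutation relation with
multiplication by `ζ`, and its `R`-th power is multiplication by the norm of `y`. -/
theorem exists_linearMap {L : Type} [Field L] [NumberField L] {P q R j : ℕ} (hP : 0 < P)
    (hq : 0 < q) (hc : P.Coprime q) [IsCyclotomicExtension {P * q} ℚ L] {ζ ζ' y : L}
    (hζ : IsPrimitiveRoot ζ q) (hζ' : IsPrimitiveRoot ζ' P) (s : L ≃ₐ[ℚ] L)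
    (hsζ : s ζ = ζ ^ j) (hsζ' : s ζ' = ζ') (hjR : j ^ R ≡ 1 [MOD q])
    (hy : ∏ i ∈ Finset.range R, (s ^ i) y = ζ') :
    ∃ B : Module.End ℚ L, B * Algebra.lmul ℚ L ζ = Algebra.lmul ℚ L ζ ^ j * B ∧
      B ^ R = Algebra.lmul ℚ L ζ' := by
  have hsi : ∀ i, (s ^ i) ζ = ζ ^ j ^ i ∧ (s ^ i) ζ' = ζ' := by
    intro i
    induction i with
    | zero => simp
    | succ i ih =>
      rw [pow_succ, AlgEquiv.mul_apply, AlgEquiv.mul_apply, hsζ, hsζ', map_pow, ih.1, ← pow_mul,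
        pow_succ]
      exact ⟨rfl, ih.2⟩
  have hsR : ∀ x, (s ^ R) x = x := by
    intro x
    obtain ⟨φ⟩ : Nonempty (L →ₐ[ℚ] ℂ) := ⟨IsAlgClosed.lift⟩
    have hu := existsUnique_algHom hP hq hc hζ hζ' (hζ.map_of_injective φ.injective)
      (hζ'.map_of_injective φ.injective)
    have := hu.unique (y₁ := φ.comp (s ^ R : L ≃ₐ[ℚ] L)) (y₂ := φ) ?_ ⟨rfl, rfl⟩
    · exact φ.injective (AlgHom.congr_fun this x)
    · refine ⟨?_, ?_⟩
      · change φ ((s ^ R) ζ) = _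
        rw [(hsi R).1, pow_eq_pow_of_modEq hjR hζ.pow_eq_one, pow_one]; rfl
      · change φ ((s ^ R) ζ') = _
        rw [(hsi R).2]; rfl
  let B : Module.End ℚ L := Algebra.lmul ℚ L y * s.toLinearMap
  have hB : ∀ x, B x = y * s x := fun x => rfl
  refine ⟨B, ?_, ?_⟩
  · ext x
    rw [← map_pow]
    change y * s (ζ * x) = ζ ^ j * (y * s x)
    rw [map_mul, hsζ]
    ring
  · have hBk : ∀ k x, (B ^ k) x = (∏ i ∈ Finset.range k, (s ^ i) y) * (s ^ k) x := by
      intro k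
      induction k with
      | zero => simp
      | succ k ih =>
        intro x
        rw [pow_succ, Module.End.mul_apply, ih, hB, map_mul, Finset.prod_range_succ, pow_succ,
          AlgEquiv.mul_apply, mul_assoc]
    ext x
    rw [hBk, hy, hsR]
    rfl

/-! ### Multiplicity one -/

open CategoryTheory Finset

/-- Let `p, q` be distinct odd primes, `G = C_q ⋊ C_{p^n}` non-abelian
(presented by `a, b` with `a^q = b^{p^n} = 1`, `b a b⁻¹ = a^j`, `j` of order `p^r` mod `q`),
`τ` a faithful irreducible complex representation of `G`, and suppose `p^n ∣ q - 1`.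
Then there exists a finite-dimensional rational representation `σ` of `G` such that the
multiplicity `⟨ℂ ⊗_ℚ σ, τ⟩` (expressed via the character inner product) equals `1`. -/
theorem exists_rational_rep_multiplicity_one
    (p q n r : ℕ) (hp : p.Prime) (hq : q.Prime) (hpodd : Odd p) (hqodd : Odd q)
    (hpq : p ≠ q) (hn : 1 ≤ n) (hr0 : 0 < r) (hrn : r ≤ n) (hrdvd : p ^ r ∣ q - 1)
    (G : Type) [Group G] [Fintype G] (a b : G) (j : ℕ)
    (ha : orderOf a = q) (hb : orderOf b = p ^ n)
    (hba : b * a * b⁻¹ = a ^ j) (hj : orderOf (j : ZMod q) = p ^ r)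
    (hgen : Subgroup.closure {a, b} = ⊤)
    (τ : FDRep ℂ G) [Simple τ] (hτ : Function.Injective τ.ρ)
    (hdvd : p ^ n ∣ q - 1) :
    ∃ σ : FDRep ℚ G,
      (Fintype.card G : ℂ)⁻¹ *
          ∑ g : G, (σ.character g : ℂ) * (starRingEnd ℂ) (τ.character g) = 1 := by
  obtain ⟨L, _, _, s, ζ, ζ', y, hL, hζ, hζ', hsζ, hsζ', hy⟩ :=
    exists_cyclotomic_norm_eq p q n r j hp hq hpodd hqodd hpq hrn hj hdvd
  have hR : 0 < p ^ r := pow_pos hp.pos r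
  have hP : 0 < p ^ (n - r) := pow_pos hp.pos _
  have hpn : p ^ n = p ^ r * p ^ (n - r) := by rw [← pow_add, Nat.add_sub_cancel' hrn]
  generalize p ^ (n - r) = P at *
  have hcn : q.Coprime (p ^ n) := ((Nat.coprime_primes hq hp).2 hpq.symm).pow_right n
  generalize p ^ r = R at *
  rw [hpn] at hcn hb
  have hPq : P.Coprime q := (hcn.coprime_dvd_right (dvd_mul_left _ _)).symm
  have hcab : (orderOf a).Coprime (orderOf b) := by rwa [ha, hb]
  have hba' : b * a = a ^ j * b := by rw [← hba, inv_mul_cancel_right]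
  have hjR : j ^ R ≡ 1 [MOD q] := by
    rw [← ZMod.natCast_eq_natCast_iff, Nat.cast_pow, ← hj, pow_orderOf_eq_one, Nat.cast_one]
  -- `j ^ (R - 1)` is an inverse of `j` modulo `q`
  have hab : a * b = b * a ^ j ^ (R - 1) := by
    have h := pow_mul_pow_of_mul_eq hba' 1 (j ^ (R - 1))
    rw [pow_one, pow_one, mul_pow_sub_one hR.ne',
      pow_eq_pow_of_modEq hjR (ha ▸ pow_orderOf_eq_one a), pow_one] at h
    exact h.symm
  have hj' : orderOf ((j ^ (R - 1) : ℕ) : ZMod q) = R := by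
    rw [Nat.cast_pow, Nat.Coprime.orderOf_pow, hj]
    rw [hj]
    exact (Nat.coprime_self_sub_right hR).2 (Nat.coprime_one_right R)
  obtain ⟨α, μ, hα, hμ, hτ0, hτ1⟩ := exists_trace_eq hq hR ha hb hab hj' hgen τ.ρ hτ
    (FDRep.eq_bot_or_eq_top_of_simple τ)
  obtain ⟨B, hBA, hBR⟩ := exists_linearMap hP hq.pos hPq hζ hζ' s hsζ hsζ' hjR hy
  obtain ⟨ρ, hρa, hρb⟩ := exists_monoidHom hba' hgen hcab hBA
    (by rw [ha, ← map_pow, hζ.pow_eq_one, map_one])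
    (by rw [hb, pow_mul, hBR, ← map_pow, hζ'.pow_eq_one, map_one])
  refine ⟨FDRep.of (ρ : Representation ℚ G L), ?_⟩
  have hσ : ∀ i k : ℕ, (((FDRep.of (ρ : Representation ℚ G L)).character (a ^ i * b ^ (R * k)) : ℚ) : ℂ)
      = ∑ φ : L →ₐ[ℚ] ℂ, φ ζ ^ i * φ ζ' ^ k := by
    intro i k
    have h1 : (FDRep.of (ρ : Representation ℚ G L)).character (a ^ i * b ^ (R * k)) =
        Algebra.trace ℚ L (ζ ^ i * ζ' ^ k) := by
      change LinearMap.trace ℚ L (ρ (a ^ i * b ^ (R * k))) = _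
      rw [map_mul, map_pow, map_pow, hρa, hρb, pow_mul, hBR, ← map_pow, ← map_pow, ← map_mul]
      rfl
    rw [h1, ← eq_ratCast (algebraMap ℚ ℂ), trace_eq_sum_embeddings]
    simp only [map_mul, map_pow]
  have hcard : Fintype.card G = q * (R * P) := by
    have := sum_eq_sum_pow_mul_pow hba' hgen hcab (fun _ => 1)
    simpa [ha, hb] using this
  have hsum := sum_conj_eq (Φ := L →ₐ[ℚ] ℂ) (Finset.range R) hq.ne_zero hP.ne' (fun φ => φ ζ)
    (fun φ => φ ζ') (fun φ => by rw [← map_pow, hζ.pow_eq_one, map_one])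
    (fun φ => by rw [← map_pow, hζ'.pow_eq_one, map_one])
    (fun t => α ^ (j ^ (R - 1)) ^ t) μ
    (fun t => by rw [← pow_mul, mul_comm, pow_mul, hα.pow_eq_one, one_pow]) hμ.pow_eq_one
    (fun t _ => by
      refine existsUnique_algHom hP hq.pos hPq hζ hζ' (hα.pow_of_coprime _ ?_) hμ
      refine Nat.Coprime.pow_left _ (Nat.Coprime.pow_left _ ?_)
      refine (ZMod.isUnit_iff_coprime j q).1 (IsUnit.of_pow_eq_one (n := R) ?_ hR.ne')
      rw [← hj, pow_orderOf_eq_one])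
  have hq0 : (q : ℂ) ≠ 0 := Nat.cast_ne_zero.2 hq.ne_zero
  have hR0 : (R : ℂ) ≠ 0 := Nat.cast_ne_zero.2 hR.ne'
  have hP0 : (P : ℂ) ≠ 0 := Nat.cast_ne_zero.2 hP.ne'
  rw [inv_mul_eq_iff_eq_mul₀ (Nat.cast_ne_zero.2 Fintype.card_ne_zero), mul_one, hcard,
    sum_eq_sum_pow_mul_pow hba' hgen hcab, ha, hb]
  rw [Finset.card_range] at hsum
  push_cast
  rw [mul_comm (R : ℂ), ← mul_assoc, ← hsum]
  refine Finset.sum_congr rfl fun i _ => ?_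
  -- only the exponents of `b` divisible by `R` contribute
  have himg : (Finset.range P).image (fun k => R * k) ⊆ Finset.range (R * P) := by
    intro k hk
    obtain ⟨t, ht, rfl⟩ := Finset.mem_image.1 hk
    exact Finset.mem_range.2 (Nat.mul_lt_mul_of_pos_left (Finset.mem_range.1 ht) hR)
  rw [← Finset.sum_subset himg, Finset.sum_image (fun _ _ _ _ h => Nat.eq_of_mul_eq_mul_left hR h)]
  · refine Finset.sum_congr rfl fun k _ => ?_
    rw [hσ]
    congr 2
    exact hτ1 i k
  · intro k hk hk'
    have : τ.character (a ^ i * b ^ k) = 0 := by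
      refine hτ0 i k ?_
      rintro ⟨k, rfl⟩
      refine hk' (Finset.mem_image_of_mem _ (Finset.mem_range.2 ?_))
      exact Nat.lt_of_mul_lt_mul_left (Finset.mem_range.1 hk)
    rw [this, map_zero, mul_zero]
end

section
/- Let τ be an irreducible complex representation of G that is not faithful. Then either the subgroup ⟨a⟩ ≅ C_q is contained in ker τ (so τ factors through the quotient G/⟨a⟩ ≅ C_{p^n}), or r < n and the central subgroup ⟨b^{p^{n−1}}⟩ of order p is contained in ker τ (so τ factors through a quotient isomorphic to the non-abelian group C_q ⋊ C_{p^{n−1}}). -/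
/-!
Let `K` be the kernel of `τ`, a nontrivial normal subgroup of `G`, and pick
`x = a ^ s * b ^ t ≠ 1` in `K` (`exists_normal_form`). The commutators of `x` with the
generators lie in `K` and are powers of `a`: `[x, a] = a ^ (j ^ t - 1)` and
`[b, x] = a ^ (s * (j - 1))`. If one of them is nontrivial, then `a ∈ K` because `a` has prime
order. Otherwise `j ^ t = 1` and, since `j ≠ 1`, `s = 0` modulo `q`. Hence `x = b ^ t` with
`p ^ r ∣ t` and `p ^ n ∤ t`, which forces `r < n`, and the nontrivial subgroup generated by `x`
in the cyclic `p`-group `⟨b⟩` contains its unique subgroup of order `p`.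
-/

open CategoryTheory Finset

lemma pow_gcd_orderOf_mem {G : Type*} [Group G] (K : Subgroup G) (g : G) (m : ℤ)
    (h : g ^ m ∈ K) : g ^ Int.gcd m (orderOf g) ∈ K := by
  rw [← zpow_natCast, Int.gcd_eq_gcd_ab, zpow_add, zpow_mul, zpow_mul, zpow_natCast,
    pow_orderOf_eq_one, one_zpow, mul_one]
  exact K.zpow_mem h _

lemma mem_of_zpow_mem_of_prime {G : Type*} [Group G] (K : Subgroup G) (a : G) (q : ℕ)
    (hq : q.Prime) (ha : orderOf a = q) (m : ℤ) (hm : ¬ (q : ℤ) ∣ m) (h : a ^ m ∈ K) :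
    a ∈ K := by
  have h1 := pow_gcd_orderOf_mem K a m h
  have h2 : Int.gcd m (orderOf a) = 1 := by
    rw [ha, Int.gcd_comm]
    exact Int.isCoprime_iff_gcd_eq_one.mp
      ((Prime.coprime_iff_not_dvd (Nat.prime_iff_prime_int.mp hq)).mpr hm)
  rwa [h2, pow_one] at h1

lemma pow_mul_pow_comm {G : Type*} [Group G] (a b : G) (j : ℕ) (hba : b * a * b⁻¹ = a ^ j)
    (t : ℕ) : b ^ t * a * (b ^ t)⁻¹ = a ^ j ^ t := by
  induction t with
  | zero => simp
  | succ t ih =>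
    calc b ^ (t + 1) * a * (b ^ (t + 1))⁻¹ = b * (b ^ t * a * (b ^ t)⁻¹) * b⁻¹ := by
          rw [pow_succ']; group
      _ = a ^ j ^ (t + 1) := by
          rw [ih, ← conj_pow, hba, ← pow_mul, pow_succ']

lemma exists_normal_form {G : Type*} [Group G] [Finite G] (a b : G) (j : ℕ)
    (hba : b * a * b⁻¹ = a ^ j) (hgen : Subgroup.closure {a, b} = ⊤) (x : G) :
    ∃ s t : ℕ, x = a ^ s * b ^ t := by
  have hx : x ∈ Submonoid.closure {a, b} := by
    rw [← Subgroup.closure_toSubmonoid_of_finite, hgen]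
    trivial
  induction hx using Submonoid.closure_induction_right with
  | one => exact ⟨0, 0, by simp⟩
  | mul_right x _ y hy ih =>
    obtain ⟨s, t, rfl⟩ := ih
    rcases hy with rfl | rfl
    · refine ⟨s + j ^ t, t, ?_⟩
      rw [pow_add, ← pow_mul_pow_comm _ _ _ hba t]
      group
    · exact ⟨s, t + 1, by rw [pow_succ, mul_assoc]⟩

/-- The theorem for an arbitrary nontrivial normal subgroup in place of the kernel of a
representation. -/
lemma normal_subgroup_alternative (p q n r : ℕ) (hp : p.Prime) (hq : q.Prime) (hr0 : 0 < r)
    {G : Type*} [Group G] [Finite G] (a b : G) (j : ℕ)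
    (ha : orderOf a = q) (hb : orderOf b = p ^ n)
    (hba : b * a * b⁻¹ = a ^ j) (hj : orderOf (j : ZMod q) = p ^ r)
    (hgen : Subgroup.closure {a, b} = ⊤) (K : Subgroup G) [hK : K.Normal] (hne : K ≠ ⊥) :
    a ∈ K ∨ (r < n ∧ b ^ p ^ (n - 1) ∈ K) := by
  by_cases haK : a ∈ K
  · exact Or.inl haK
  right
  obtain ⟨x, hxK, hx1⟩ := K.bot_or_exists_ne_one.resolve_left hne
  obtain ⟨s, t, rfl⟩ := exists_normal_form a b j hba hgen x
  have key : ∀ m : ℤ, a ^ m ∈ K → (q : ℤ) ∣ m := fun m hm => by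
    by_contra h
    exact haK (mem_of_zpow_mem_of_prime K a q hq ha m h hm)
  -- the commutator of `x` with `a`
  have h1 : a ^ ((j : ℤ) ^ t - 1) ∈ K := by
    have h := K.mul_mem hxK (hK.conj_mem _ (K.inv_mem hxK) a)
    have e : a ^ s * b ^ t * (a * (a ^ s * b ^ t)⁻¹ * a⁻¹)
        = a ^ s * (b ^ t * a * (b ^ t)⁻¹) * (a ^ s)⁻¹ * a⁻¹ := by group
    rw [e, pow_mul_pow_comm a b j hba t] at h
    convert h using 1
    rw [(Commute.refl a).pow_pow s (j ^ t) |>.eq, mul_inv_cancel_right, zpow_sub, zpow_one,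
      ← zpow_natCast a (j ^ t), Nat.cast_pow]
  have hjt : (j : ZMod q) ^ t = 1 := by
    have := (ZMod.intCast_zmod_eq_zero_iff_dvd _ q).mpr (key _ h1)
    push_cast at this
    exact sub_eq_zero.mp this
  have hrt : p ^ r ∣ t := hj ▸ orderOf_dvd_of_pow_eq_one hjt
  -- the commutator of `b` with `x`
  have h2 : a ^ ((s : ℤ) * ((j : ℤ) - 1)) ∈ K := by
    have h := K.mul_mem (hK.conj_mem _ hxK b) (K.inv_mem hxK)
    have e : b * (a ^ s * b ^ t) * b⁻¹ * (a ^ s * b ^ t)⁻¹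
        = (b * a ^ s * b⁻¹) * (a ^ s)⁻¹ := by group
    rw [e, ← conj_pow, hba] at h
    convert h using 1
    rw [mul_sub, mul_one, zpow_sub, ← pow_mul, zpow_natCast, ← Nat.cast_mul, zpow_natCast,
      mul_comm s j]
  have hj1 : ¬ (q : ℤ) ∣ (j : ℤ) - 1 := fun h => by
    have h' := (ZMod.intCast_zmod_eq_zero_iff_dvd _ q).mpr h
    push_cast at h'
    rw [sub_eq_zero.mp h', orderOf_one] at hj
    exact (Nat.one_lt_pow hr0.ne' hp.one_lt).ne hj
  have has : a ^ s = 1 := by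
    have h := ((Nat.prime_iff_prime_int.mp hq).dvd_or_dvd (key _ h2)).resolve_right hj1
    exact orderOf_dvd_iff_pow_eq_one.mp (ha ▸ Int.natCast_dvd_natCast.mp h)
  rw [has, one_mul] at hxK hx1
  have hnt : ¬ p ^ n ∣ t := fun h => hx1 (orderOf_dvd_iff_pow_eq_one.mp (hb ▸ h))
  refine ⟨?_, ?_⟩
  · by_contra h
    exact hnt ((pow_dvd_pow p (not_lt.mp h)).trans hrt)
  · have hg := pow_gcd_orderOf_mem K b t (by rwa [zpow_natCast])
    rw [hb, Int.gcd_natCast_natCast] at hg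
    obtain ⟨k, hkn, hk⟩ := (Nat.dvd_prime_pow hp).mp (Nat.gcd_dvd_right t (p ^ n))
    have hlt : k ≠ n := by
      rintro rfl
      exact hnt (hk ▸ Nat.gcd_dvd_left t (p ^ k))
    rw [hk] at hg
    obtain ⟨c, hc⟩ := pow_dvd_pow p (show k ≤ n - 1 by omega)
    rw [hc, pow_mul]
    exact K.pow_mem hg c

/-- Let `p, q` be distinct odd primes, `G = C_q ⋊ C_{p^n}` non-abelian
(presented by `a, b` with `a^q = b^{p^n} = 1`, `b a b⁻¹ = a^j`, `j` of order `p^r` mod `q`).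
If `τ` is an irreducible complex representation of `G` that is not faithful, then either the
subgroup `⟨a⟩ ≅ C_q` lies in the kernel of `τ` (so `τ` factors through `G/⟨a⟩ ≅ C_{p^n}`),
or `r < n` and the central subgroup `⟨b^{p^{n-1}}⟩` of order `p` lies in the kernel of `τ`
(so `τ` factors through a quotient isomorphic to the non-abelian `C_q ⋊ C_{p^{n-1}}`). -/
theorem unfaithful_irreducible_kernel
    (p q n r : ℕ) (hp : p.Prime) (hq : q.Prime) (hpodd : Odd p) (hqodd : Odd q)
    (hpq : p ≠ q) (hn : 1 ≤ n) (hr0 : 0 < r) (hrn : r ≤ n) (hrdvd : p ^ r ∣ q - 1)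
    (G : Type) [Group G] [Fintype G] (a b : G) (j : ℕ)
    (ha : orderOf a = q) (hb : orderOf b = p ^ n)
    (hba : b * a * b⁻¹ = a ^ j) (hj : orderOf (j : ZMod q) = p ^ r)
    (hgen : Subgroup.closure {a, b} = ⊤)
    (τ : FDRep ℂ G) [Simple τ] (hτ : ¬ Function.Injective τ.ρ) :
    (∀ g ∈ Subgroup.zpowers a, τ.ρ g = 1) ∨
      (r < n ∧ ∀ g ∈ Subgroup.zpowers (b ^ p ^ (n - 1)), τ.ρ g = 1) := by
  have hne : MonoidHom.ker τ.ρ ≠ ⊥ := fun h => hτ ((MonoidHom.ker_eq_bot_iff _).mp h)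
  rcases normal_subgroup_alternative p q n r hp hq hr0 a b j ha hb hba hj hgen _ hne with
    h | ⟨hlt, h⟩
  · exact Or.inl fun g hg => MonoidHom.mem_ker.mp (Subgroup.zpowers_le.mpr h hg)
  · exact Or.inr ⟨hlt, fun g hg => MonoidHom.mem_ker.mp (Subgroup.zpowers_le.mpr h hg)⟩
end

section
/- Let τ be a faithful irreducible complex representation of G. Then dim τ = p^r, and there exists a faithful 1-dimensional complex representation ψ of the subgroup X such that τ is isomorphic to the induced representation Ind_X^G ψ. -/
/-!
Write `c = b ^ p ^ r` and `X = ⟨a, c⟩`. Since `j` has order `p ^ r` modulo `q`, the subgroup `X` is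
the centralizer of `a` (`mem_X_iff`), it is normal of index `p ^ r` (`X_index`), and `c` is central.
By Schur's lemma `c` acts by a scalar. Since `a` acts nontrivially with `a ^ q = 1`, it has an
eigenvector `v` with eigenvalue `ω` a primitive `q`-th root of unity. The vectors `b⁻ⁱ v`,
`0 ≤ i < p ^ r`, are eigenvectors of `a` for the distinct eigenvalues `ω ^ (j ^ i)`, and their span
is invariant, so they form a basis: the dimension is `p ^ r`.

The group `X` acts on the line of `v` by a character `ψ`; it is faithful because
`ψ (a ^ k * c ^ l) = 1` forces the `q`-part `ω ^ k` and the `p`-part of the value to be trivial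
separately, and `c` acts by scalars on the faithful representation.

For the character, let `P` be the projection to the line of `v` along the other basis vectors.
The average `S = ∑ x, ρ x⁻¹ P ρ x` commutes with `G`, hence is a scalar, and
`tr (ρ g S) = ∑ x, tr (ρ (x g x⁻¹) P)`. Each summand is the `v`-coordinate of `ρ (x g x⁻¹) v`, that is
`ψ (x g x⁻¹)` when `x g x⁻¹ ∈ X`, and `0` otherwise because `ρ h v` with `h ∉ X` is an eigenvector
of `a` for an eigenvalue other than `ω`. Taking `g = 1` identifies the scalar as `|G| / p ^ r = |X|`,
and the induced character formula follows.
-/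

open CategoryTheory Finset

open scoped Classical in
/-- The character of the representation of `G` induced from a one-dimensional complex
representation `ψ` of a subgroup `X`, given by the standard induced character formula
`g ↦ |X|⁻¹ * ∑_{x ∈ G, x g x⁻¹ ∈ X} ψ (x g x⁻¹)`. -/
noncomputable def inducedCharacter {G : Type} [Group G] [Fintype G] (X : Subgroup G)
    (ψ : X →* ℂˣ) : G → ℂ :=
  fun g => (Nat.card X : ℂ)⁻¹ *
    ∑ x : G, if h : x * g * x⁻¹ ∈ X then ((ψ ⟨x * g * x⁻¹, h⟩ : ℂˣ) : ℂ) else 0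

/-! ### Irreducibility and linear algebra -/

/-- A simple object of `FDRep` has no invariant subspaces other than `⊥` and `⊤`: the inclusion of
a nonzero one is a nonzero monomorphism into a simple object. -/
theorem invariant_eq_bot_or_top {G : Type} [Group G] (τ : FDRep ℂ G) [Simple τ]
    (W : Submodule ℂ τ) (hW : ∀ g : G, ∀ w ∈ W, τ.ρ g w ∈ W) : W = ⊥ ∨ W = ⊤ := by
  let σ : Subrepresentation τ.ρ := ⟨W, fun g w hw => hW g w hw⟩
  let f : FDRep.of σ.toRepresentation ⟶ τ :=
    ⟨FGModuleCat.ofHom W.subtype, fun g => by ext w; rfl⟩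
  have hf : Function.Injective (ConcreteCategory.hom f) := Subtype.val_injective
  have : Mono f := ConcreteCategory.mono_of_injective f hf
  by_cases h0 : f = 0
  · left
    rw [Submodule.eq_bot_iff]
    intro w hw
    have : f.hom ⟨w, hw⟩ = 0 := by rw [h0]; rfl
    exact this
  · right
    have : IsIso f := isIso_of_mono_of_nonzero h0
    have : IsIso f.hom := (Action.forget (FGModuleCat ℂ) G).map_isIso f
    have hs := (ConcreteCategory.bijective_of_isIso f.hom).2
    rw [Submodule.eq_top_iff']
    intro w
    obtain ⟨x, rfl⟩ := hs w
    exact x.2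

theorem nontrivial_of_simple {G : Type} [Group G] (τ : FDRep ℂ G) [Simple τ] :
    Nontrivial τ := by
  by_contra h
  rw [not_nontrivial_iff_subsingleton] at h
  apply id_nonzero τ
  ext w
  exact Subsingleton.elim (α := τ) _ _

/-- Induction on a generated subgroup of a finite group, without a step for inverses. -/
theorem finite_closure_induction {G : Type} [Group G] [Finite G] (S : Set G) (P : G → Prop)
    (one : P 1) (mul : ∀ x y, P x → P y → P (x * y)) (mem : ∀ x ∈ S, P x)
    {g : G} (hg : g ∈ Subgroup.closure S) : P g := by
  let M : Submonoid G := ⟨⟨{x | P x}, fun {x y} hx hy => mul x y hx hy⟩, one⟩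
  rw [← Subgroup.mem_toSubmonoid, Subgroup.closure_toSubmonoid_of_finite] at hg
  exact (Submonoid.closure_le (S := M)).2 mem hg

/-- Schur's lemma, for an irreducible representation described by its invariant subspaces. -/
theorem schur_scalar {G V : Type} [Group G] [AddCommGroup V] [Module ℂ V] [FiniteDimensional ℂ V]
    [Nontrivial V] (ρ : G →* (V →ₗ[ℂ] V))
    (hirr : ∀ W : Submodule ℂ V, (∀ g : G, ∀ w ∈ W, ρ g w ∈ W) → W = ⊥ ∨ W = ⊤)
    (T : V →ₗ[ℂ] V) (hT : ∀ g w, T (ρ g w) = ρ g (T w)) : ∃ c : ℂ, ∀ w, T w = c • w := by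
  obtain ⟨c, hc⟩ := Module.End.exists_eigenvalue T
  refine ⟨c, fun w => ?_⟩
  rw [← Module.End.mem_eigenspace_iff]
  have hinv : ∀ g, ∀ w ∈ Module.End.eigenspace T c, ρ g w ∈ Module.End.eigenspace T c := by
    intro g w hw
    rw [Module.End.mem_eigenspace_iff] at hw ⊢
    rw [hT, hw, map_smul]
  rw [(hirr _ hinv).resolve_left hc]
  trivial

/-- An operator `A ≠ 1` with `A ^ q = 1` has an eigenvalue `c ≠ 1` with `c ^ q = 1`: take any
eigenvector in the range of `A - 1`, on which `1 + A + ⋯ + A ^ (q - 1)` vanishes. -/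
theorem exists_eigenvector_ne_one {V : Type} [AddCommGroup V] [Module ℂ V] [FiniteDimensional ℂ V]
    (A : V →ₗ[ℂ] V) (q : ℕ) (hq : q ≠ 0) (hA : A ^ q = 1) (hA1 : A ≠ 1) :
    ∃ (c : ℂ) (v : V), v ≠ 0 ∧ A v = c • v ∧ c ^ q = 1 ∧ c ≠ 1 ∧
      ∀ i : ℕ, (A ^ i) v = c ^ i • v := by
  have hmaps : ∀ w ∈ LinearMap.range (A - 1), A w ∈ LinearMap.range (A - 1) := by
    rintro _ ⟨w, rfl⟩
    exact ⟨A w, by simp⟩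
  have : Nontrivial (LinearMap.range (A - 1)) := by
    rw [Submodule.nontrivial_iff_ne_bot, Ne, LinearMap.range_eq_bot]
    exact sub_ne_zero.2 hA1
  obtain ⟨c, hc⟩ := Module.End.exists_eigenvalue (A.restrict hmaps)
  obtain ⟨⟨v, u, hu⟩, hv⟩ := hc.exists_hasEigenvector
  have hv0 : v ≠ 0 := fun h => hv.2 (Subtype.ext h)
  have hAv : A v = c • v := congrArg Subtype.val hv.apply_eq_smul
  have hpow : ∀ i : ℕ, (A ^ i) v = c ^ i • v := by
    intro i
    induction i with
    | zero => simp
    | succ i ih => rw [pow_succ, Module.End.mul_apply, hAv, map_smul, ih, smul_smul, pow_succ']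
  have hsum : (∑ i ∈ range q, c ^ i) • v = 0 := by
    have h : (∑ i ∈ range q, A ^ i) * (A - 1) = 0 := by
      rw [geom_sum_mul, hA, sub_self]
    have h2 := congrArg (fun f : V →ₗ[ℂ] V => f u) h
    simp only [Module.End.mul_apply] at h2
    rw [hu] at h2
    rw [Finset.sum_smul]
    simpa [LinearMap.sum_apply, hpow] using h2
  have hsum0 := (smul_eq_zero.1 hsum).resolve_right hv0
  have hcq : c ^ q = 1 := by
    have h := hpow q
    rw [hA] at h
    have h3 : (c ^ q - 1) • v = 0 := by
      rw [sub_smul, one_smul, ← h]; simp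
    exact sub_eq_zero.1 ((smul_eq_zero.1 h3).resolve_right hv0)
  refine ⟨c, v, hv0, hAv, hcq, ?_, hpow⟩
  rintro rfl
  simp [hq] at hsum0

/-! ### The group `G` and its subgroup `X` -/

section grp
variable {G : Type} [Group G] {a b : G} {p q n r j : ℕ}

theorem pow_conj_gen (hba : b * a * b⁻¹ = a ^ j) (m : ℕ) :
    b ^ m * a * (b ^ m)⁻¹ = a ^ j ^ m := by
  induction m with
  | zero => simp
  | succ m ih =>
    rw [pow_succ' b, mul_inv_rev, pow_succ', pow_mul, ← hba, conj_pow, ← ih]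
    group

theorem pow_gen_comm (hba : b * a * b⁻¹ = a ^ j) (m k : ℕ) :
    b ^ m * a ^ k = a ^ (j ^ m * k) * b ^ m := by
  rw [pow_mul, ← pow_conj_gen hba, conj_pow]
  group

theorem pow_gen_commute_iff (hba : b * a * b⁻¹ = a ^ j) (ha : orderOf a = q)
    (hj : orderOf (j : ZMod q) = p ^ r) (m : ℕ) : Commute (b ^ m) a ↔ p ^ r ∣ m := by
  rw [← hj, orderOf_dvd_iff_pow_eq_one, Commute, SemiconjBy, ← mul_inv_eq_iff_eq_mul,
    pow_conj_gen hba]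
  nth_rewrite 2 [← pow_one a]
  rw [pow_eq_pow_iff_modEq, ha, ← ZMod.natCast_eq_natCast_iff]
  push_cast
  rfl

variable [Finite G]

theorem exists_form (hba : b * a * b⁻¹ = a ^ j) (hgen : Subgroup.closure {a, b} = ⊤) (g : G) :
    ∃ k m : ℕ, g = a ^ k * b ^ m := by
  have hg : g ∈ Subgroup.closure {a, b} := by rw [hgen]; trivial
  refine finite_closure_induction _ (fun g => ∃ k m : ℕ, g = a ^ k * b ^ m)
    ⟨0, 0, by simp⟩ ?_ ?_ hg
  · rintro _ _ ⟨k, m, rfl⟩ ⟨k', m', rfl⟩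
    refine ⟨k + j ^ m * k', m + m', ?_⟩
    rw [pow_add, pow_add]
    calc a ^ k * b ^ m * (a ^ k' * b ^ m') = a ^ k * (b ^ m * a ^ k') * b ^ m' := by group
      _ = _ := by rw [pow_gen_comm hba]; group
  · rintro _ (rfl | rfl)
    · exact ⟨1, 0, by simp⟩
    · exact ⟨0, 1, by simp⟩

theorem exists_form_X (hba : b * a * b⁻¹ = a ^ j) (ha : orderOf a = q)
    (hj : orderOf (j : ZMod q) = p ^ r) {x : G}
    (hx : x ∈ Subgroup.closure {a, b ^ p ^ r}) : ∃ k l : ℕ, x = a ^ k * (b ^ p ^ r) ^ l := by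
  have hc : Commute (b ^ p ^ r) a := (pow_gen_commute_iff hba ha hj _).2 dvd_rfl
  refine finite_closure_induction _ (fun g => ∃ k m : ℕ, g = a ^ k * (b ^ p ^ r) ^ m)
    ⟨0, 0, by simp⟩ ?_ ?_ hx
  · rintro _ _ ⟨k, m, rfl⟩ ⟨k', m', rfl⟩
    refine ⟨k + k', m + m', ?_⟩
    rw [pow_add, pow_add]
    exact (hc.symm.pow_pow k' m).symm.mul_mul_mul_comm _ _ 
  · rintro _ (rfl | rfl)
    · exact ⟨1, 0, by simp⟩
    · exact ⟨0, 1, by simp⟩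

/-- The subgroup `X = ⟨a, b ^ p ^ r⟩` is the centralizer of `a`. -/
theorem mem_X_iff (hba : b * a * b⁻¹ = a ^ j) (ha : orderOf a = q)
    (hj : orderOf (j : ZMod q) = p ^ r) (hgen : Subgroup.closure {a, b} = ⊤) (g : G) :
    g ∈ Subgroup.closure {a, b ^ p ^ r} ↔ Commute g a := by
  constructor
  · intro hg
    obtain ⟨k, l, rfl⟩ := exists_form_X hba ha hj hg
    have hc : Commute (b ^ p ^ r) a := (pow_gen_commute_iff hba ha hj _).2 dvd_rfl
    exact ((Commute.refl a).pow_left k).mul_left (hc.pow_left l)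
  · intro hg
    obtain ⟨k, m, rfl⟩ := exists_form hba hgen g
    have hm : Commute (b ^ m) a := by
      have := (((Commute.refl a).pow_left k).inv_left).mul_left hg
      rwa [inv_mul_cancel_left] at this
    obtain ⟨l, rfl⟩ := (pow_gen_commute_iff hba ha hj _).1 hm
    rw [pow_mul]
    exact mul_mem (pow_mem (Subgroup.subset_closure (by simp)) _)
      (pow_mem (Subgroup.subset_closure (by simp)) _)

theorem conj_gen (hba : b * a * b⁻¹ = a ^ j) (hgen : Subgroup.closure {a, b} = ⊤) (g : G) :
    ∃ t : ℕ, g * a * g⁻¹ = a ^ t := by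
  obtain ⟨k, m, rfl⟩ := exists_form hba hgen g
  refine ⟨j ^ m, ?_⟩
  calc _ = a ^ k * (b ^ m * a * (b ^ m)⁻¹) * (a ^ k)⁻¹ := by group
    _ = _ := by
      rw [pow_conj_gen hba, ← pow_add, add_comm, pow_add, mul_inv_cancel_right]

theorem X_normal (hba : b * a * b⁻¹ = a ^ j) (ha : orderOf a = q)
    (hj : orderOf (j : ZMod q) = p ^ r) (hgen : Subgroup.closure {a, b} = ⊤) :
    (Subgroup.closure {a, b ^ p ^ r}).Normal := by
  refine ⟨fun x hx g => ?_⟩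
  rw [mem_X_iff hba ha hj hgen] at hx ⊢
  obtain ⟨t, ht⟩ := conj_gen hba hgen g⁻¹
  have h := hx.pow_right t
  rw [← ht] at h
  have h2 := (Commute.conj_iff g).2 h
  convert h2 using 1
  group

/-- `G ⧸ X` is cyclic, generated by the class of `b`, whose order is `p ^ r`. -/
theorem X_index (hba : b * a * b⁻¹ = a ^ j) (ha : orderOf a = q)
    (hj : orderOf (j : ZMod q) = p ^ r) (hgen : Subgroup.closure {a, b} = ⊤) :
    (Subgroup.closure {a, b ^ p ^ r}).index = p ^ r := by
  have := X_normal hba ha hj hgen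
  set X := Subgroup.closure {a, b ^ p ^ r} with hX
  have key : ∀ m : ℕ, (b : G ⧸ X) ^ m = 1 ↔ p ^ r ∣ m := by
    intro m
    rw [← QuotientGroup.mk_pow, QuotientGroup.eq_one_iff, hX, mem_X_iff hba ha hj hgen,
      pow_gen_commute_iff hba ha hj]
  have hord : orderOf (b : G ⧸ X) = p ^ r :=
    Nat.dvd_antisymm (orderOf_dvd_iff_pow_eq_one.2 ((key _).2 dvd_rfl))
      ((key _).1 (pow_orderOf_eq_one _))
  rw [← hord, Subgroup.index, ← orderOf_eq_card_of_forall_mem_zpowers]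
  intro x
  induction x using QuotientGroup.induction_on with
  | H g =>
    obtain ⟨k, m, rfl⟩ := exists_form hba hgen g
    have hak : ((a ^ k : G) : G ⧸ X) = 1 :=
      (QuotientGroup.eq_one_iff _).2 (pow_mem (Subgroup.subset_closure (by simp)) _)
    rw [QuotientGroup.mk_mul, hak, one_mul, QuotientGroup.mk_pow]
    exact Subgroup.npow_mem_zpowers _ _
end grp

/-! ### The representation -/

theorem complex_pow_eq_pow_iff {ω : ℂ} (h : ω ≠ 0) (x y : ℕ) :
    ω ^ x = ω ^ y ↔ x ≡ y [MOD orderOf ω] := by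
  have := pow_eq_pow_iff_modEq (x := Units.mk0 ω h) (n := x) (m := y)
  rwa [Units.ext_iff, Units.val_pow_eq_pow_val, Units.val_pow_eq_pow_val, Units.val_mk0,
    ← orderOf_units, Units.val_mk0] at this

/-- The theorem for an irreducible faithful representation given as a homomorphism `ρ` to linear
endomorphisms, with the character written as a trace. -/
theorem induced_aux {G V : Type} [Group G] [Fintype G] [AddCommGroup V] [Module ℂ V]
    [FiniteDimensional ℂ V] [Nontrivial V] (ρ : G →* (V →ₗ[ℂ] V)) (hρ : Function.Injective ρ)
    (hirr : ∀ W : Submodule ℂ V, (∀ g : G, ∀ w ∈ W, ρ g w ∈ W) → W = ⊥ ∨ W = ⊤)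
    (p q n r : ℕ) (hp : p.Prime) (hq : q.Prime) (hpq : p ≠ q)
    (a b : G) (j : ℕ)
    (ha : orderOf a = q) (hb : orderOf b = p ^ n)
    (hba : b * a * b⁻¹ = a ^ j) (hj : orderOf (j : ZMod q) = p ^ r)
    (hgen : Subgroup.closure {a, b} = ⊤) :
    Module.finrank ℂ V = p ^ r ∧
      ∃ ψ : (Subgroup.closure {a, b ^ p ^ r} : Subgroup G) →* ℂˣ,
        Function.Injective ψ ∧
          (fun g => LinearMap.trace ℂ V (ρ g)) =
            inducedCharacter (Subgroup.closure {a, b ^ p ^ r}) ψ := by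
  have hmul : ∀ g h w, ρ (g * h) w = ρ g (ρ h w) := fun g h w => by rw [map_mul]; rfl
  have hpr : 0 < p ^ r := pow_pos hp.pos r
  obtain ⟨ω, v, hv0, hav, hωq, hω1, hpow⟩ := exists_eigenvector_ne_one (ρ a) q hq.ne_zero
    (by rw [← map_pow, ← ha, pow_orderOf_eq_one, map_one])
    (fun h => by
      rw [← map_one ρ] at h
      rw [hρ h, orderOf_one] at ha
      exact hq.one_lt.ne ha)
  have hpow : ∀ i : ℕ, ρ (a ^ i) v = ω ^ i • v := fun i => by rw [map_pow, hpow]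
  have hω : orderOf ω = q := by
    have := Fact.mk hq
    exact orderOf_eq_prime hωq hω1
  have hω0 : ω ≠ 0 := by
    rintro rfl
    simp [hq.ne_zero] at hωq
  -- the central element acts by a scalar
  obtain ⟨ζ, hζ⟩ := schur_scalar ρ hirr (ρ (b ^ p ^ r)) (fun g w => by
    rw [← hmul, ← hmul]
    congr 2
    obtain ⟨k, m, rfl⟩ := exists_form hba hgen g
    have hc : Commute (b ^ p ^ r) a := (pow_gen_commute_iff hba ha hj _).2 dvd_rfl
    exact ((hc.pow_right k).mul_right (((Commute.refl b).pow_left _).pow_right m)).eq)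
  have hζpow : ∀ (l : ℕ) w, ρ ((b ^ p ^ r) ^ l) w = ζ ^ l • w := by
    intro l w
    induction l with
    | zero => simp
    | succ l ih => rw [pow_succ, hmul, hζ, map_smul, ih, smul_smul, pow_succ']
  -- weights of `a` on the translates of `v`
  have hweight : ∀ i : ℕ, ρ a (ρ (b ^ i)⁻¹ v) = ω ^ j ^ i • ρ (b ^ i)⁻¹ v := by
    intro i
    rw [← map_smul, ← hpow, ← hmul, ← hmul, ← pow_conj_gen hba]
    congr 2
    group
  let u : Fin (p ^ r) → V := fun i => ρ (b ^ (i : ℕ))⁻¹ v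
  have hu0 : ∀ g, ρ g v ≠ 0 := by
    intro g h
    apply hv0
    have := hmul g⁻¹ g v
    rw [h, map_zero, inv_mul_cancel, map_one] at this
    exact this
  have hli : LinearIndependent ℂ u := by
    refine Module.End.eigenvectors_linearIndependent' (ρ a)
      (fun i : Fin (p ^ r) => ω ^ j ^ (i : ℕ)) ?_ u
      (fun i => ⟨Module.End.mem_eigenspace_iff.2 (hweight i), hu0 _⟩)
    intro i i' h
    simp only at h
    rw [complex_pow_eq_pow_iff hω0, hω, ← ZMod.natCast_eq_natCast_iff] at h
    push_cast at h
    refine Fin.ext (pow_injOn_Iio_orderOf ?_ ?_ h)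
    · rw [hj]; exact i.2
    · rw [hj]; exact i'.2
  have hmem : ∀ g, ρ g v ∈ Submodule.span ℂ (Set.range u) := by
    intro g
    obtain ⟨k, m, hg⟩ := exists_form hba hgen g⁻¹
    have h1 : ρ ((a ^ k)⁻¹) v = (ω ^ k)⁻¹ • v := by
      have hωk : ω ^ k ≠ 0 := by
        rintro h
        have := hu0 (a ^ k)
        rw [hpow, h, zero_smul] at this
        exact this rfl
      rw [eq_inv_smul_iff₀ hωk, ← map_smul, ← hpow, ← hmul, inv_mul_cancel, map_one]
      rfl
    have h2 : ∀ (l : ℕ) w, ρ (((b ^ p ^ r) ^ l)⁻¹) w = (ζ ^ l)⁻¹ • w := by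
      intro l w
      have hζl : ζ ^ l ≠ 0 := by
        rintro h
        have := hu0 ((b ^ p ^ r) ^ l)
        rw [hζpow, h, zero_smul] at this
        exact this rfl
      rw [eq_inv_smul_iff₀ hζl, ← map_smul, ← hζpow, ← hmul, inv_mul_cancel, map_one]
      rfl
    -- reduce the exponent of `b` modulo `p ^ r`, at the cost of a power of the central element
    have hg' : g = ((b ^ p ^ r) ^ (m / p ^ r))⁻¹ * ((b ^ (m % p ^ r))⁻¹ * (a ^ k)⁻¹) := by
      rw [← mul_assoc, ← mul_inv_rev, ← mul_inv_rev, ← pow_mul, ← pow_add, Nat.mod_add_div,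
        ← hg, inv_inv]
    rw [hg', hmul, hmul, h2, h1, map_smul]
    exact Submodule.smul_mem _ _ (Submodule.smul_mem _ _
      (Submodule.subset_span ⟨⟨m % p ^ r, Nat.mod_lt _ hpr⟩, rfl⟩))
  have hspan : Submodule.span ℂ (Set.range u) = ⊤ := by
    refine (hirr _ ?_).resolve_left ?_
    · intro g w hw
      induction hw using Submodule.span_induction with
      | mem w hw =>
        obtain ⟨i, rfl⟩ := hw
        simp only [u]
        rw [← hmul]
        exact hmem _
      | zero => simp
      | add x y _ _ hx hy => rw [map_add]; exact add_mem hx hy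
      | smul c x _ hx => rw [map_smul]; exact Submodule.smul_mem _ _ hx
    · intro h
      have := hmem 1
      rw [h, Submodule.mem_bot] at this
      exact hu0 1 this
  let B := Module.Basis.mk hli hspan.ge
  have hdim : Module.finrank ℂ V = p ^ r := by
    rw [Module.finrank_eq_card_basis B, Fintype.card_fin]
  refine ⟨hdim, ?_⟩
  -- the character of `X` on the line of `v`
  have hχ : ∀ x : (Subgroup.closure {a, b ^ p ^ r} : Subgroup G), ∃ c : ℂ, ρ x v = c • v := by
    rintro ⟨x, hx⟩
    obtain ⟨k, l, rfl⟩ := exists_form_X hba ha hj hx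
    exact ⟨ζ ^ l * ω ^ k, by simp only; rw [hmul, hζpow, map_smul, hpow, smul_smul]⟩
  choose χ hχ using hχ
  have hinj : ∀ c d : ℂ, c • v = d • v → c = d := fun c d h => smul_left_injective ℂ hv0 h
  let χ' : (Subgroup.closure {a, b ^ p ^ r} : Subgroup G) →* ℂ :=
    { toFun := χ
      map_one' := hinj _ _ (by rw [← hχ]; simp)
      map_mul' := fun x y => hinj _ _ (by
        rw [← hχ, Subgroup.coe_mul, hmul, hχ, map_smul, hχ, smul_smul, mul_comm]) }
  refine ⟨χ'.toHomUnits, ?_, ?_⟩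
  · rw [injective_iff_map_eq_one]
    rintro ⟨x, hx⟩ h1
    have h2 : χ ⟨x, hx⟩ = 1 := congrArg Units.val h1
    obtain ⟨k, l, rfl⟩ := exists_form_X hba ha hj hx
    have h3 := hχ ⟨_, hx⟩
    simp only at h3
    rw [h2, hmul, hζpow, map_smul, hpow, smul_smul] at h3
    have h4 : ζ ^ l * ω ^ k = 1 := hinj _ _ h3
    -- `ζ ^ l` has `p`-power order and `ω ^ k` has order dividing `q`; their product being `1`,
    -- both are `1`
    have h5 : ζ ^ p ^ n = 1 := by
      refine hinj _ _ ?_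
      rw [← hζpow, ← pow_mul, mul_comm, pow_mul, ← hb, pow_orderOf_eq_one]
      simp
    have h6 : (ω ^ k) ^ p ^ n = 1 := by
      have := congrArg (· ^ p ^ n) h4
      simp only [mul_pow, one_pow] at this
      rwa [← pow_mul ζ, mul_comm l, pow_mul, h5, one_pow, one_mul] at this
    have h7 : q ∣ k := by
      rw [← pow_mul, ← orderOf_dvd_iff_pow_eq_one, hω] at h6
      exact ((Nat.Coprime.pow_right n ((Nat.coprime_primes hq hp).2 hpq.symm))).dvd_of_dvd_mul_right
        h6
    have h8 : ω ^ k = 1 := by rwa [← orderOf_dvd_iff_pow_eq_one, hω]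
    have h9 : a ^ k = 1 := by rwa [← orderOf_dvd_iff_pow_eq_one, ha]
    rw [h8, mul_one] at h4
    refine Subtype.ext ?_
    change a ^ k * _ = 1
    rw [h9, one_mul]
    refine hρ (LinearMap.ext fun w => ?_)
    rw [hζpow, h4, map_one, one_smul, Module.End.one_apply]
  -- the coordinate functional along `v`
  let i0 : Fin (p ^ r) := ⟨0, hpr⟩
  let φ : V →ₗ[ℂ] ℂ := B.coord i0
  have hBi0 : B i0 = v := by simp [B, u, i0]
  have hφv : φ v = 1 := by rw [← hBi0]; simp [φ]
  have hφa : ∀ w, φ (ρ a w) = ω * φ w := by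
    intro w
    have : φ ∘ₗ ρ a = ω • φ := by
      refine B.ext fun i => ?_
      have hBi : ρ a (B i) = ω ^ j ^ (i : ℕ) • B i := by
        simp only [B, Module.Basis.mk_apply]; exact hweight i
      rw [LinearMap.comp_apply, hBi, map_smul, LinearMap.smul_apply]
      by_cases hi : i = i0
      · subst hi; simp [i0]
      · simp [φ, Finsupp.single_eq_of_ne' hi]
    exact LinearMap.congr_fun this w
  have hφout : ∀ g, g ∉ Subgroup.closure {a, b ^ p ^ r} → φ (ρ g v) = 0 := by
    intro g hg
    obtain ⟨t, ht⟩ := conj_gen hba hgen g⁻¹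
    have h1 : ρ a (ρ g v) = ω ^ t • ρ g v := by
      rw [← map_smul, ← hpow, ← hmul, ← hmul, ← ht]
      congr 2
      group
    have h2 := hφa (ρ g v)
    rw [h1, map_smul, smul_eq_mul] at h2
    by_contra h0
    have h3 := mul_right_cancel₀ h0 h2
    apply hg
    rw [mem_X_iff hba ha hj hgen]
    have h4 : a ^ t = a := by
      nth_rewrite 2 [← pow_one a]
      nth_rewrite 2 [← pow_one ω] at h3
      rw [complex_pow_eq_pow_iff hω0, hω] at h3
      rwa [pow_eq_pow_iff_modEq, ha]
    rw [h4] at ht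
    rw [Commute, SemiconjBy]
    nth_rewrite 1 [← ht]
    group
  -- averaging the projection
  let P : V →ₗ[ℂ] V := φ.smulRight v
  let S : V →ₗ[ℂ] V := ∑ x : G, ρ x⁻¹ * P * ρ x
  have hSapp : ∀ w, S w = ∑ x : G, ρ x⁻¹ (P (ρ x w)) := fun w => by
    simp [S, LinearMap.sum_apply, Module.End.mul_apply]
  obtain ⟨c, hc⟩ := schur_scalar ρ hirr S (fun g w => by
    rw [hSapp, hSapp, map_sum,
      ← Equiv.sum_comp (Equiv.mulRight g) (fun x => ρ g (ρ x⁻¹ (P (ρ x w))))]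
    refine Finset.sum_congr rfl fun x _ => ?_
    rw [Equiv.coe_mulRight, ← hmul g, ← hmul x, mul_inv_rev, mul_inv_cancel_left])
  have hS : S = c • 1 := LinearMap.ext fun w => by rw [hc]; rfl
  have htr : ∀ g, c * LinearMap.trace ℂ V (ρ g) = ∑ x : G, φ (ρ (x * g * x⁻¹) v) := by
    intro g
    have h1 : LinearMap.trace ℂ V (ρ g * S) = c * LinearMap.trace ℂ V (ρ g) := by
      rw [hS, mul_smul_comm, mul_one, map_smul, smul_eq_mul]
    rw [← h1]
    simp only [S]
    rw [Finset.mul_sum, map_sum]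
    refine Finset.sum_congr rfl fun x _ => ?_
    have h2 : LinearMap.trace ℂ V (ρ g * (ρ x⁻¹ * P * ρ x)) =
        LinearMap.trace ℂ V (ρ (x * g * x⁻¹) * P) := by
      rw [← mul_assoc, LinearMap.trace_mul_comm, ρ.map_mul, ρ.map_mul]
      simp only [mul_assoc]
    have h3 : ρ (x * g * x⁻¹) * P = φ.smulRight (ρ (x * g * x⁻¹) v) := by
      ext w; simp [P]
    rw [h2, h3, LinearMap.trace_smulRight]
  have hcard : (Nat.card (Subgroup.closure {a, b ^ p ^ r} : Subgroup G) : ℂ) * (p ^ r : ℕ) =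
      Nat.card G := by
    rw [← Nat.cast_mul, ← Subgroup.card_mul_index (Subgroup.closure {a, b ^ p ^ r}),
      X_index hba ha hj hgen]
  have hcval : c = Nat.card (Subgroup.closure {a, b ^ p ^ r} : Subgroup G) := by
    have h1 := htr 1
    simp only [mul_one, mul_inv_cancel, map_one, Module.End.one_apply, hφv, LinearMap.trace_one,
      hdim] at h1
    rw [Finset.sum_const, Finset.card_univ, ← Nat.card_eq_fintype_card, nsmul_eq_mul, mul_one,
      ← hcard] at h1
    exact mul_right_cancel₀ (Nat.cast_ne_zero.2 hpr.ne') h1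
  have hc0 : c ≠ 0 := by
    rw [hcval]; exact Nat.cast_ne_zero.2 Nat.card_pos.ne'
  funext g
  rw [inducedCharacter, ← hcval, eq_inv_mul_iff_mul_eq₀ hc0, htr]
  refine Finset.sum_congr rfl fun x _ => ?_
  split_ifs with h
  · have h1 := hχ ⟨_, h⟩
    simp only at h1
    rw [h1, map_smul, hφv, smul_eq_mul, mul_one]
    rfl
  · exact hφout _ h

/-- Let `p, q` be distinct odd primes, `G = C_q ⋊ C_{p^n}` non-abelian
(presented by `a, b` with `a^q = b^{p^n} = 1`, `b a b⁻¹ = a^j`, `j` of order `p^r` mod `q`),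
and `X = ⟨a, b^{p^r}⟩`.  If `τ` is a faithful irreducible complex representation of `G`,
then `dim τ = p^r` and there is a faithful one-dimensional representation `ψ` of `X` with
`τ ≅ Ind_X^G ψ` (expressed as equality of the character of `τ` with the induced character,
which determines the representation up to isomorphism). -/
theorem faithful_irreducible_is_induced
    (p q n r : ℕ) (hp : p.Prime) (hq : q.Prime) (hpodd : Odd p) (hqodd : Odd q)
    (hpq : p ≠ q) (hn : 1 ≤ n) (hr0 : 0 < r) (hrn : r ≤ n) (hrdvd : p ^ r ∣ q - 1)
    (G : Type) [Group G] [Fintype G] (a b : G) (j : ℕ)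
    (ha : orderOf a = q) (hb : orderOf b = p ^ n)
    (hba : b * a * b⁻¹ = a ^ j) (hj : orderOf (j : ZMod q) = p ^ r)
    (hgen : Subgroup.closure {a, b} = ⊤)
    (τ : FDRep ℂ G) [Simple τ] (hτ : Function.Injective τ.ρ) :
    Module.finrank ℂ τ = p ^ r ∧
      ∃ ψ : (Subgroup.closure {a, b ^ p ^ r} : Subgroup G) →* ℂˣ,
        Function.Injective ψ ∧
          τ.character = inducedCharacter (Subgroup.closure {a, b ^ p ^ r}) ψ := by

  have := nontrivial_of_simple τ
  exact induced_aux τ.ρ hτ (invariant_eq_bot_or_top τ) p q n r hp hq hpq a b j ha hb hba hj hgen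
end
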